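/- Let (D,*) be a division algebra over ℚ with a positive involution, let V be a nonzero finite-dimensional right D-module, and let ψ₁, ψ₂ : V × V → D be two positive definite (D,*)-Hermitian forms on V. Then ψ₁^⊕4 and ψ₂^⊕4 are isometric, i.e. there exists an automorphism f of the right D-module V⁴ such that ψ₂^⊕4(f(x), f(y)) = ψ₁^⊕4(x, y) for all x, y ∈ V⁴. -/

import Mathlib

/-!
The proof has an arithmetic half and a linear algebra half.

*Linear algebra.* Gram–Schmidt diagonalizes a positive definite form `ψ`, with symmetric diagonal
entries `a = ψ(e, e)`. The field `F = ℚ(a)` consists of symmetric elements, and the traces of `x²`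
and `a x²` are positive for nonzero `x ∈ F`. A functional on `F` is a scaled trace, and weak
approximation at the infinite places (`isReal_of_trace`) then shows that `F` is totally real and
that `a` is totally positive. So `a⁻¹` is a sum of four squares in `F` (`sumFour_of_pos`), i.e.
the norm of a quaternion over `F`. The matrix of this quaternion turns `⟨a, a, a, a⟩` into
`⟨1, 1, 1, 1⟩` (`exists_matrix`). Hence `ψ^{⊕4}` has an orthonormal basis, and any two such forms of
the same rank are isometric.

*Arithmetic.* The remaining point is Siegel's theorem that a totally positive `a` in a number field
`F` with a real embedding is a sum of four squares. Multiplying `a` by some `2 + x²` arranges that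
`2` and `3` have even order at every prime of `E = F(√-d)`, where `d = (2 + x²) a`; this `E` is
totally complex. If `-2 = X² + 3Y²` in `E` then `-1` is a sum of two squares there, and comparing
coordinates writes `d` as a quotient of sums of squares in `F`.

The equation `-2 = X² + 3Y²` is solved by comparing indices in `Eˣ` (`exists_eq_neg_two`), as in
the classical proof of the Hasse norm theorem for `E(√-3)`. Let `S` be a large finite set of primes.
A dual set `T` (`exists_isDual`) consists of primes at which `-3` is a local square and which make
every `(S ∪ T)`-unit that is a local square on `S` a global square; the primes of `T` come from the
pole of the Dedekind zeta function at `1` (`exists_not_mem_LS`). Let `P` be the set of primes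
of `S ∪ T` at which `-3` is not a local square. The norms among the `(S ∪ T)`-units have index at
most `2 ^ (#P - 1)` by Hilbert's Theorem 90 (`norm_index`). As `3` has even order everywhere,
they have even order on `P`; the units with this last property have index at least `2 ^ (#P - 1)`
by the count of local square classes (`index_iInf_LS`). So the two groups agree, and `-2` lies in
the second.
-/

open MulOpposite

/-- The trace of left multiplication by `x` on the finite-dimensional `ℚ`-algebra `A`. -/
noncomputable def algTraceQ (A : Type*) [Ring A] [Algebra ℚ A] (x : A) : ℚ :=
  LinearMap.trace ℚ A (LinearMap.mulLeft ℚ x)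

/-- `st` is an involution of the `ℚ`-algebra `D`. -/
def IsInvolutionQ (D : Type*) [Ring D] [Algebra ℚ D] (st : D → D) : Prop :=
  (∀ x y : D, st (x + y) = st x + st y) ∧
  (∀ x y : D, st (x * y) = st y * st x) ∧
  (∀ x : D, st (st x) = x) ∧
  (∀ r : ℚ, st (algebraMap ℚ D r) = algebraMap ℚ D r)

/-- `st` is a positive involution of the `ℚ`-algebra `D`. -/
def IsPositiveInvolutionQ (D : Type*) [Ring D] [Algebra ℚ D] (st : D → D) : Prop :=
  IsInvolutionQ D st ∧ ∀ d : D, d ≠ 0 → 0 < algTraceQ D (st d * d)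

/-- `ψ` is a `(D,*)`-Hermitian form on the right `D`-module `V`. -/
def IsHermitianForm (D : Type*) [Ring D] [Algebra ℚ D] (V : Type*) [AddCommGroup V]
    [Module Dᵐᵒᵖ V] (st : D → D) (ψ : V → V → D) : Prop :=
  (∀ v v' w : V, ψ (v + v') w = ψ v w + ψ v' w) ∧
  (∀ v w w' : V, ψ v (w + w') = ψ v w + ψ v w') ∧
  (∀ (a : D) (v w : V), ψ (op a • v) w = st a * ψ v w) ∧
  (∀ (b : D) (v w : V), ψ v (op b • w) = ψ v w * b) ∧
  (∀ v w : V, ψ w v = st (ψ v w))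

/-- `ψ` is a positive definite `(D,*)`-Hermitian form on the right `D`-module `V`. -/
def IsPosDefHermitianForm (D : Type*) [Ring D] [Algebra ℚ D] (V : Type*) [AddCommGroup V]
    [Module Dᵐᵒᵖ V] (st : D → D) (ψ : V → V → D) : Prop :=
  IsHermitianForm D V st ψ ∧ ∀ v : V, v ≠ 0 → 0 < algTraceQ D (ψ v v)

namespace FourSq

/-! ### Index computations in abelian groups -/

section Groups

variable {G : Type*} [CommGroup G]

/-- The subgroup of squares of elements of `H`. -/
def sqs (H : Subgroup G) : Subgroup G := H.map (powMonoidHom 2)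

lemma mem_sqs {H : Subgroup G} {x : G} : x ∈ sqs H ↔ ∃ y ∈ H, y ^ 2 = x := by
  simp [sqs, Subgroup.mem_map]

lemma sqs_le (H : Subgroup G) : sqs H ≤ H := by
  intro x hx
  obtain ⟨y, hy, rfl⟩ := mem_sqs.1 hx
  exact pow_mem hy 2

/-- Passing from the kernel of a nontrivial homomorphism to `ℤ` to the whole group doubles the
index of the subgroup of squares. -/
lemma sqs_relIndex_step (H : Subgroup G) (f : G →* Multiplicative ℤ) (hne : ∃ h ∈ H, f h ≠ 1) :
    (sqs H).relIndex H = 2 * (sqs (H ⊓ f.ker)).relIndex (H ⊓ f.ker) := by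
  obtain ⟨c, hc⟩ := (IsCyclic.exists_generator : ∃ c : H.map f, ∀ x, x ∈ Subgroup.zpowers c)
  obtain ⟨g, hgH, hg⟩ := Subgroup.mem_map.1 c.2
  have hgen : ∀ h ∈ H, ∃ n : ℤ, f h = f g ^ n := by
    intro h hh
    obtain ⟨n, hn⟩ := hc ⟨f h, Subgroup.mem_map_of_mem f hh⟩
    refine ⟨n, ?_⟩
    have := congrArg Subtype.val hn
    simp only [Subgroup.coe_zpow] at this
    rw [hg, this]
  have hg1 : f g ≠ 1 := by
    intro h1
    obtain ⟨h, hh, hh1⟩ := hne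
    obtain ⟨n, hn⟩ := hgen h hh
    exact hh1 (by rw [hn, h1, one_zpow])
  have hinj : ∀ n m : ℤ, f g ^ n = f g ^ m → n = m := by
    intro n m hnm
    have h2 := congrArg Multiplicative.toAdd hnm
    rw [toAdd_zpow, toAdd_zpow] at h2
    simp only [smul_eq_mul] at h2
    have h3 : Multiplicative.toAdd (f g) ≠ 0 := by simpa using hg1
    exact mul_right_cancel₀ h3 h2
  set K := H ⊓ f.ker with hK
  have hKH : K ≤ H := inf_le_left
  have hA : (sqs H ⊔ K).relIndex H = 2 := by
    have hmem : ∀ h ∈ H, (h ∈ sqs H ⊔ K ↔ ∃ n : ℤ, f h = f g ^ (2 * n)) := by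
      intro h hh
      constructor
      · intro hh'
        obtain ⟨y, hy, z, hz, rfl⟩ := Subgroup.mem_sup.1 hh'
        obtain ⟨t, ht, rfl⟩ := mem_sqs.1 hy
        obtain ⟨n, hn⟩ := hgen t ht
        refine ⟨n, ?_⟩
        have : f z = 1 := hz.2
        rw [map_mul, this, map_pow, hn, mul_one, mul_comm 2 n, zpow_mul]
        norm_cast
      · rintro ⟨n, hn⟩
        have : h = (g ^ n) ^ 2 * (h * ((g ^ n) ^ 2)⁻¹) := by
          rw [mul_comm h, mul_inv_cancel_left]
        rw [this]
        refine Subgroup.mul_mem_sup (mem_sqs.2 ⟨_, zpow_mem hgH n, rfl⟩) ⟨?_, ?_⟩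
        · exact H.mul_mem hh (H.inv_mem (H.pow_mem (H.zpow_mem hgH n) 2))
        · show f _ = 1
          rw [map_mul, map_inv, map_pow, map_zpow, hn, mul_inv_eq_one, mul_comm 2 n, zpow_mul]
          norm_cast
    rw [Subgroup.relIndex_eq_two_iff]
    refine ⟨g, hgH, fun b hb => ?_⟩
    rw [hmem _ (mul_mem hb hgH), hmem _ hb, map_mul]
    obtain ⟨m, hm⟩ := hgen b hb
    rw [hm, ← zpow_add_one]
    rcases Int.even_or_odd' m with ⟨k, rfl | rfl⟩
    · refine Or.inr ⟨⟨k, rfl⟩, ?_⟩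
      rintro ⟨n, hn⟩
      have := hinj _ _ hn
      omega
    · refine Or.inl ⟨⟨k + 1, by ring_nf⟩, ?_⟩
      rintro ⟨n, hn⟩
      have := hinj _ _ hn
      omega
  have hB : (sqs H).relIndex (sqs H ⊔ K) = (sqs K).relIndex K := by
    rw [Subgroup.relIndex_sup_left, ← Subgroup.inf_relIndex_right]
    congr 1
    ext x
    constructor
    · rintro ⟨hx, hxK⟩
      obtain ⟨y, hy, rfl⟩ := mem_sqs.1 hx
      refine mem_sqs.2 ⟨y, ⟨hy, ?_⟩, rfl⟩
      have h1 : f (y ^ 2) = 1 := hxK.2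
      obtain ⟨n, hn⟩ := hgen y hy
      rw [map_pow, hn, ← zpow_natCast, ← zpow_mul] at h1
      have := hinj _ 0 (h1.trans (zpow_zero _).symm)
      have hn0 : n = 0 := by simpa using this
      show f y = 1
      rw [hn, hn0, zpow_zero]
    · intro hx
      obtain ⟨y, hy, rfl⟩ := mem_sqs.1 hx
      exact ⟨mem_sqs.2 ⟨y, hKH hy, rfl⟩, pow_mem hy 2⟩
  rw [← Subgroup.relIndex_mul_relIndex (sqs H) (sqs H ⊔ K) H le_sup_left
    (sup_le (sqs_le H) hKH), hA, hB, mul_comm]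

/-- Iterated form of `sqs_relIndex_step` for homomorphisms that are jointly independent. -/
lemma sqs_relIndex_finset {ι : Type*} (H : Subgroup G) (f : ι → G →* Multiplicative ℤ)
    (T : Finset ι) (hT : ∀ j ∈ T, ∃ g ∈ H, f j g ≠ 1 ∧ ∀ i ∈ T, i ≠ j → f i g = 1) :
    (sqs H).relIndex H = 2 ^ T.card *
      (sqs (H ⊓ ⨅ i ∈ T, (f i).ker)).relIndex (H ⊓ ⨅ i ∈ T, (f i).ker) := by
  classical
  induction T using Finset.induction_on with
  | empty => simp
  | insert j T hj ih =>
    rw [ih (fun k hk => ?_), Finset.card_insert_of_notMem hj, pow_succ, mul_assoc,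
      sqs_relIndex_step (H ⊓ ⨅ i ∈ T, (f i).ker) (f j) ?_, inf_assoc, Finset.iInf_insert,
      inf_comm (f j).ker]
    · obtain ⟨g, hg, h1, h2⟩ := hT j (Finset.mem_insert_self _ _)
      refine ⟨g, Subgroup.mem_inf.2 ⟨hg, ?_⟩, h1⟩
      simp only [Subgroup.mem_iInf]
      intro i hi
      exact h2 i (Finset.mem_insert_of_mem hi) (by rintro rfl; exact hj hi)
    · obtain ⟨g, hg, h1, h2⟩ := hT k (Finset.mem_insert_of_mem hk)
      exact ⟨g, hg, h1, fun i hi => h2 i (Finset.mem_insert_of_mem hi)⟩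

lemma two_le_relIndex {N U : Subgroup G} {x : G} (hx : x ∈ U) (hxN : x ∉ N)
    (h0 : N.relIndex U ≠ 0) : 2 ≤ N.relIndex U := by
  have h1 : N.relIndex U ≠ 1 := fun h => hxN (Subgroup.relIndex_eq_one.1 h hx)
  omega

/-- Independent subgroups: if each `N i` misses an element of `U` lying in all the others, then
their intersection has index at least `2 ^ |T|` in `U`. -/
lemma two_pow_le_relIndex {ι : Type*} (U : Subgroup G) (N : ι → Subgroup G) (T : Finset ι)
    (h0 : (⨅ i ∈ T, N i).relIndex U ≠ 0)
    (hT : ∀ j ∈ T, ∃ x ∈ U, x ∉ N j ∧ ∀ i ∈ T, i ≠ j → x ∈ N i) :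
    2 ^ T.card ≤ (⨅ i ∈ T, N i).relIndex U := by
  classical
  induction T using Finset.induction_on with
  | empty => simp
  | insert j T hj ih =>
    rw [Finset.iInf_insert, inf_comm] at h0 ⊢
    have e : ((⨅ i ∈ T, N i) ⊓ N j).relIndex U =
        (N j).relIndex ((⨅ i ∈ T, N i) ⊓ U) * (⨅ i ∈ T, N i).relIndex U := by
      rw [← Subgroup.inf_relIndex_right, ← Subgroup.relIndex_mul_relIndex _
        ((⨅ i ∈ T, N i) ⊓ U) U (by gcongr; exact inf_le_left) inf_le_right,
        Subgroup.inf_relIndex_right (⨅ i ∈ T, N i) U]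
      congr 1
      rw [← Subgroup.inf_relIndex_right (N j)]
      congr 1
      ac_rfl
    rw [e] at h0 ⊢
    obtain ⟨x, hxU, hxj, hx⟩ := hT j (Finset.mem_insert_self _ _)
    have hxI : x ∈ (⨅ i ∈ T, N i) ⊓ U := by
      refine Subgroup.mem_inf.2 ⟨?_, hxU⟩
      simp only [Subgroup.mem_iInf]
      intro i hi
      exact hx i (Finset.mem_insert_of_mem hi) (by rintro rfl; exact hj hi)
    rw [Finset.card_insert_of_notMem hj, pow_succ, mul_comm]
    refine Nat.mul_le_mul (two_le_relIndex hxI hxj (left_ne_zero_of_mul h0))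
      (ih (right_ne_zero_of_mul h0) fun k hk => ?_)
    obtain ⟨g, hg, h1, h2⟩ := hT k (Finset.mem_insert_of_mem hk)
    exact ⟨g, hg, h1, fun i hi => h2 i (Finset.mem_insert_of_mem hi)⟩

/-- In a finite abelian group the index of the squares is the number of elements killed by `2`. -/
lemma index_sq_eq_card_ker [Finite G] :
    (powMonoidHom 2 : G →* G).range.index = Nat.card (powMonoidHom 2 : G →* G).ker := by
  have h1 := Subgroup.card_mul_index (powMonoidHom 2 : G →* G).ker
  rw [Subgroup.index_ker] at h1
  have h2 := Subgroup.card_mul_index (powMonoidHom 2 : G →* G).range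
  have h3 : 0 < Nat.card (powMonoidHom 2 : G →* G).range := Nat.card_pos
  rw [← h2, mul_comm] at h1
  exact (Nat.eq_of_mul_eq_mul_left h3 h1).symm

end Groups

end FourSq

namespace FourSq

set_option maxSynthPendingDepth 3

/-! ### Units and `S`-units modulo squares -/

section SUnits

open NumberField IsDedekindDomain

/-- The finite primes of a number field. -/
abbrev FinPrime (E : Type*) [Field E] := HeightOneSpectrum (𝓞 E)

variable {E : Type*} [Field E]

lemma mem_unit {S : Set (FinPrime E)} {x : Eˣ} [NumberField E] :
    x ∈ S.unit E ↔ ∀ v ∉ S, v.valuation E (x : E) = 1 := by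
  rfl

variable [NumberField E]

lemma unit_mono {S T : Set (FinPrime E)} (h : S ⊆ T) : S.unit E ≤ T.unit E :=
  fun _ hx v hv => hx v fun h' => hv (h h')

lemma index_sqs_torsion :
    (sqs (Units.torsion E)).relIndex (Units.torsion E) = 2 := by
  have h1 : sqs (Units.torsion E) =
      (powMonoidHom 2 : Units.torsion E →* Units.torsion E).range.map (Units.torsion E).subtype := by
    ext x
    rw [mem_sqs]
    constructor
    · rintro ⟨y, hy, rfl⟩
      exact ⟨⟨y, hy⟩ ^ 2, ⟨⟨y, hy⟩, rfl⟩, rfl⟩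
    · rintro ⟨_, ⟨y, rfl⟩, rfl⟩
      exact ⟨y, y.2, rfl⟩
  have h2 : (sqs (Units.torsion E)).relIndex (Units.torsion E) =
      (powMonoidHom 2 : Units.torsion E →* Units.torsion E).range.index := by
    rw [h1, Subgroup.relIndex, Subgroup.subgroupOf,
      Subgroup.comap_map_eq_self_of_injective (Units.torsion E).subtype_injective]
  rw [h2, index_sq_eq_card_ker]
  have hm : (-1 : (𝓞 E)ˣ) ∈ Units.torsion E := by
    rw [Units.torsion, CommGroup.mem_torsion]
    exact isOfFinOrder_iff_pow_eq_one.2 ⟨2, by norm_num, by simp⟩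
  have hker : ∀ x : Units.torsion E, x ∈ (powMonoidHom 2 : Units.torsion E →* Units.torsion E).ker ↔
      x = 1 ∨ x = ⟨-1, hm⟩ := by
    intro x
    rw [MonoidHom.mem_ker, powMonoidHom_apply, Subtype.ext_iff, Subtype.ext_iff, Subtype.ext_iff,
      Units.ext_iff, Units.ext_iff, Units.ext_iff]
    simp
  have hset : ((powMonoidHom 2 : Units.torsion E →* Units.torsion E).ker :
      Set (Units.torsion E)) =
      {1, ⟨-1, hm⟩} := by
    ext x
    simpa using! hker x
  have hc : Nat.card (powMonoidHom 2 : Units.torsion E →* Units.torsion E).ker =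
      Set.ncard ((powMonoidHom 2 : Units.torsion E →* Units.torsion E).ker :
        Set (Units.torsion E)) := rfl
  rw [hc, hset, Set.ncard_pair]
  intro h
  have := congrArg (fun x : Units.torsion E => ((x : (𝓞 E)ˣ) : 𝓞 E)) h
  simp only [OneMemClass.coe_one, Units.val_one, Units.val_neg] at this
  norm_num [eq_neg_iff_add_eq_zero] at this

lemma index_sqs_ringOfIntegers :
    (sqs (⊤ : Subgroup (𝓞 E)ˣ)).relIndex ⊤ = 2 ^ Fintype.card (InfinitePlace E) := by
  classical
  let f : Fin (Units.rank E) → (𝓞 E)ˣ →* Multiplicative ℤ := fun i =>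
    AddMonoidHom.toMultiplicativeRight
      (((Units.basisModTorsion E).coord i).toAddMonoidHom.comp
        (MonoidHom.toAdditive (QuotientGroup.mk' (Units.torsion E))) :
        Additive (𝓞 E)ˣ →+ ℤ)
  have hf : ∀ i x, f i x = Multiplicative.ofAdd ((Units.basisModTorsion E).repr
      (Additive.ofMul (x : (𝓞 E)ˣ ⧸ (Units.torsion E))) i) := fun i x => rfl
  have hT := sqs_relIndex_finset (⊤ : Subgroup (𝓞 E)ˣ) f Finset.univ (fun j _ => by
    refine ⟨Units.fundSystem E j, trivial, ?_, fun i _ hij => ?_⟩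
    · rw [hf, Units.fundSystem_mk]
      simp
    · rw [hf, Units.fundSystem_mk]
      simp [Finsupp.single_apply, hij.symm])
  have hk : ((⊤ : Subgroup (𝓞 E)ˣ) ⊓ ⨅ i ∈ Finset.univ, (f i).ker) = Units.torsion E := by
    ext x
    simp only [Finset.mem_univ, iInf_pos, top_inf_eq, Subgroup.mem_iInf, MonoidHom.mem_ker, hf]
    rw [← QuotientGroup.eq_one_iff]
    constructor
    · intro h
      have : (Units.basisModTorsion E).repr (Additive.ofMul (x : (𝓞 E)ˣ ⧸ (Units.torsion E))) = 0 := by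
        ext i
        simpa using! h i
      have h2 := (LinearEquiv.map_eq_zero_iff _).1 this
      simpa using! h2
    · intro h i
      rw [h]
      simp
  rw [hk, index_sqs_torsion] at hT
  rw [hT, ← pow_succ, Finset.card_univ, Fintype.card_fin, Units.rank]
  congr 1
  have : 0 < Fintype.card (InfinitePlace E) := Fintype.card_pos
  omega

lemma unit_empty : (∅ : Set (FinPrime E)).unit E =
    (⊤ : Subgroup (𝓞 E)ˣ).map (Units.map (algebraMap (𝓞 E) E : 𝓞 E →* E)) := by
  ext x
  rw [mem_unit]
  constructor
  · intro h
    obtain ⟨a, ha⟩ := HeightOneSpectrum.mem_integers_of_valuation_le_one E (x : E)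
      fun v => (h v (by simp)).le
    obtain ⟨b, hb⟩ := HeightOneSpectrum.mem_integers_of_valuation_le_one E ((x⁻¹ : Eˣ) : E)
      fun v => by
        rw [Units.val_inv_eq_inv_val, map_inv₀, h v (by simp), inv_one]
    have hab : a * b = 1 := by
      apply FaithfulSMul.algebraMap_injective (𝓞 E) E
      rw [map_mul, ha, hb]
      simp
    refine ⟨⟨a, b, hab, by rw [mul_comm]; exact hab⟩, trivial, ?_⟩
    ext
    simpa using! ha
  · rintro ⟨a, -, rfl⟩ v -
    refine le_antisymm (v.valuation_le_one _) ?_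
    have h1 : v.valuation E (algebraMap (𝓞 E) E (a : 𝓞 E)) *
        v.valuation E (algebraMap (𝓞 E) E ((a⁻¹ : (𝓞 E)ˣ) : 𝓞 E)) = 1 := by
      rw [← map_mul, ← map_mul]
      simp
    show 1 ≤ v.valuation E (algebraMap (𝓞 E) E (a : 𝓞 E))
    rw [← h1]
    exact mul_le_of_le_one_right' (v.valuation_le_one _)

lemma sqs_map {G G' : Type*} [CommGroup G] [CommGroup G'] (f : G →* G') (H : Subgroup G) :
    sqs (H.map f) = (sqs H).map f := by
  ext x
  simp only [mem_sqs, Subgroup.mem_map]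
  constructor
  · rintro ⟨_, ⟨y, hy, rfl⟩, rfl⟩
    exact ⟨y ^ 2, ⟨y, hy, rfl⟩, by simp⟩
  · rintro ⟨_, ⟨y, hy, rfl⟩, rfl⟩
    exact ⟨f y, ⟨y, hy, rfl⟩, by simp⟩

/-- Some power of a prime ideal is principal. -/
lemma exists_prime_power_generator (v : FinPrime E) :
    ∃ g : Eˣ, v.valuation E (g : E) < 1 ∧ ∀ w ≠ v, w.valuation E (g : E) = 1 := by
  have hv : v.asIdeal ∈ nonZeroDivisors (Ideal (𝓞 E)) := mem_nonZeroDivisors_of_ne_zero v.ne_bot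
  set h := Nat.card (ClassGroup (𝓞 E)) with hh
  have hpos : h ≠ 0 := Nat.card_pos.ne'
  have h1 : ClassGroup.mk0 (⟨v.asIdeal, hv⟩ ^ h) = 1 := by
    rw [map_pow]; exact pow_card_eq_one'
  have h2 : (⟨v.asIdeal, hv⟩ ^ h : nonZeroDivisors (Ideal (𝓞 E))) =
      ⟨v.asIdeal ^ h, pow_mem hv h⟩ := rfl
  rw [h2, ClassGroup.mk0_eq_one_iff] at h1
  obtain ⟨g, hg⟩ := h1
  change _ = Ideal.span {g} at hg
  have hg0 : g ≠ 0 := by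
    rintro rfl
    rw [Ideal.span_singleton_eq_bot.2 rfl] at hg
    exact v.ne_bot (by simpa [hpos] using pow_eq_zero_iff hpos |>.1 hg)
  have hg0' : algebraMap (𝓞 E) E g ≠ 0 := by simpa using hg0
  refine ⟨Units.mk0 _ hg0', ?_, fun w hw => ?_⟩
  · rw [Units.val_mk0, HeightOneSpectrum.valuation_lt_one_iff_mem]
    exact Ideal.pow_le_self hpos (hg ▸ Ideal.mem_span_singleton_self g)
  · rw [Units.val_mk0, HeightOneSpectrum.valuation_eq_one_iff_notMem]
    intro hgw
    have h3 : v.asIdeal ^ h ≤ w.asIdeal := by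
      rw [hg, Ideal.span_le]; simpa using hgw
    have h4 := w.isPrime.le_of_pow_le h3
    exact hw (HeightOneSpectrum.ext (v.isMaximal.eq_of_le w.isPrime.ne_top h4).symm)

/-- The `S`-unit theorem modulo squares. -/
theorem index_sqs_unit (S : Finset (FinPrime E)) :
    (sqs ((S : Set (FinPrime E)).unit E)).relIndex ((S : Set (FinPrime E)).unit E) =
      2 ^ (Fintype.card (InfinitePlace E) + S.card) := by
  have hval : ∀ (v : FinPrime E) (x : Eˣ), v.valuationOfNeZero x = 1 ↔ v.valuation E (x : E) = 1 := by
    intro v x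
    rw [← HeightOneSpectrum.valuationOfNeZero_eq]
    norm_cast
  rw [sqs_relIndex_finset _ (fun v : FinPrime E => v.valuationOfNeZero) S]
  · have hk : ((S : Set (FinPrime E)).unit E ⊓
        ⨅ i ∈ S, (HeightOneSpectrum.valuationOfNeZero (K := E) i).ker) =
        (∅ : Set (FinPrime E)).unit E := by
      ext x
      simp only [Subgroup.mem_inf, Subgroup.mem_iInf, MonoidHom.mem_ker, hval, mem_unit]
      constructor
      · rintro ⟨h1, h2⟩ v -
        by_cases hv : v ∈ S
        · exact h2 v hv
        · exact h1 v (by simpa using hv)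
      · intro h
        exact ⟨fun v _ => h v (by simp), fun v _ => h v (by simp)⟩
    rw [hk, unit_empty, sqs_map, Subgroup.relIndex_map_map_of_injective, index_sqs_ringOfIntegers,
      pow_add, mul_comm]
    exact Units.map_injective (FaithfulSMul.algebraMap_injective (𝓞 E) E)
  · intro v hv
    obtain ⟨g, h1, h2⟩ := exists_prime_power_generator v
    refine ⟨g, fun w hw => h2 w ?_, ?_, fun w _ hwv => ?_⟩
    · rintro rfl; exact hw hv
    · rw [Ne, hval]; exact h1.ne
    · exact (hval w g).2 (h2 w hwv)

end SUnits

end FourSq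

namespace FourSq

set_option maxSynthPendingDepth 3

/-! ### Local squares and parity of valuations -/

section Local

open NumberField IsDedekindDomain

variable {E : Type*} [Field E] [NumberField E]

variable (E) in
lemma four_ne : (4 : E) ≠ 0 := by norm_num

lemma val_ne_zero (v : FinPrime E) {x : E} (hx : x ≠ 0) : v.valuation E x ≠ 0 :=
  (Valuation.ne_zero_iff _).2 hx

lemma val_pos (v : FinPrime E) {x : E} (hx : x ≠ 0) : 0 < v.valuation E x :=
  zero_lt_iff.2 (val_ne_zero v hx)

lemma val_int_le_one (v : FinPrime E) (n : ℤ) : v.valuation E (n : E) ≤ 1 := by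
  have := v.valuation_le_one (K := E) (n : 𝓞 E)
  simpa using this

lemma val_natCast_le_one (v : FinPrime E) (n : ℕ) : v.valuation E (n : E) ≤ 1 := by
  simpa using val_int_le_one v (n : ℤ)

lemma val_four (v : FinPrime E) : v.valuation E 4 = v.valuation E 2 ^ 2 := by
  rw [← map_pow]; norm_num

lemma val_two_le_one (v : FinPrime E) : v.valuation E 2 ≤ 1 := by
  simpa using val_natCast_le_one v 2

lemma val_three_le_one (v : FinPrime E) : v.valuation E 3 ≤ 1 := by
  simpa using val_natCast_le_one v 3

lemma val_four_le_one (v : FinPrime E) : v.valuation E 4 ≤ 1 := by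
  simpa using val_natCast_le_one v 4

lemma val_of_close (v : FinPrime E) {x y : E} (h : v.valuation E (x - y) < v.valuation E (4 * x)) :
    v.valuation E y = v.valuation E x := by
  have h1 : v.valuation E (x - y) < v.valuation E x := by
    refine h.trans_le ?_
    rw [map_mul]
    exact mul_le_of_le_one_left' (val_four_le_one v)
  have := Valuation.map_sub_eq_of_lt_left (v.valuation E) h1
  simpa using this

/-- The elements of `Eˣ` which are squares in the completion at `v`, described by Hensel's
condition: `x` is so close to some `y²` that the quotient is `1` modulo more than `4`. -/
def LS (v : FinPrime E) : Subgroup Eˣ where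
  carrier := {x | ∃ y : E, v.valuation E ((x : E) - y ^ 2) < v.valuation E (4 * (x : E))}
  one_mem' := ⟨1, by simpa using val_pos v (four_ne E)⟩
  mul_mem' := by
    rintro a b ⟨y, hy⟩ ⟨z, hz⟩
    refine ⟨y * z, ?_⟩
    have e : ((a * b : Eˣ) : E) - (y * z) ^ 2 = a * (b - z ^ 2) + z ^ 2 * (a - y ^ 2) := by
      push_cast; ring
    have e1 : (4 : E) * ((a * b : Eˣ) : E) = a * (4 * b) := by push_cast; ring
    have e2 : (4 : E) * ((a * b : Eˣ) : E) = b * (4 * a) := by push_cast; ring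
    rw [e]
    refine Valuation.map_add_lt _ ?_ ?_
    · rw [e1, map_mul, map_mul _ (a : E)]
      exact mul_lt_mul_of_pos_left hz (val_pos v a.ne_zero)
    · rw [e2, map_mul, map_mul _ (b : E), val_of_close v hz]
      exact mul_lt_mul_of_pos_left hy (val_pos v b.ne_zero)
  inv_mem' := by
    rintro a ⟨y, hy⟩
    have hv := val_of_close v hy
    have hy0 : y ≠ 0 := by
      rintro rfl
      rw [zero_pow two_ne_zero, map_zero] at hv
      exact val_ne_zero v a.ne_zero hv.symm
    refine ⟨y⁻¹, ?_⟩
    have ha := a.ne_zero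
    have e : ((a⁻¹ : Eˣ) : E) - y⁻¹ ^ 2 = -(a - y ^ 2) * (y ^ 2 * a)⁻¹ := by
      rw [Units.val_inv_eq_inv_val]
      field_simp
      ring
    have e2 : (4 : E) * ((a⁻¹ : Eˣ) : E) = (4 * a) * ((a : E) * a)⁻¹ := by
      rw [Units.val_inv_eq_inv_val]
      field_simp
    rw [e, e2, map_mul, map_mul _ (4 * (a : E)), map_inv₀, map_inv₀, map_mul _ _ (a : E), hv,
      ← map_mul, Valuation.map_neg]
    exact mul_lt_mul_of_pos_right hy (by
      rw [← map_inv₀]; exact val_pos v (inv_ne_zero (mul_ne_zero ha ha)))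

lemma mem_LS {v : FinPrime E} {x : Eˣ} :
    x ∈ LS v ↔ ∃ y : E, v.valuation E ((x : E) - y ^ 2) < v.valuation E (4 * (x : E)) := Iff.rfl

lemma sq_mem_LS (v : FinPrime E) (x : Eˣ) : x ^ 2 ∈ LS v :=
  ⟨x, by
    rw [Units.val_pow_eq_pow_val, sub_self, map_zero]
    exact val_pos v (mul_ne_zero (four_ne E) (pow_ne_zero 2 x.ne_zero))⟩

lemma mul_sq_mem_LS {v : FinPrime E} {x y : Eˣ} : x * y ^ 2 ∈ LS v ↔ x ∈ LS v :=
  Subgroup.mul_mem_cancel_right _ (sq_mem_LS v y)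

/-- The normalised (negative) order: the integer `n` with `v x = exp n`. -/
noncomputable def ordv (v : FinPrime E) (x : Eˣ) : ℤ := Multiplicative.toAdd (v.valuationOfNeZero (K := E) x)

lemma val_eq_exp (v : FinPrime E) (x : Eˣ) : v.valuation E (x : E) = WithZero.exp (ordv v x) := by
  rw [← HeightOneSpectrum.valuationOfNeZero_eq]; rfl

lemma ordv_mul (v : FinPrime E) (x y : Eˣ) : ordv v (x * y) = ordv v x + ordv v y := by
  simp [ordv]

lemma ordv_eq_iff (v : FinPrime E) (x y : Eˣ) :
    ordv v x = ordv v y ↔ v.valuation E (x : E) = v.valuation E (y : E) := by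
  rw [val_eq_exp, val_eq_exp, WithZero.exp_inj]

lemma ordv_eq_zero_iff (v : FinPrime E) (x : Eˣ) : ordv v x = 0 ↔ v.valuation E (x : E) = 1 := by
  rw [val_eq_exp, ← WithZero.exp_zero, WithZero.exp_inj]

/-- The elements of `Eˣ` of even order at `v`. -/
def EvenSub (v : FinPrime E) : Subgroup Eˣ where
  carrier := {x | Even (ordv v x)}
  one_mem' := by simp [ordv]
  mul_mem' := by
    intro a b ha hb
    rw [Set.mem_ofPred_eq, ordv_mul]
    exact Even.add ha hb
  inv_mem' := by
    intro a ha
    have : ordv v a⁻¹ = - ordv v a := by simp [ordv]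
    rw [Set.mem_ofPred_eq, this]
    exact ha.neg

lemma mem_EvenSub {v : FinPrime E} {x : Eˣ} : x ∈ EvenSub v ↔ Even (ordv v x) := Iff.rfl

lemma ordv_sq (v : FinPrime E) (x : Eˣ) : ordv v (x ^ 2) = 2 * ordv v x := by
  rw [pow_two, ordv_mul]; ring

lemma mem_EvenSub_of_sq {v : FinPrime E} {x : Eˣ} {y : E}
    (h : v.valuation E (x : E) = v.valuation E y ^ 2) : x ∈ EvenSub v := by
  have hy : y ≠ 0 := by
    rintro rfl
    rw [map_zero, zero_pow two_ne_zero] at h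
    exact val_ne_zero v x.ne_zero h
  rw [mem_EvenSub, (ordv_eq_iff v x (Units.mk0 y hy ^ 2)).2 (by simpa using h), ordv_sq]
  exact even_two_mul _

lemma exists_of_mem_EvenSub {v : FinPrime E} {x : Eˣ} (h : x ∈ EvenSub v) :
    ∃ z : Eˣ, v.valuation E (x : E) = v.valuation E (z : E) ^ 2 := by
  obtain ⟨n, hn⟩ := mem_EvenSub.1 h
  obtain ⟨z, hz⟩ := v.valuation_surjective E (WithZero.exp n)
  have hz0 : z ≠ 0 := by
    rintro rfl
    rw [map_zero] at hz
    exact WithZero.exp_ne_zero hz.symm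
  refine ⟨Units.mk0 z hz0, ?_⟩
  rw [Units.val_mk0, hz, val_eq_exp, hn, pow_two, ← WithZero.exp_add]

lemma mem_EvenSub_of_val_one {v : FinPrime E} {x : Eˣ} (h : v.valuation E (x : E) = 1) :
    x ∈ EvenSub v := by
  rw [mem_EvenSub, (ordv_eq_zero_iff v x).2 h]; exact Even.zero

lemma LS_le_EvenSub (v : FinPrime E) : LS v ≤ EvenSub v := by
  rintro x ⟨y, hy⟩
  exact mem_EvenSub_of_sq (y := y) (by rw [← val_of_close v hy, map_pow])

lemma mul_mem_EvenSub {v : FinPrime E} {x y : Eˣ} (hx : x ∉ EvenSub v) (hy : y ∉ EvenSub v) :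
    x * y ∈ EvenSub v := by
  rw [mem_EvenSub, Int.not_even_iff_odd] at *
  rw [ordv_mul]
  exact hx.add_odd hy

lemma not_mem_EvenSub_of_exp {v : FinPrime E} {x : Eˣ}
    (h : v.valuation E (x : E) = WithZero.exp (-1)) : x ∉ EvenSub v := by
  rw [val_eq_exp, WithZero.exp_inj] at h
  rw [mem_EvenSub, h]
  decide

lemma exists_uniformizer (v : FinPrime E) :
    ∃ p : Eˣ, v.valuation E (p : E) = WithZero.exp (-1) := by
  obtain ⟨p, hp⟩ := v.valuation_exists_uniformizer E
  have hp0 : p ≠ 0 := by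
    rintro rfl
    rw [map_zero] at hp
    exact WithZero.exp_ne_zero hp.symm
  exact ⟨Units.mk0 p hp0, hp⟩

/-- A finite set of primes away from which all fractional ideals are principal. -/
def ClassTrivial (S : Finset (FinPrime E)) : Prop :=
  ∀ I : Ideal (𝓞 E), I ≠ ⊥ → ∃ c : Eˣ, ∀ v ∉ S,
    (∀ x ∈ I, v.valuation E (algebraMap (𝓞 E) E x) ≤ v.valuation E (c : E)) ∧
      ∃ x ∈ I, v.valuation E (algebraMap (𝓞 E) E x) = v.valuation E (c : E)

lemma ClassTrivial.mono {S T : Finset (FinPrime E)} (hS : ClassTrivial S) (h : S ⊆ T) :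
    ClassTrivial T := fun I hI =>
  let ⟨c, hc⟩ := hS I hI
  ⟨c, fun v hv => hc v fun hv' => hv (h hv')⟩

variable (E) in
lemma exists_classTrivial : ∃ S : Finset (FinPrime E), ClassTrivial S := by
  classical
  have hJ : ∀ C : ClassGroup (𝓞 E), ∃ J : nonZeroDivisors (Ideal (𝓞 E)), ClassGroup.mk0 J = C :=
    fun C => ClassGroup.mk0_surjective C
  choose J hJ using hJ
  have hJ0 : ∀ C, (J C : Ideal (𝓞 E)) ≠ 0 := fun C => nonZeroDivisors.ne_zero (J C).2
  have := Fintype.ofFinite (ClassGroup (𝓞 E))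
  refine ⟨Finset.univ.biUnion fun C => (Ideal.finite_factors (hJ0 C)).toFinset, fun I hI => ?_⟩
  have hI' : I ∈ nonZeroDivisors (Ideal (𝓞 E)) := mem_nonZeroDivisors_of_ne_zero hI
  set C := (ClassGroup.mk0 ⟨I, hI'⟩)⁻¹ with hC
  have h1 : ClassGroup.mk0 (⟨I, hI'⟩ * J C) = 1 := by
    rw [map_mul, hJ, hC, mul_inv_cancel]
  have h2 : (⟨I, hI'⟩ * J C : nonZeroDivisors (Ideal (𝓞 E))) =
      ⟨I * J C, mul_mem hI' (J C).2⟩ := rfl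
  rw [h2, ClassGroup.mk0_eq_one_iff] at h1
  obtain ⟨g, hg⟩ := h1
  change _ = Ideal.span {g} at hg
  have hg0 : g ≠ 0 := by
    rintro rfl
    rw [Ideal.span_singleton_eq_bot.2 rfl] at hg
    exact mul_ne_zero hI (hJ0 C) hg
  have hg0' : algebraMap (𝓞 E) E g ≠ 0 := by simpa using hg0
  refine ⟨Units.mk0 _ hg0', fun v hv => ?_⟩
  rw [Units.val_mk0]
  have hvC : ¬ (J C : Ideal (𝓞 E)) ≤ v.asIdeal := by
    intro h
    apply hv
    rw [Finset.mem_biUnion]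
    exact ⟨C, Finset.mem_univ _, by simpa [Ideal.dvd_iff_le] using h⟩
  obtain ⟨j, hj, hjv⟩ := SetLike.not_le_iff_exists.1 hvC
  have hjv' := v.valuation_eq_one_iff_notMem (K := E) |>.2 hjv
  have hle : ∀ x ∈ I, v.valuation E (algebraMap (𝓞 E) E x) ≤
      v.valuation E (algebraMap (𝓞 E) E g) := by
    intro x hx
    have hm : x * j ∈ Ideal.span {g} := hg ▸ Ideal.mul_mem_mul hx hj
    obtain ⟨t, ht⟩ := Ideal.mem_span_singleton.1 hm
    have := congrArg (fun z => v.valuation E (algebraMap (𝓞 E) E z)) ht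
    simp only [map_mul, hjv', mul_one] at this
    rw [this]
    exact mul_le_of_le_one_right' (v.valuation_le_one t)
  refine ⟨hle, ?_⟩
  by_contra! hne
  have key : ∀ z ∈ I * (J C : Ideal (𝓞 E)), v.valuation E (algebraMap (𝓞 E) E z) <
      v.valuation E (algebraMap (𝓞 E) E g) := by
    intro z hz
    refine Submodule.mul_induction_on hz (fun x hx y _ => ?_) (fun x y hx hy => ?_)
    · rw [map_mul, map_mul]
      exact (mul_le_of_le_one_right' (v.valuation_le_one y)).trans_lt
        (lt_of_le_of_ne (hle x hx) (hne x hx))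
    · rw [map_add]
      exact Valuation.map_add_lt _ hx hy
  exact lt_irrefl _ (key g (hg ▸ Ideal.mem_span_singleton_self g))

/-- Outside a class-trivialising set, two elements have a greatest common divisor. -/
lemma ClassTrivial.exists_gcd {S : Finset (FinPrime E)} (hS : ClassTrivial S) {a b : E}
    (hab : a ≠ 0 ∨ b ≠ 0) :
    ∃ c : Eˣ, ∀ v ∉ S, max (v.valuation E a) (v.valuation E b) = v.valuation E (c : E) := by
  obtain ⟨a', b', d, hd, rfl, rfl⟩ := IsFractionRing.div_surjective (A := 𝓞 E) a |>.elim
    fun a1 h1 => h1.elim fun d1 h1 => (IsFractionRing.div_surjective (A := 𝓞 E) b).elim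
    fun b1 h2 => h2.elim fun d2 h2 => by
      have hd1 : algebraMap (𝓞 E) E d1 ≠ 0 := by
        simpa using nonZeroDivisors.ne_zero h1.1
      have hd2 : algebraMap (𝓞 E) E d2 ≠ 0 := by
        simpa using nonZeroDivisors.ne_zero h2.1
      exact (⟨a1 * d2, b1 * d1, d1 * d2, mul_ne_zero (nonZeroDivisors.ne_zero h1.1)
        (nonZeroDivisors.ne_zero h2.1), by rw [← h1.2, map_mul, map_mul]; field_simp,
        by rw [← h2.2, map_mul, map_mul]; field_simp⟩ : ∃ a' b' d : 𝓞 E, d ≠ 0 ∧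
          algebraMap (𝓞 E) E a' / algebraMap (𝓞 E) E d = a ∧
          algebraMap (𝓞 E) E b' / algebraMap (𝓞 E) E d = b)
  have hd' : algebraMap (𝓞 E) E d ≠ 0 := by simpa using hd
  have hI : Ideal.span {a', b'} ≠ ⊥ := by
    intro h
    rw [Ideal.span_eq_bot] at h
    have h1 := h a' (by simp)
    have h2 := h b' (by simp)
    simp [h1, h2] at hab
  obtain ⟨c, hc⟩ := hS _ hI
  refine ⟨c * (Units.mk0 _ hd')⁻¹, fun v hv => ?_⟩
  obtain ⟨h1, x, hx, hxc⟩ := hc v hv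
  have hmax : max (v.valuation E (algebraMap (𝓞 E) E a')) (v.valuation E (algebraMap (𝓞 E) E b')) =
      v.valuation E (c : E) := by
    refine le_antisymm (max_le (h1 _ (Ideal.subset_span (by simp)))
      (h1 _ (Ideal.subset_span (by simp)))) ?_
    rw [← hxc]
    obtain ⟨s, t, rfl⟩ := Ideal.mem_span_pair.1 hx
    rw [map_add, map_mul, map_mul]
    refine (Valuation.map_add _ _ _).trans (max_le_max ?_ ?_)
    · rw [map_mul]; exact mul_le_of_le_one_left' (v.valuation_le_one s)
    · rw [map_mul]; exact mul_le_of_le_one_left' (v.valuation_le_one t)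
  rw [map_div₀, map_div₀, Units.val_mul, map_mul, Units.val_inv_eq_inv_val, Units.val_mk0, map_inv₀,
    ← hmax, div_eq_mul_inv, div_eq_mul_inv]
  exact (max_mul (α := WithZero (Multiplicative ℤ)) _ _ _).symm

/-- Outside a class-trivialising set every prime has a generator. -/
lemma ClassTrivial.exists_generator {S : Finset (FinPrime E)} (hS : ClassTrivial S)
    {w : FinPrime E} (hw : w ∉ S) :
    ∃ c : Eˣ, w.valuation E (c : E) = WithZero.exp (-1) ∧
      ∀ v ∉ S, v ≠ w → v.valuation E (c : E) = 1 := by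
  obtain ⟨c, hc⟩ := hS w.asIdeal w.ne_bot
  refine ⟨c, ?_, fun v hv hvw => ?_⟩
  · obtain ⟨h1, x, hx, hxc⟩ := hc w hw
    obtain ⟨p, hp⟩ := w.intValuation_exists_uniformizer
    have hpw : p ∈ w.asIdeal := by
      rw [← pow_one w.asIdeal, ← HeightOneSpectrum.intValuation_le_pow_iff_mem, hp]
      simp
    refine le_antisymm ?_ ?_
    · rw [← hxc, HeightOneSpectrum.valuation_of_algebraMap]
      rw [← pow_one w.asIdeal, ← HeightOneSpectrum.intValuation_le_pow_iff_mem] at hx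
      simpa using hx
    · rw [← hp, ← HeightOneSpectrum.valuation_of_algebraMap (K := E)]
      exact h1 p hpw
  · obtain ⟨h1, x, hx, hxc⟩ := hc v hv
    have : ¬ w.asIdeal ≤ v.asIdeal := fun h =>
      hvw (HeightOneSpectrum.ext (w.isMaximal.eq_of_le v.isPrime.ne_top h).symm)
    obtain ⟨y, hy, hyv⟩ := SetLike.not_le_iff_exists.1 this
    refine le_antisymm (hxc ▸ v.valuation_le_one x) ?_
    rw [← v.valuation_eq_one_iff_notMem (K := E) |>.2 hyv]
    exact h1 y hy

/-- Away from `2` the unit squares have index two among the local units. -/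
lemma mul_mem_LS_of_units {v : FinPrime E} (h2 : v.valuation E 2 = 1) {x y : Eˣ}
    (hx : v.valuation E (x : E) = 1) (hy : v.valuation E (y : E) = 1) (hxS : x ∉ LS v)
    (hyS : y ∉ LS v) : x * y ∈ LS v := by
  classical
  have h4 : v.valuation E 4 = 1 := by rw [val_four, h2, one_pow]
  have key : ∀ z : Eˣ, v.valuation E (z : E) = 1 → ∃ n : 𝓞 E,
      v.valuation E (algebraMap (𝓞 E) E n - z) < 1 ∧ n ∉ v.asIdeal := by
    intro z hz
    obtain ⟨n, hn⟩ := v.exists_valuation_sub_lt_of_integer hz.le 1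
    refine ⟨n, by simpa using hn, fun h => ?_⟩
    have h3 := (v.valuation_lt_one_iff_mem (K := E) n).2 h
    have := Valuation.map_sub_lt _ h3 (by simpa using hn)
    simp [hz] at this
  let := Ideal.Quotient.field v.asIdeal
  have := Ideal.finiteQuotientOfFreeOfNeBot v.asIdeal v.ne_bot
  let := Fintype.ofFinite (𝓞 E ⧸ v.asIdeal)
  have key2 : ∀ (z : Eˣ) (n : 𝓞 E), v.valuation E (z : E) = 1 →
      v.valuation E (algebraMap (𝓞 E) E n - z) < 1 →
      IsSquare (Ideal.Quotient.mk v.asIdeal n) → z ∈ LS v := by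
    rintro z n hz hn ⟨m', hm⟩
    obtain ⟨m, rfl⟩ := Ideal.Quotient.mk_surjective m'
    refine ⟨algebraMap (𝓞 E) E m, ?_⟩
    rw [map_mul, hz, h4, one_mul]
    rw [← map_mul, Ideal.Quotient.eq, ← v.valuation_lt_one_iff_mem (K := E)] at hm
    have := Valuation.map_sub_lt _ hm hn
    convert this using 2
    simp only [map_sub, map_mul]; ring
  obtain ⟨n, hn, hnv⟩ := key x hx
  obtain ⟨m, hm, hmv⟩ := key y hy
  refine key2 _ (n * m) (by simp [hx, hy]) ?_ ?_
  · have e : algebraMap (𝓞 E) E (n * m) - ((x * y : Eˣ) : E) =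
      (algebraMap (𝓞 E) E n - x) * algebraMap (𝓞 E) E m + x * (algebraMap (𝓞 E) E m - y) := by
      rw [Units.val_mul, map_mul]; ring
    rw [e]
    refine Valuation.map_add_lt _ ?_ ?_
    · rw [map_mul]
      exact (mul_le_of_le_one_right' (v.valuation_le_one m)).trans_lt hn
    · rw [map_mul, hx, one_mul]; exact hm
  · have a1 := quadraticChar_neg_one_iff_not_isSquare.2 fun h => hxS (key2 x n hx hn h)
    have a2 := quadraticChar_neg_one_iff_not_isSquare.2 fun h => hyS (key2 y m hy hm h)
    rw [← quadraticChar_one_iff_isSquare, map_mul, map_mul, a1, a2]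
    · norm_num
    · rw [Ne, Ideal.Quotient.eq_zero_iff_mem]
      intro h
      rcases v.isPrime.mem_or_mem h with h | h
      · exact hnv h
      · exact hmv h

end Local

end FourSq

namespace FourSq

set_option maxSynthPendingDepth 3
set_option linter.unusedSectionVars false

/-! ### Quadratic extensions of number fields -/

section Quadratic

open NumberField IsDedekindDomain

/-- `L` is the quadratic extension `E(√u)`, with `s` the square root of `u` and `σ` the nontrivial
automorphism. -/
structure QuadExt (E L : Type*) [Field E] [Field L] [Algebra E L] (u : E) where
  nonsq : ¬ IsSquare u
  s : L
  s_mul : s * s = algebraMap E L u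
  σ : L ≃ₐ[E] L
  map_s : σ s = -s
  gen : ∀ x : L, ∃ a b : E, x = algebraMap E L a + algebraMap E L b * s
  rank : Module.finrank E L = 2

universe uE in
lemma exists_quadExt {E : Type uE} [Field E] [NumberField E] {u : E} (hu : ¬ IsSquare u) :
    ∃ (L : Type uE) (_ : Field L) (_ : NumberField L) (_ : Algebra E L), Nonempty (QuadExt E L u) := by
  have hF : Fact (∀ r : E, r ^ 2 ≠ u + 0 * r) :=
    ⟨fun r h => hu ⟨r, by rw [← pow_two, h]; ring⟩⟩
  have hfin : Module.Finite E (QuadraticAlgebra E u 0) := inferInstance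
  have hchar : CharZero (QuadraticAlgebra E u 0) :=
    charZero_of_injective_algebraMap (algebraMap E (QuadraticAlgebra E u 0)).injective
  have hfin' : FiniteDimensional ℚ (QuadraticAlgebra E u 0) := Module.Finite.trans E _
  have hnf : NumberField (QuadraticAlgebra E u 0) := { to_charZero := hchar, to_finiteDimensional := hfin' }
  refine ⟨QuadraticAlgebra E u 0, inferInstance, hnf, inferInstance, ⟨hu, QuadraticAlgebra.omega, ?_,
    { toFun := star, invFun := star, left_inv := star_star, right_inv := star_star,
      map_mul' := fun x y => by rw [star_mul, mul_comm], map_add' := star_add,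
      commutes' := fun r => by ext <;> simp }, ?_, fun x => ⟨x.re, x.im, ?_⟩,
    QuadraticAlgebra.finrank_eq_two _ _⟩⟩
  · ext <;> simp
  · show star _ = _
    ext <;> simp
  · ext <;> simp

variable {E L : Type*} [Field E] [Field L] [NumberField E] [NumberField L] [Algebra E L]

lemma val_algebraMap_lt_one_iff (v : FinPrime E) (x : 𝓞 E) :
    v.valuation E (algebraMap (𝓞 E) E x) < 1 ↔ x ∈ v.asIdeal :=
  v.valuation_lt_one_iff_mem x

/-- The prime of `E` below a prime of `L`. -/
noncomputable abbrev below (E : Type*) {L : Type*} [Field E] [Field L] [NumberField E] [NumberField L]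
    [Algebra E L] (w : FinPrime L) : FinPrime E :=
  HeightOneSpectrum.under (𝓞 E) w

lemma mem_below {w : FinPrime L} {x : 𝓞 E} :
    x ∈ (below E w).asIdeal ↔ algebraMap (𝓞 E) (𝓞 L) x ∈ w.asIdeal := Iff.rfl

lemma algebraMap_algebraMap (x : 𝓞 E) :
    algebraMap (𝓞 L) L (algebraMap (𝓞 E) (𝓞 L) x) = algebraMap E L (algebraMap (𝓞 E) E x) := rfl

lemma val_below_aux (w : FinPrime L) {x : E} (hx : (below E w).valuation E x ≤ 1) :
    ∃ n d : 𝓞 E, d ∉ (below E w).asIdeal ∧ x * algebraMap (𝓞 E) E d = algebraMap (𝓞 E) E n ∧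
      w.valuation L (algebraMap E L x) =
        w.valuation L (algebraMap (𝓞 L) L (algebraMap (𝓞 E) (𝓞 L) n)) := by
  obtain ⟨n, d, h⟩ := (below E w).exists_primeCompl_mul_eq_of_integer x hx
  refine ⟨n, d, d.2, h, ?_⟩
  have h1 : w.valuation L (algebraMap (𝓞 L) L (algebraMap (𝓞 E) (𝓞 L) d)) = 1 :=
    w.valuation_eq_one_iff_notMem.2 fun h => d.2 (mem_below.2 h)
  rw [algebraMap_algebraMap, ← h, map_mul, map_mul, ← algebraMap_algebraMap (L := L) (d : 𝓞 E), h1,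
    mul_one]

lemma val_below_le_one (w : FinPrime L) {x : E} (hx : (below E w).valuation E x ≤ 1) :
    w.valuation L (algebraMap E L x) ≤ 1 := by
  obtain ⟨n, d, -, -, h⟩ := val_below_aux w hx
  rw [h]; exact w.valuation_le_one _

lemma val_below_lt_one (w : FinPrime L) {x : E} (hx : (below E w).valuation E x < 1) :
    w.valuation L (algebraMap E L x) < 1 := by
  obtain ⟨n, d, hd, hnd, h⟩ := val_below_aux w hx.le
  have h1 := val_algebraMap_lt_one_iff (below E w) n
  rw [← hnd, map_mul] at h1
  rw [h, w.valuation_lt_one_iff_mem, ← mem_below, ← h1]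
  exact (mul_le_of_le_one_right' ((below E w).valuation_le_one _)).trans_lt hx

lemma val_below_eq_one (w : FinPrime L) {x : E} (hx : (below E w).valuation E x = 1) :
    w.valuation L (algebraMap E L x) = 1 := by
  refine le_antisymm (val_below_le_one w hx.le) ?_
  have h := val_below_le_one w (x := x⁻¹) (by rw [map_inv₀, hx, inv_one])
  rw [map_inv₀, map_inv₀] at h
  have hx0 : x ≠ 0 := by rintro rfl; simp at hx
  have hw := val_pos w (x := algebraMap E L x) (by simpa using hx0)
  exact (inv_le_one₀ hw).1 h

lemma exists_above (v : FinPrime E) : ∃ w : FinPrime L, below E w = v := by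
  have := v.isMaximal
  obtain ⟨P, hP, hlo⟩ := Ideal.exists_maximal_ideal_liesOver_of_isIntegral v.asIdeal (S := 𝓞 L)
  refine ⟨⟨P, hP.isPrime, Ideal.ne_bot_of_liesOver_of_ne_bot v.ne_bot P⟩, ?_⟩
  exact HeightOneSpectrum.ext hlo.over.symm

lemma finite_above (v : FinPrime E) : {w : FinPrime L | below E w = v}.Finite := by
  have h0 : Ideal.map (algebraMap (𝓞 E) (𝓞 L)) v.asIdeal ≠ 0 := by
    rw [Ne, Ideal.zero_eq_bot, Ideal.map_eq_bot_iff_of_injective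
      (FaithfulSMul.algebraMap_injective (𝓞 E) (𝓞 L))]
    exact v.ne_bot
  refine (Ideal.finite_factors h0).subset fun w hw => ?_
  rw [Set.mem_ofPred_eq, Ideal.dvd_iff_le, Ideal.map_le_iff_le_comap]
  rw [Set.mem_ofPred_eq] at hw
  rw [← hw]
  exact le_rfl

variable (L) in
/-- The finite set of primes of `L` above a finite set of primes of `E`. -/
noncomputable def above (S : Finset (FinPrime E)) : Finset (FinPrime L) :=
  (S.finite_toSet.biUnion fun v _ => finite_above (L := L) v).toFinset

lemma mem_above {S : Finset (FinPrime E)} {w : FinPrime L} : w ∈ above L S ↔ below E w ∈ S := by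
  simp [above]

variable {u : E} (q : QuadExt E L u)

namespace QuadExt

lemma σ_σ (x : L) : q.σ (q.σ x) = x := by
  obtain ⟨a, b, rfl⟩ := q.gen x
  simp [q.map_s]

lemma mul_σ (a b : E) : (algebraMap E L a + algebraMap E L b * q.s) *
    q.σ (algebraMap E L a + algebraMap E L b * q.s) = algebraMap E L (a ^ 2 - u * b ^ 2) := by
  simp only [map_add, map_mul, AlgEquiv.commutes, q.map_s, map_sub, map_pow, ← q.s_mul]
  ring

lemma u_ne_zero (q : QuadExt E L u) : u ≠ 0 := fun h => q.nonsq (h ▸ ⟨0, by simp⟩)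

lemma s_ne_zero : q.s ≠ 0 := by
  intro h
  have := q.s_mul
  rw [h, mul_zero] at this
  exact q.u_ne_zero (by simpa using this.symm)

/-- The conjugate of a prime. -/
noncomputable def conj (w : FinPrime L) : FinPrime L :=
  HeightOneSpectrum.comap (RingOfIntegers.mapRingEquiv q.σ.toRingEquiv : 𝓞 L →+* 𝓞 L)
    (RingEquiv.surjective _) w

lemma mem_conj {w : FinPrime L} {x : 𝓞 L} :
    x ∈ (q.conj w).asIdeal ↔ RingOfIntegers.mapRingEquiv q.σ.toRingEquiv x ∈ w.asIdeal := Iff.rfl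

lemma below_conj (w : FinPrime L) : below E (q.conj w) = below E w := by
  refine HeightOneSpectrum.ext (Ideal.ext fun x => ?_)
  rw [mem_below, mem_below, mem_conj]
  have : RingOfIntegers.mapRingEquiv q.σ.toRingEquiv (algebraMap (𝓞 E) (𝓞 L) x) =
      algebraMap (𝓞 E) (𝓞 L) x := by
    apply RingOfIntegers.ext
    exact q.σ.commutes _
  rw [this]

/-- A prime at which `u` is a local square splits in `E(√u)`. -/
lemma conj_ne {w : FinPrime L} {x : Eˣ} (hx : (x : E) = u) (hw : x ∈ LS (below E w)) :
    q.conj w ≠ w := by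
  obtain ⟨y, hy⟩ := hw
  set v := below E w with hv
  have hvy := val_of_close v hy
  rw [hx] at hy hvy
  have hy0 : y ≠ 0 := by
    rintro rfl
    rw [zero_pow two_ne_zero, map_zero] at hvy
    exact val_ne_zero v q.u_ne_zero hvy.symm
  have h4 := four_ne E
  have hc : v.valuation E ((1 - u / y ^ 2) / 4) < 1 := by
    have e : (1 - u / y ^ 2) / 4 = -(u - y ^ 2) / (4 * y ^ 2) := by field_simp; ring
    have h4y : 0 < v.valuation E (4 * y ^ 2) := val_pos v (mul_ne_zero h4 (pow_ne_zero 2 hy0))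
    rw [e, map_div₀, Valuation.map_neg, div_lt_one₀ h4y, map_mul, hvy, ← map_mul]
    exact hy
  obtain ⟨a, b, hab⟩ := v.exists_primeCompl_mul_eq_of_integer _ hc.le
  have ha : a ∈ v.asIdeal := by
    have h1 := val_algebraMap_lt_one_iff v a
    rw [← hab, map_mul] at h1
    rw [← h1]
    exact (mul_le_of_le_one_right' (v.valuation_le_one _)).trans_lt hc
  set B : L := algebraMap E L (algebraMap (𝓞 E) E b) with hB
  set A : L := algebraMap E L (algebraMap (𝓞 E) E a) with hA
  set Y : L := algebraMap E L y with hY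
  have hY0 : Y ≠ 0 := by rw [hY]; simpa using hy0
  have hAB : (1 - q.s * q.s / Y ^ 2) * B = 4 * A := by
    have := congrArg (fun z => 4 * algebraMap E L z) hab
    simp only [map_mul, map_div₀, map_sub, map_pow, map_one, map_ofNat] at this
    have h4' := four_ne L
    rw [q.s_mul, ← this, hB, hY]
    field_simp
  have h2 : (2 : L) ≠ 0 := two_ne_zero
  have hσA : q.σ A = A := q.σ.commutes _
  have hσB : q.σ B = B := q.σ.commutes _
  have hσY : q.σ Y = Y := q.σ.commutes _
  set t : L := B * ((1 + q.s / Y) / 2) with ht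
  have hσt : q.σ t = B - t := by
    rw [ht]
    simp only [map_mul, map_div₀, map_add, map_one, map_ofNat, q.map_s, hσB, hσY]
    field_simp
    ring
  have hprod : t * (B - t) = A * B := by
    have h4' := four_ne L
    have : 4 * (t * (B - t)) = 4 * (A * B) := by
      rw [← mul_assoc 4 A, ← hAB, ht]
      field_simp
      ring
    exact mul_left_cancel₀ h4' this
  have hint : IsIntegral ℤ t := by
    have hBi : IsIntegral ℤ B := (algebraMap (𝓞 E) (𝓞 L) b).2
    have hAi : IsIntegral ℤ A := (algebraMap (𝓞 E) (𝓞 L) a).2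
    have : IsIntegral (𝓞 L) t := by
      refine ⟨Polynomial.X ^ 2 - Polynomial.C (algebraMap (𝓞 E) (𝓞 L) b) * Polynomial.X +
        Polynomial.C (algebraMap (𝓞 E) (𝓞 L) (a * b)), ?_, ?_⟩
      · monicity!
      · simp only [Polynomial.eval₂_add, Polynomial.eval₂_sub, Polynomial.eval₂_mul,
          Polynomial.eval₂_pow, Polynomial.eval₂_X, Polynomial.eval₂_C, algebraMap_algebraMap,
          map_mul]
        linear_combination -hprod
    exact isIntegral_trans t this
  let T : 𝓞 L := ⟨t, hint⟩
  let τ := RingOfIntegers.mapRingEquiv q.σ.toRingEquiv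
  have hτ : τ T = algebraMap (𝓞 E) (𝓞 L) b - T := RingOfIntegers.ext hσt
  have hτ2 : τ (τ T) = T := RingOfIntegers.ext (q.σ_σ t)
  have hm : T * τ T ∈ w.asIdeal := by
    have : T * τ T = algebraMap (𝓞 E) (𝓞 L) (a * b) := by
      rw [hτ]
      apply RingOfIntegers.ext
      exact hprod.trans (by rw [hA, hB, ← map_mul, ← map_mul]; rfl)
    rw [this]
    exact mem_below.1 (Ideal.mul_mem_right _ _ ha)
  intro heq
  have hswap : ∀ x : 𝓞 L, τ x ∈ w.asIdeal ↔ x ∈ w.asIdeal := by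
    intro x
    rw [← q.mem_conj, heq]
  have hboth : T ∈ w.asIdeal := by
    rcases w.isPrime.mem_or_mem hm with h | h
    · exact h
    · exact (hswap T).1 h
  have hb : algebraMap (𝓞 E) (𝓞 L) b ∈ w.asIdeal := by
    have h3 := (hswap T).2 hboth
    rw [hτ] at h3
    simpa using add_mem h3 hboth
  exact b.2 (mem_below.2 hb)

end QuadExt

open Classical in
/-- Counting primes: the local squares split. -/
lemma card_above (q : QuadExt E L u) (S : Finset (FinPrime E)) {x : Eˣ} (hx : (x : E) = u) :
    S.card + (S.filter fun v => x ∈ LS v).card ≤ (above L S).card := by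
  rw [Finset.card_eq_sum_card_fiberwise (f := below E) (s := above L S) (t := S)
    fun w hw => mem_above.1 hw, Finset.card_filter, Finset.card_eq_sum_ones,
    ← Finset.sum_add_distrib]
  refine Finset.sum_le_sum fun v hv => ?_
  obtain ⟨w, rfl⟩ := exists_above (L := L) v
  have hw : w ∈ (above L S).filter fun w' => below E w' = below E w := by
    simp [mem_above, hv]
  split_ifs with h
  · have hne := q.conj_ne hx h
    have hw' : q.conj w ∈ (above L S).filter fun w' => below E w' = below E w := by
      simp [mem_above, hv, q.below_conj]
    exact Finset.one_lt_card.2 ⟨_, hw', _, hw, hne⟩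
  · exact Finset.card_pos.2 ⟨w, hw⟩

lemma card_infinitePlace [IsTotallyComplex E] :
    2 * Fintype.card (InfinitePlace E) = Module.finrank ℚ E := by
  rw [InfinitePlace.card_eq_nrRealPlaces_add_nrComplexPlaces,
    IsTotallyComplex.nrRealPlaces_eq_zero, zero_add, IsTotallyComplex.finrank]

lemma card_infinitePlace_quad (q : QuadExt E L u) [IsTotallyComplex E] :
    Fintype.card (InfinitePlace L) = 2 * Fintype.card (InfinitePlace E) := by
  have := isTotallyComplex_of_algebra E L
  have h1 := card_infinitePlace (E := E)
  have h2 := card_infinitePlace (E := L)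
  have h3 := Module.finrank_mul_finrank ℚ E L
  rw [q.rank] at h3
  omega

end Quadratic

end FourSq

namespace FourSq

set_option maxSynthPendingDepth 3
set_option linter.unusedSectionVars false

/-! ### Norms from quadratic extensions -/

section Norms

open NumberField IsDedekindDomain

variable {E L : Type*} [Field E] [Field L] [NumberField E] [NumberField L] [Algebra E L]

lemma val_below_eq_one_iff (w : FinPrime L) {x : E} :
    w.valuation L (algebraMap E L x) = 1 ↔ (below E w).valuation E x = 1 := by
  refine ⟨fun h => ?_, val_below_eq_one w⟩
  rcases lt_trichotomy ((below E w).valuation E x) 1 with h1 | h1 | h1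
  · exact absurd h (val_below_lt_one w h1).ne
  · exact h1
  · have h2 := val_below_lt_one w (x := x⁻¹) (by
      rw [map_inv₀]; exact inv_lt_one_of_one_lt₀ h1)
    rw [map_inv₀, map_inv₀, h, inv_one] at h2
    exact absurd h2 (lt_irrefl _)

namespace QuadExt

variable {u : E} (q : QuadExt E L u)

lemma val_conj_eq_one_iff (w : FinPrime L) (x : L) :
    w.valuation L (q.σ x) = 1 ↔ (q.conj w).valuation L x = 1 := by
  have key : ∀ (w : FinPrime L) (x : L), (q.conj w).valuation L x ≤ 1 →
      w.valuation L (q.σ x) ≤ 1 := by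
    intro w x hx
    obtain ⟨n, d, h⟩ := (q.conj w).exists_primeCompl_mul_eq_of_integer x hx
    have h1 : w.valuation L (q.σ (algebraMap (𝓞 L) L d)) = 1 :=
      (w.valuation_eq_one_iff_notMem (K := L)
        (r := RingOfIntegers.mapRingEquiv q.σ.toRingEquiv (d : 𝓞 L))).2 fun h => d.2 (q.mem_conj.2 h)
    have h2 : w.valuation L (q.σ (algebraMap (𝓞 L) L n)) ≤ 1 :=
      w.valuation_le_one (K := L) (RingOfIntegers.mapRingEquiv q.σ.toRingEquiv n)
    rwa [← h, map_mul, map_mul, h1, mul_one] at h2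
  have key2 : ∀ (w : FinPrime L) (x : L), (q.conj w).valuation L x = 1 →
      w.valuation L (q.σ x) = 1 := by
    intro w x hx
    refine le_antisymm (key w x hx.le) ?_
    have h := key w x⁻¹ (by rw [map_inv₀, hx, inv_one])
    rw [map_inv₀, map_inv₀] at h
    have hx0 : x ≠ 0 := by rintro rfl; simp at hx
    exact (inv_le_one₀ (val_pos w (x := q.σ x) (by simpa using hx0))).1 h
  refine ⟨fun h => ?_, key2 w x⟩
  have hcc : q.conj (q.conj w) = w := by
    refine HeightOneSpectrum.ext (Ideal.ext fun x => ?_)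
    rw [mem_conj, mem_conj]
    have : RingOfIntegers.mapRingEquiv q.σ.toRingEquiv
        (RingOfIntegers.mapRingEquiv q.σ.toRingEquiv x) = x := RingOfIntegers.ext (q.σ_σ _)
    rw [this]
  rw [← hcc] at h
  simpa [q.σ_σ] using key2 _ _ h

/-- The map `z ↦ z · σ z` on the units of `L`. -/
noncomputable def nu : Lˣ →* Lˣ :=
  MonoidHom.id Lˣ * Units.map (q.σ : L →* L)

lemma nu_apply (z : Lˣ) : ((q.nu z : Lˣ) : L) = z * q.σ z := rfl

end QuadExt

variable {u : E} (q : QuadExt E L u)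

/-- The inclusion of the units of `E` into those of `L`. -/
noncomputable def iota (E L : Type*) [Field E] [Field L] [Algebra E L] : Eˣ →* Lˣ :=
  Units.map (algebraMap E L : E →* L)

lemma iota_apply (x : Eˣ) : ((iota E L x : Lˣ) : L) = algebraMap E L x := rfl

lemma iota_injective : Function.Injective (iota E L) :=
  Units.map_injective (algebraMap E L).injective

lemma iota_mem_unit {S : Finset (FinPrime E)} {x : Eˣ} :
    iota E L x ∈ (above L S : Set (FinPrime L)).unit L ↔ x ∈ (S : Set (FinPrime E)).unit E := by
  rw [mem_unit, mem_unit]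
  constructor
  · intro h v hv
    obtain ⟨w, rfl⟩ := exists_above (L := L) v
    rw [← val_below_eq_one_iff]
    exact h w (by simpa [mem_above] using hv)
  · intro h w hw
    rw [iota_apply, val_below_eq_one_iff]
    exact h _ (by simpa [mem_above] using hw)

lemma exists_iota_eq_nu (z : Lˣ) : ∃ (e : Eˣ) (a b : E), iota E L e = q.nu z ∧
    (e : E) = a ^ 2 - u * b ^ 2 := by
  obtain ⟨a, b, hz⟩ := q.gen z
  have h := q.mul_σ a b
  rw [← hz, ← q.nu_apply] at h
  have h0 : a ^ 2 - u * b ^ 2 ≠ 0 := by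
    intro h0
    rw [h0, map_zero] at h
    exact (q.nu z).ne_zero h
  exact ⟨Units.mk0 _ h0, a, b, Units.ext (by rw [iota_apply, Units.val_mk0, h]), rfl⟩

lemma nu_mem_unit {S : Finset (FinPrime E)} {z : Lˣ}
    (hz : z ∈ (above L S : Set (FinPrime L)).unit L) :
    q.nu z ∈ (above L S : Set (FinPrime L)).unit L := by
  rw [mem_unit] at *
  intro w hw
  rw [q.nu_apply, map_mul, hz w hw, one_mul, q.val_conj_eq_one_iff]
  refine hz _ ?_
  simpa [mem_above, q.below_conj] using hw

/-- Hilbert's Theorem 90 for `S`-units, when all ideals away from `S` are principal and `E(√u)` is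
unramified away from `S`. -/
lemma norm_one_unit {S : Finset (FinPrime E)} (h2 : ∀ v : FinPrime E, v.valuation E 2 < 1 → v ∈ S)
    (hS : ClassTrivial S) {x : Eˣ} (hx : (x : E) = u) (hxS : x ∈ (S : Set (FinPrime E)).unit E)
    {z : Lˣ} (hz : z ∈ (above L S : Set (FinPrime L)).unit L) (hnz : q.nu z = 1) :
    ∃ y ∈ (above L S : Set (FinPrime L)).unit L, q.nu y * z = y ^ 2 := by
  have hzσ : (z : L) * q.σ z = 1 := by rw [← q.nu_apply, hnz, Units.val_one]
  obtain ⟨y, hy0, hy⟩ : ∃ y : L, y ≠ 0 ∧ y = z * q.σ y := by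
    by_cases h : (z : L) = -1
    · exact ⟨q.s, q.s_ne_zero, by rw [h, q.map_s]; ring⟩
    · refine ⟨1 + z, fun h' => h (by linear_combination h'), ?_⟩
      rw [map_add, map_one, mul_add, hzσ]; ring
  obtain ⟨α, β, rfl⟩ := q.gen y
  have hαβ : α ≠ 0 ∨ β ≠ 0 := by
    by_contra! h
    simp [h.1, h.2] at hy0
  obtain ⟨c, hc⟩ := hS.exists_gcd hαβ
  set α' := α / c with hα'
  set β' := β / c with hβ'
  have hc0 : (c : E) ≠ 0 := c.ne_zero
  set y' : L := algebraMap E L α' + algebraMap E L β' * q.s with hy'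
  have hcL : algebraMap E L (c : E) ≠ 0 := by simp
  have hyy : algebraMap E L α + algebraMap E L β * q.s = algebraMap E L c * y' := by
    rw [hy', hα', hβ', map_div₀, map_div₀]; field_simp
  rw [hyy] at hy hy0
  have hy0' : y' ≠ 0 := right_ne_zero_of_mul hy0
  have hyz : y' = z * q.σ y' := by
    apply mul_left_cancel₀ hcL
    rw [hy, map_mul, q.σ.commutes]; ring
  refine ⟨Units.mk0 y' hy0', ?_, ?_⟩
  swap
  · ext
    push_cast
    rw [q.nu_apply, Units.val_mk0]
    linear_combination (-y') * hyz
  rw [mem_unit] at *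
  intro w hw
  have hwS : below E w ∉ S := by simpa [mem_above] using hw
  have hv := hc _ hwS
  have hvc := val_ne_zero (below E w) hc0
  have hv1 : max ((below E w).valuation E α') ((below E w).valuation E β') = 1 := by
    rw [hα', hβ', map_div₀, map_div₀, div_eq_mul_inv, div_eq_mul_inv,
      ← max_mul (α := WithZero (Multiplicative ℤ)), hv, mul_inv_cancel₀ hvc]
  have hw2 : w.valuation L 2 = 1 := by
    have : (below E w).valuation E 2 = 1 := by
      refine le_antisymm (val_two_le_one _) ?_
      by_contra! h
      exact hwS (h2 _ h)
    have h' := val_below_eq_one w this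
    rwa [map_ofNat] at h'
  have hws : w.valuation L q.s = 1 := by
    have : w.valuation L q.s ^ 2 = 1 := by
      rw [← map_pow, pow_two, q.s_mul, val_below_eq_one_iff, ← hx]
      exact hxS _ hwS
    exact (pow_eq_one_iff_of_nonneg zero_le two_ne_zero).1 this
  have hwα := val_below_le_one w (x := α') ((le_max_left _ _).trans hv1.le)
  have hwβ := val_below_le_one w (x := β') ((le_max_right _ _).trans hv1.le)
  have hσy : q.σ y' = algebraMap E L α' - algebraMap E L β' * q.s := by
    rw [hy', map_add, map_mul, q.σ.commutes, q.σ.commutes, q.map_s]; ring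
  have hwy : w.valuation L (q.σ y') = w.valuation L y' := by
    conv_rhs => rw [hyz]
    rw [map_mul, hz w hw, one_mul]
  rw [Units.val_mk0]
  refine le_antisymm ?_ ?_
  · refine (Valuation.map_add _ _ _).trans (max_le hwα ?_)
    rw [map_mul, hws, mul_one]; exact hwβ
  · by_contra! hlt
    have e1 : (2 : L) * algebraMap E L α' = y' + q.σ y' := by rw [hσy, hy']; ring
    have e2 : (2 : L) * algebraMap E L β' * q.s = y' - q.σ y' := by rw [hσy, hy']; ring
    have a1 : w.valuation L (algebraMap E L α') < 1 := by
      rw [← one_mul (w.valuation L _), ← hw2, ← map_mul, e1, hw2]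
      exact Valuation.map_add_lt _ hlt (hwy ▸ hlt)
    have a2 : w.valuation L (algebraMap E L β') < 1 := by
      have e3 : w.valuation L (algebraMap E L β') =
          w.valuation L (2 * algebraMap E L β' * q.s) := by
        rw [map_mul, map_mul, hw2, hws, one_mul, mul_one]
      rw [e3, e2]
      exact Valuation.map_sub_lt _ hlt (hwy ▸ hlt)
    rcases max_choice ((below E w).valuation E α') ((below E w).valuation E β') with h | h
    · exact a1.ne ((val_below_eq_one_iff w).2 (h ▸ hv1))
    · exact a2.ne ((val_below_eq_one_iff w).2 (h ▸ hv1))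

open Classical in
/-- Norms of `S`-units from `E(√u)` have index at most `2 ^ (m - 1)` in the `S`-units, where `m` is
the number of primes of `S` at which `u` is not a local square. -/
theorem norm_index_aux (q : QuadExt E L u) [IsTotallyComplex E] {S : Finset (FinPrime E)}
    (h2 : ∀ v : FinPrime E, v.valuation E 2 < 1 → v ∈ S)
    (hS : ClassTrivial S) {x : Eˣ} (hx : (x : E) = u) (hxS : x ∈ (S : Set (FinPrime E)).unit E) :
    ∃ N : Subgroup Eˣ, N ≤ (S : Set (FinPrime E)).unit E ∧
      (∀ y ∈ N, ∃ a b : E, (y : E) = a ^ 2 - u * b ^ 2) ∧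
      N.relIndex ((S : Set (FinPrime E)).unit E) ≠ 0 ∧
      2 * N.relIndex ((S : Set (FinPrime E)).unit E) ≤ 2 ^ (S.filter fun v => x ∉ LS v).card := by
  have hinj := iota_injective (E := E) (L := L)
  set U := (S : Set (FinPrime E)).unit E with hU
  set X := (above L S : Set (FinPrime L)).unit L with hX
  set A := U.map (iota E L) with hA
  have hAX : A ≤ X := by
    rintro _ ⟨a, ha, rfl⟩
    exact iota_mem_unit.2 ha
  have hnuA : X.map q.nu ≤ A := by
    rintro _ ⟨z, hz, rfl⟩
    obtain ⟨e, -, -, he, -⟩ := exists_iota_eq_nu q z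
    refine ⟨e, ?_, he⟩
    refine iota_mem_unit (L := L).1 ?_
    rw [he]
    exact nu_mem_unit q hz
  have hAA : sqs A ≤ X.map q.nu := by
    intro y hy
    obtain ⟨_, ⟨a, ha, rfl⟩, rfl⟩ := mem_sqs.1 hy
    refine ⟨iota E L a, hAX ⟨a, ha, rfl⟩, ?_⟩
    ext
    rw [q.nu_apply, iota_apply, q.σ.commutes, Units.val_pow_eq_pow_val, iota_apply, pow_two]
  set a := (X.map q.nu).relIndex A with ha
  set b := (sqs A).relIndex (X.map q.nu) with hb
  set c := (A ⊔ sqs X).relIndex X with hc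
  set d := (sqs X).relIndex A with hd
  set r := Fintype.card (InfinitePlace E) with hr
  have hab : b * a = 2 ^ (r + S.card) := by
    rw [hb, ha, Subgroup.relIndex_mul_relIndex _ _ _ hAA hnuA, hA, sqs_map,
      Subgroup.relIndex_map_map_of_injective _ _ hinj, index_sqs_unit]
  have hcd : d * c = 2 ^ (2 * r + (above L S).card) := by
    have h1 := index_sqs_unit (above L S)
    rw [card_infinitePlace_quad q] at h1
    rw [← h1, ← Subgroup.relIndex_mul_relIndex (sqs X) (A ⊔ sqs X) X le_sup_right
      (sup_le hAX (sqs_le X)), Subgroup.relIndex_sup_right]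
  have hd2 : 2 * d ≤ 2 ^ (r + S.card) := by
    have h1 : (sqs A).relIndex A = 2 ^ (r + S.card) := by
      rw [hA, sqs_map, Subgroup.relIndex_map_map_of_injective _ _ hinj, index_sqs_unit]
    have hle : sqs A ≤ sqs X ⊓ A := by
      refine le_inf ?_ (sqs_le A)
      intro y hy
      obtain ⟨t, ht, rfl⟩ := mem_sqs.1 hy
      exact mem_sqs.2 ⟨t, hAX ht, rfl⟩
    have h3 := Subgroup.relIndex_mul_relIndex (sqs A) (sqs X ⊓ A) A hle inf_le_right
    rw [Subgroup.inf_relIndex_right, h1] at h3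
    rw [← h3]
    refine Nat.mul_le_mul_right _ ?_
    set s : Lˣ := Units.mk0 q.s q.s_ne_zero with hs
    have hs2 : s ^ 2 = iota E L x := by
      ext
      rw [Units.val_pow_eq_pow_val, hs, Units.val_mk0, pow_two, q.s_mul, iota_apply, hx]
    refine two_le_relIndex (x := iota E L x) (Subgroup.mem_inf.2
      ⟨mem_sqs.2 ⟨s, ?_, hs2⟩, ⟨x, hxS, rfl⟩⟩) ?_ ?_
    · rw [mem_unit]
      intro w hw
      have h4 := iota_mem_unit (L := L).2 hxS w hw
      rw [← hs2, Units.val_pow_eq_pow_val, map_pow] at h4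
      exact (pow_eq_one_iff_of_nonneg zero_le two_ne_zero).1 h4
    · intro hmem
      obtain ⟨_, ⟨t, ht, rfl⟩, h5⟩ := mem_sqs.1 hmem
      rw [← map_pow] at h5
      have h6 := hinj h5
      exact q.nonsq ⟨t, by rw [← hx, ← h6, Units.val_pow_eq_pow_val, pow_two]⟩
    · intro h0
      rw [h0, zero_mul] at h3
      exact (pow_pos two_pos _).ne h3
  have hb0 : b ≠ 0 := left_ne_zero_of_mul (hab ▸ (pow_pos two_pos _).ne')
  have ha0 : a ≠ 0 := right_ne_zero_of_mul (hab ▸ (pow_pos two_pos _).ne')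
  have hcb : c ≤ b := by
    rw [hb, ← Subgroup.relIndex_comap, hc, ← Subgroup.inf_relIndex_right ((sqs A).comap q.nu)]
    refine Subgroup.relIndex_le_of_le_left ?_ ?_
    · rintro z ⟨hz, hzX⟩
      obtain ⟨t, ht, hts⟩ := mem_sqs.1 hz
      have htt : q.nu t = t ^ 2 := by
        obtain ⟨e, he, rfl⟩ := ht
        ext
        rw [q.nu_apply, iota_apply, q.σ.commutes, Units.val_pow_eq_pow_val, iota_apply, pow_two]
      obtain ⟨y, hy, hyz⟩ := norm_one_unit q h2 hS hx hxS (z := z * t⁻¹)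
        (X.mul_mem hzX (X.inv_mem (hAX ht))) (by rw [map_mul, map_inv, htt, ← hts, mul_inv_cancel])
      have e : z = (t * (q.nu y)⁻¹) * y ^ 2 := by
        rw [← hyz]
        simp [mul_comm, mul_left_comm]
      rw [e]
      exact Subgroup.mul_mem_sup (A.mul_mem ht (A.inv_mem (hnuA ⟨y, hy, rfl⟩)))
        (mem_sqs.2 ⟨y, hy, rfl⟩)
    · rw [Subgroup.inf_relIndex_right, Subgroup.relIndex_comap]
      exact hb0
  have hcomap : ((X.map q.nu).comap (iota E L)).relIndex U = a := by
    rw [Subgroup.relIndex_comap]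
  refine ⟨(X.map q.nu).comap (iota E L), ?_, ?_, ?_, ?_⟩
  · intro y hy
    obtain ⟨t, ht, hty⟩ := hnuA hy
    rwa [← hinj hty]
  · rintro y ⟨z, hz, hzy⟩
    obtain ⟨e, α, β, he, h⟩ := exists_iota_eq_nu q z
    rw [hzy] at he
    rw [← hinj he]
    exact ⟨α, β, h⟩
  · rwa [hcomap]
  · rw [hcomap]
    have hcard := card_above q S hx
    have hsplit := Finset.card_filter_add_card_filter_not (s := S) (fun v => x ∈ LS v)
    set p := (S.filter fun v => x ∈ LS v).card with hp
    set n := (S.filter fun v => x ∉ LS v).card with hn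
    have h1 : 2 * a * 2 ^ (2 * r + (above L S).card) ≤ 2 ^ (r + S.card) * 2 ^ (r + S.card) := by
      calc 2 * a * 2 ^ (2 * r + (above L S).card) = (2 * d) * c * a := by rw [← hcd]; ring
        _ ≤ 2 ^ (r + S.card) * b * a := by gcongr
        _ = _ := by rw [mul_assoc, hab]
    have h3 : 2 * a * 2 ^ (2 * r + (S.card + p)) ≤ 2 ^ n * 2 ^ (2 * r + (S.card + p)) := by
      calc 2 * a * 2 ^ (2 * r + (S.card + p)) ≤ 2 * a * 2 ^ (2 * r + (above L S).card) := by
            gcongr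
            norm_num
        _ ≤ _ := h1
        _ = _ := by rw [← pow_add, ← pow_add]; congr 1; omega
    exact Nat.le_of_mul_le_mul_right h3 (by positivity)

open Classical in
theorem norm_index {E : Type*} [Field E] [NumberField E] [IsTotallyComplex E]
    {S : Finset (FinPrime E)} (h2 : ∀ v : FinPrime E, v.valuation E 2 < 1 → v ∈ S)
    (hS : ClassTrivial S) {x : Eˣ} (hx : ¬ IsSquare (x : E))
    (hxS : x ∈ (S : Set (FinPrime E)).unit E) :
    ∃ N : Subgroup Eˣ, N ≤ (S : Set (FinPrime E)).unit E ∧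
      (∀ y ∈ N, ∃ a b : E, (y : E) = a ^ 2 - x * b ^ 2) ∧
      N.relIndex ((S : Set (FinPrime E)).unit E) ≠ 0 ∧
      2 * N.relIndex ((S : Set (FinPrime E)).unit E) ≤ 2 ^ (S.filter fun v => x ∉ LS v).card := by
  obtain ⟨L, _, _, _, ⟨q⟩⟩ := exists_quadExt hx
  exact norm_index_aux q h2 hS rfl hxS

end Norms

end FourSq

namespace FourSq

set_option maxSynthPendingDepth 3
set_option linter.unusedSectionVars false

/-! ### The index of the local squares -/

section LocalIndex

open NumberField IsDedekindDomain

variable {E : Type*} [Field E] [NumberField E]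

lemma mem_pow_succ_iff (v : FinPrime E) (a : 𝓞 E) (n : ℕ) :
    a ∈ v.asIdeal ^ (n + 1) ↔ v.valuation E (algebraMap (𝓞 E) E a) < WithZero.exp (-(n : ℤ)) := by
  rw [← v.intValuation_le_pow_iff_mem, ← v.valuation_of_algebraMap (K := E)]
  rw [← WithZero.lt_mul_exp_iff_le WithZero.exp_ne_zero, ← WithZero.exp_add]
  have : (-((n + 1 : ℕ) : ℤ) + 1) = -(n : ℤ) := by push_cast; ring
  rw [this]

/-- The group of `v`-units. -/
def vUnit (v : FinPrime E) : Subgroup Eˣ where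
  carrier := {x | v.valuation E (x : E) = 1}
  one_mem' := by simp
  mul_mem' := by
    intro a b ha hb
    have ha' : v.valuation E (a : E) = 1 := ha
    have hb' : v.valuation E (b : E) = 1 := hb
    change v.valuation E ((a * b : Eˣ) : E) = 1
    rw [Units.val_mul, map_mul, ha', hb', one_mul]
  inv_mem' := by
    intro a ha
    have ha' : v.valuation E (a : E) = 1 := ha
    change v.valuation E ((a⁻¹ : Eˣ) : E) = 1
    rw [Units.val_inv_eq_inv_val, map_inv₀, ha', inv_one]

lemma mem_vUnit {v : FinPrime E} {x : Eˣ} : x ∈ vUnit v ↔ v.valuation E (x : E) = 1 := Iff.rfl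

/-- Reduction of `v`-units modulo a power of `v`. -/
lemma exists_red (v : FinPrime E) (n N : ℕ) (hN : N = n + 1) :
    ∃ g : vUnit v →* (𝓞 E ⧸ v.asIdeal ^ N), ∀ (x : vUnit v) (a : 𝓞 E),
      v.valuation E (algebraMap (𝓞 E) E a - (x : Eˣ)) < WithZero.exp (-(n : ℤ)) ↔
        g x = Ideal.Quotient.mk _ a := by
  subst hN
  have key : ∀ x : vUnit v, ∃ a : 𝓞 E,
      v.valuation E (algebraMap (𝓞 E) E a - (x : Eˣ)) < WithZero.exp (-(n : ℤ)) := fun x =>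
    v.exists_valuation_sub_lt_of_integer (K := E) (x := ((x : Eˣ) : E)) x.2.le
      (Units.mk0 (WithZero.exp (-(n : ℤ))) WithZero.exp_ne_zero)
  choose f hf using key
  have spec : ∀ (x : vUnit v) (a : 𝓞 E),
      v.valuation E (algebraMap (𝓞 E) E a - (x : Eˣ)) < WithZero.exp (-(n : ℤ)) ↔
        Ideal.Quotient.mk (v.asIdeal ^ (n + 1)) (f x) = Ideal.Quotient.mk _ a := by
    intro x a
    rw [Ideal.Quotient.eq, mem_pow_succ_iff, (algebraMap (𝓞 E) E).map_sub]
    constructor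
    · intro h
      have e : algebraMap (𝓞 E) E (f x) - algebraMap (𝓞 E) E a =
        (algebraMap (𝓞 E) E (f x) - (x : Eˣ)) - (algebraMap (𝓞 E) E a - (x : Eˣ)) := by ring
      rw [e]
      exact Valuation.map_sub_lt _ (hf x) h
    · intro h
      have e : algebraMap (𝓞 E) E a - (x : Eˣ) = (algebraMap (𝓞 E) E (f x) - (x : Eˣ)) -
        (algebraMap (𝓞 E) E (f x) - algebraMap (𝓞 E) E a) := by ring
      rw [e]
      exact Valuation.map_sub_lt _ (hf x) h
  refine ⟨⟨⟨fun x => Ideal.Quotient.mk _ (f x), ?_⟩, ?_⟩, spec⟩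
  · rw [← map_one (Ideal.Quotient.mk (v.asIdeal ^ (n + 1))), ← spec]
    simp
  · intro x y
    change Ideal.Quotient.mk _ (f (x * y)) = Ideal.Quotient.mk _ (f x) * Ideal.Quotient.mk _ (f y)
    rw [← map_mul, ← spec]
    have e : algebraMap (𝓞 E) E (f x * f y) - ((x * y : vUnit v) : Eˣ) =
      algebraMap (𝓞 E) E (f x) * (algebraMap (𝓞 E) E (f y) - (y : Eˣ)) +
        (y : Eˣ) * (algebraMap (𝓞 E) E (f x) - (x : Eˣ)) := by
      rw [map_mul]; push_cast; ring
    rw [e]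
    refine Valuation.map_add_lt _ ?_ ?_
    · rw [map_mul]
      exact (mul_le_of_le_one_left zero_le (v.valuation_le_one (K := E) (f x))).trans_lt (hf y)
    · rw [map_mul, y.2, one_mul]
      exact hf x

lemma exists_val_two (v : FinPrime E) : ∃ e : ℕ, v.valuation E 2 = WithZero.exp (-(e : ℤ)) := by
  have h := val_eq_exp v (Units.mk0 (2 : E) two_ne_zero)
  rw [Units.val_mk0] at h
  have h1 := val_two_le_one v
  rw [h, ← WithZero.exp_zero, WithZero.exp_le_exp] at h1
  obtain ⟨e, he⟩ := Int.exists_eq_neg_ofNat h1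
  exact ⟨e, by rw [h, he]⟩

lemma finite_quot (v : FinPrime E) (n : ℕ) : Finite (𝓞 E ⧸ v.asIdeal ^ n) :=
  Ideal.finiteQuotientOfFreeOfNeBot _ (pow_ne_zero n v.ne_bot)

lemma card_quot (v : FinPrime E) (n : ℕ) :
    Nat.card (𝓞 E ⧸ v.asIdeal ^ n) = Ideal.absNorm v.asIdeal ^ n := by
  rw [← map_pow, Ideal.absNorm_apply, Submodule.cardQuot_apply]

/-- Reduction modulo a smaller power has fibres of the expected size. -/
lemma card_factor_fiber (v : FinPrime E) (m n : ℕ)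
    (t : 𝓞 E ⧸ v.asIdeal ^ n) :
    {s : 𝓞 E ⧸ v.asIdeal ^ (n + m) |
      Ideal.Quotient.factor (Ideal.pow_le_pow_right (Nat.le_add_right n m)) s = t}.ncard
        = Ideal.absNorm v.asIdeal ^ m := by
  have := finite_quot v (n + m)
  have := finite_quot v n
  generalize hf : Ideal.Quotient.factor (Ideal.pow_le_pow_right (I := v.asIdeal)
    (Nat.le_add_right n m)) = f
  have hsurj : Function.Surjective f := hf ▸ Ideal.Quotient.factor_surjective _
  have h1 : Nat.card f.toAddMonoidHom.ker = Ideal.absNorm v.asIdeal ^ m := by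
    have h := AddSubgroup.card_mul_index f.toAddMonoidHom.ker
    rw [AddSubgroup.index_ker, (AddMonoidHom.range_eq_top (f := f.toAddMonoidHom)).2 hsurj, card_quot] at h
    have h2 : Nat.card (⊤ : AddSubgroup (𝓞 E ⧸ v.asIdeal ^ n)) = Ideal.absNorm v.asIdeal ^ n := by
      rw [← card_quot]; exact Nat.card_congr AddSubgroup.topEquiv.toEquiv
    rw [h2] at h
    refine Nat.eq_of_mul_eq_mul_right ?_ (h.trans (by rw [pow_add, mul_comm]))
    rw [← card_quot]
    exact Nat.card_pos
  rw [← h1]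
  obtain ⟨s, rfl⟩ := hsurj t
  rw [← Nat.card_coe_set_eq]
  refine Nat.card_congr (Equiv.subtypeEquiv (Equiv.subRight s) ?_)
  intro a
  change f a = f s ↔ f (a - s) = 0
  rw [map_sub, sub_eq_zero]

/-- The local squares have index at most `2 * N(v) ^ e` in the `v`-units, with `e = ord_v 2`. -/
lemma relIndex_LS_vUnit (v : FinPrime E) {e : ℕ} (he : v.valuation E 2 = WithZero.exp (-(e : ℤ))) :
    (LS v).relIndex (vUnit v) ≠ 0 ∧
      (LS v).relIndex (vUnit v) ≤ 2 * Ideal.absNorm v.asIdeal ^ e := by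
  have h4 : v.valuation E 4 = WithZero.exp (-((e + e : ℕ) : ℤ)) := by
    rw [val_four, he, pow_two, ← WithZero.exp_add]; push_cast; congr 1; ring
  obtain ⟨g, hg⟩ := exists_red v (e + e) (e + 1 + e) (by omega)
  have := finite_quot v (e + 1 + e)
  set R := (MonoidHom.toHomUnits g).range with hR
  obtain ⟨r, hr⟩ : ∃ r : vUnit v →* R, r = (MonoidHom.toHomUnits g).rangeRestrict := ⟨_, rfl⟩
  have hrs : Function.Surjective r := hr ▸ MonoidHom.rangeRestrict_surjective _
  have hfin : Finite R := inferInstance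
  have hrv : ∀ x, ((r x : (𝓞 E ⧸ v.asIdeal ^ (e + 1 + e))ˣ) : 𝓞 E ⧸ v.asIdeal ^ (e + 1 + e)) = g x :=
    fun x => by rw [hr]; rfl
  have hclose : ∀ x y : vUnit v, g x = g y →
      v.valuation E (((x : Eˣ) : E) - (y : Eˣ)) < WithZero.exp (-((e + e : ℕ) : ℤ)) := by
    intro x y hxy
    obtain ⟨a, ha⟩ := Ideal.Quotient.mk_surjective (g x)
    have h1 := (hg x a).2 ha.symm
    have h2 := (hg y a).2 (hxy ▸ ha.symm)
    have e1 : ((x : Eˣ) : E) - (y : Eˣ) = (algebraMap (𝓞 E) E a - (y : Eˣ)) -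
      (algebraMap (𝓞 E) E a - (x : Eˣ)) := by ring
    rw [e1]
    exact Valuation.map_sub_lt _ h2 h1
  have hle : ((powMonoidHom 2 : R →* R).range).comap r ≤ (LS v).subgroupOf (vUnit v) := by
    rintro x ⟨t, ht⟩
    obtain ⟨y, rfl⟩ := hrs t
    have hxy : g (y ^ 2) = g x := by
      rw [← hrv, ← hrv, map_pow]
      exact congrArg (fun t : R => ((t : (𝓞 E ⧸ v.asIdeal ^ (e + 1 + e))ˣ) :
        𝓞 E ⧸ v.asIdeal ^ (e + 1 + e))) ht
    have h := hclose _ _ hxy.symm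
    rw [Subgroup.mem_subgroupOf, mem_LS]
    refine ⟨((y : Eˣ) : E), ?_⟩
    rw [map_mul, x.2, mul_one, h4]
    simpa using h
  have hidx : (((powMonoidHom 2 : R →* R).range).comap r).index
      ≤ 2 * Ideal.absNorm v.asIdeal ^ e := by
    rw [Subgroup.index_comap_of_surjective _ hrs, index_sq_eq_card_ker]
    have h3 := card_factor_fiber v e (e + 1) 1
    have h5 := card_factor_fiber v e (e + 1) (-1)
    set A : Set (𝓞 E ⧸ v.asIdeal ^ (e + 1 + e)) := _ with hA
    change A.ncard = _ at h3
    set B : Set (𝓞 E ⧸ v.asIdeal ^ (e + 1 + e)) := _ with hB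
    change B.ncard = _ at h5
    have hmem : ∀ s : 𝓞 E ⧸ v.asIdeal ^ (e + 1 + e), s ^ 2 = 1 → s ∈ A ∪ B := by
      intro s hs
      obtain ⟨a, rfl⟩ := Ideal.Quotient.mk_surjective s
      rw [← map_pow, ← map_one (Ideal.Quotient.mk (v.asIdeal ^ (e + 1 + e))), Ideal.Quotient.eq,
        show e + 1 + e = (e + e) + 1 by omega, mem_pow_succ_iff] at hs
      have hA' : v.valuation E (algebraMap (𝓞 E) E (a - 1)) < WithZero.exp (-(e : ℤ)) →
          Ideal.Quotient.mk (v.asIdeal ^ (e + 1 + e)) a ∈ A := by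
        intro h
        rw [← mem_pow_succ_iff, ← Ideal.Quotient.eq, map_one] at h
        exact h
      have hB' : v.valuation E (algebraMap (𝓞 E) E (a - -1)) < WithZero.exp (-(e : ℤ)) →
          Ideal.Quotient.mk (v.asIdeal ^ (e + 1 + e)) a ∈ B := by
        intro h
        rw [← mem_pow_succ_iff, ← Ideal.Quotient.eq, map_neg, map_one] at h
        exact h
      by_contra hcon
      rw [Set.mem_union, not_or] at hcon
      have hA2 := not_lt.1 (mt hA' hcon.1)
      have hB2 := not_lt.1 (mt hB' hcon.2)
      refine absurd hs (not_lt.2 ?_)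
      rw [show a ^ 2 - 1 = (a - 1) * (a - -1) by ring, map_mul, map_mul]
      refine le_trans (le_of_eq ?_) (mul_le_mul' hA2 hB2)
      rw [← WithZero.exp_add]; push_cast; congr 1; ring
    calc Nat.card (powMonoidHom 2 : R →* R).ker ≤ Nat.card (A ∪ B : Set _) := by
          refine Nat.card_le_card_of_injective (fun t => ⟨((t : R) : (𝓞 E ⧸ v.asIdeal ^ (e + 1 + e))ˣ),
            hmem _ ?_⟩) ?_
          · have := congrArg (fun t : R => ((t : (𝓞 E ⧸ v.asIdeal ^ (e + 1 + e))ˣ) :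
              𝓞 E ⧸ v.asIdeal ^ (e + 1 + e))) t.2
            exact this
          · intro s t hst
            exact Subtype.ext (Subtype.ext (Units.ext (congrArg Subtype.val hst)))
      _ = (A ∪ B).ncard := Nat.card_coe_set_eq _
      _ ≤ A.ncard + B.ncard := Set.ncard_union_le _ _
      _ = _ := by rw [h3, h5]; ring
  have hne : (((powMonoidHom 2 : R →* R).range).comap r).index ≠ 0 := by
    rw [Subgroup.index_comap_of_surjective _ hrs]
    exact Subgroup.FiniteIndex.index_ne_zero
  have : (((powMonoidHom 2 : R →* R).range).comap r).FiniteIndex := ⟨hne⟩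
  have := Subgroup.finiteIndex_of_le hle
  exact ⟨Subgroup.FiniteIndex.index_ne_zero (H := (LS v).subgroupOf (vUnit v)),
    (Subgroup.index_antitone hle).trans hidx⟩

lemma index_EvenSub (v : FinPrime E) : (EvenSub v).index = 2 := by
  obtain ⟨p, hp⟩ := exists_uniformizer v
  have hp' := not_mem_EvenSub_of_exp hp
  rw [Subgroup.index_eq_two_iff]
  refine ⟨p, fun b => ?_⟩
  by_cases hb : b ∈ EvenSub v
  · exact Or.inr ⟨hb, fun h => hp' ((Subgroup.mul_mem_cancel_left _ hb).1 h)⟩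
  · exact Or.inl ⟨mul_mem_EvenSub hb hp', hb⟩

lemma index_LS (v : FinPrime E) {e : ℕ} (he : v.valuation E 2 = WithZero.exp (-(e : ℤ))) :
    (LS v).index ≠ 0 ∧ (LS v).index ≤ 4 * Ideal.absNorm v.asIdeal ^ e := by
  have h1 := Subgroup.relIndex_mul_index (LS_le_EvenSub v)
  rw [index_EvenSub] at h1
  have h2 : EvenSub v = LS v ⊔ vUnit v := by
    refine le_antisymm ?_ (sup_le (LS_le_EvenSub v) fun x hx => mem_EvenSub_of_val_one hx)
    intro x hx
    obtain ⟨z, hz⟩ := exists_of_mem_EvenSub hx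
    have e1 : x = z ^ 2 * (x * (z ^ 2)⁻¹) := by rw [mul_comm x, mul_inv_cancel_left]
    rw [e1]
    refine Subgroup.mul_mem_sup (sq_mem_LS v z) ?_
    rw [mem_vUnit, Units.val_mul, map_mul, hz, Units.val_inv_eq_inv_val, map_inv₀,
      Units.val_pow_eq_pow_val, map_pow]
    exact mul_inv_cancel₀ (pow_ne_zero 2 (val_ne_zero v z.ne_zero))
  have h3 : (LS v).relIndex (EvenSub v) = (LS v).relIndex (vUnit v) := by
    rw [h2, Subgroup.relIndex_sup_left]
  have h4 := relIndex_LS_vUnit v he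
  rw [h3] at h1
  rw [← h1]
  exact ⟨mul_ne_zero h4.1 two_ne_zero, by linarith [h4.2]⟩

/-- The subgroup of elements which are squares at all primes of `S` has index at most
`4 ^ |S| * 2 ^ [E : ℚ]`. -/
theorem index_iInf_LS (S : Finset (FinPrime E)) :
    (⨅ v ∈ S, LS v).index ≠ 0 ∧
      (⨅ v ∈ S, LS v).index ≤ 4 ^ S.card * 2 ^ Module.finrank ℚ E := by
  classical
  choose e he using exists_val_two (E := E)
  have h1 : (⨅ v ∈ S, LS v) = ⨅ v : S, LS (v : FinPrime E) := iInf_subtype' (f := fun v _ => LS v)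
  constructor
  · rw [h1]
    exact Subgroup.index_iInf_ne_zero fun v => (index_LS _ (he _)).1
  · rw [h1]
    refine (Subgroup.index_iInf_le _).trans ?_
    refine (Finset.prod_le_prod' fun (v : S) _ => (index_LS (v : FinPrime E) (he v)).2).trans ?_
    rw [Finset.prod_mul_distrib, Finset.prod_const, Finset.card_univ, Fintype.card_coe]
    refine Nat.mul_le_mul_left _ ?_
    rw [Finset.prod_coe_sort S fun v => Ideal.absNorm v.asIdeal ^ e v]
    have hdvd : ∏ v ∈ S, v.asIdeal ^ e v ∣ Ideal.span {(2 : 𝓞 E)} := by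
      refine Finset.prod_dvd_of_coprime ?_ ?_
      · intro v _ w _ hvw
        refine IsCoprime.pow ?_
        have := v.isMaximal
        have := w.isMaximal
        exact Ideal.isCoprime_of_isMaximal fun h => hvw (HeightOneSpectrum.ext h)
      · intro v _
        rw [Ideal.dvd_span_singleton, ← v.intValuation_le_pow_iff_mem,
          ← v.valuation_of_algebraMap (K := E), ← he v]
        exact le_of_eq (congrArg _ (map_ofNat (algebraMap (𝓞 E) E) 2))
    have h2 := Ideal.absNorm_dvd_absNorm_of_le (Ideal.dvd_iff_le.1 hdvd)
    have h3 : Ideal.absNorm (Ideal.span {(2 : 𝓞 E)}) = 2 ^ Module.finrank ℚ E := by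
      have := Algebra.norm_natCast ℤ (S := 𝓞 E) 2
      rw [Ideal.absNorm_span_singleton]
      rw [Nat.cast_ofNat] at this
      rw [this, Int.natAbs_pow, RingOfIntegers.rank]
      rfl
    rw [h3, map_prod] at h2
    simp only [map_pow] at h2
    exact Nat.le_of_dvd (by positivity) h2

end LocalIndex

end FourSq

namespace FourSq

set_option maxSynthPendingDepth 3
set_option linter.unusedSectionVars false

/-! ### Primes that do not split in a quadratic extension -/

section EulerSum

open scoped ENNReal

variable {ι κ : Type*}

/-- The sum over all finitely supported exponent vectors of the corresponding monomials in `q`;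
formally it is the product over `i` of the geometric series in `q i`. -/
noncomputable def eulerSum (q : ι → ℝ≥0∞) : ℝ≥0∞ := ∑' d : ι →₀ ℕ, d.prod fun i n => q i ^ n

lemma eulerSum_le {q : ι → ℝ≥0∞} {q' : κ → ℝ≥0∞} {f : ι → κ} (hf : Function.Injective f)
    (h : ∀ i, q i ≤ q' (f i)) : eulerSum q ≤ eulerSum q' := by
  refine le_trans ?_ (ENNReal.tsum_comp_le_tsum_of_injective (Finsupp.mapDomain_injective hf) _)
  refine ENNReal.tsum_le_tsum fun d => ?_
  rw [Finsupp.prod_mapDomain_index_inj hf]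
  exact Finset.prod_le_prod' fun i _ => pow_le_pow_left₀ zero_le (h i) _

lemma eulerSum_sum (q : ι → ℝ≥0∞) (q' : κ → ℝ≥0∞) :
    eulerSum (Sum.elim q q') = eulerSum q * eulerSum q' := by
  rw [eulerSum, ← Finsupp.sumFinsuppEquivProdFinsupp.symm.tsum_eq, ENNReal.tsum_prod', eulerSum,
    ← ENNReal.tsum_mul_right]
  refine tsum_congr fun d => ?_
  rw [eulerSum, ← ENNReal.tsum_mul_left]
  refine tsum_congr fun d' => ?_
  have key : Finsupp.sumFinsuppEquivProdFinsupp.symm (d, d') =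
      d.mapDomain Sum.inl + d'.mapDomain Sum.inr := by
    classical
    ext (i | i)
    · rw [Finsupp.sumFinsuppEquivProdFinsupp_symm_inl, Finsupp.add_apply,
        Finsupp.mapDomain_apply Sum.inl_injective, Finsupp.mapDomain_of_notMem_range _ _ (by simp),
        add_zero]
    · rw [Finsupp.sumFinsuppEquivProdFinsupp_symm_inr, Finsupp.add_apply,
        Finsupp.mapDomain_apply Sum.inr_injective, Finsupp.mapDomain_of_notMem_range _ _ (by simp),
        zero_add]
  rw [key, Finsupp.prod_add_index' (fun _ => pow_zero _) (fun _ _ _ => pow_add _ _ _),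
    Finsupp.prod_mapDomain_index_inj Sum.inl_injective,
    Finsupp.prod_mapDomain_index_inj Sum.inr_injective]
  rfl

lemma eulerSum_unit {q : Unit → ℝ≥0∞} (h : q () ≤ 2⁻¹) : eulerSum q ≤ 2 := by
  rw [eulerSum, ← (Finsupp.uniqueEquiv (M := ℕ) ()).symm.tsum_eq]
  calc ∑' n : ℕ, ((Finsupp.uniqueEquiv (M := ℕ) ()).symm n).prod (fun i n => q i ^ n)
      = ∑' n : ℕ, q () ^ n := by
        refine tsum_congr fun n => ?_
        have : (Finsupp.uniqueEquiv (M := ℕ) ()).symm n = Finsupp.single () n :=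
          Finsupp.uniqueAddEquiv_symm_apply () n
        rw [this, Finsupp.prod_single_index (h := fun i n => q i ^ n) (pow_zero _)]
    _ = (1 - q ())⁻¹ := ENNReal.tsum_geometric _
    _ ≤ 2 := by
        rw [ENNReal.inv_le_iff_inv_le]
        refine le_trans (le_of_eq ?_) (tsub_le_tsub_left h 1)
        exact (ENNReal.one_sub_inv_two).symm

lemma eulerSum_finite [Finite ι] {q : ι → ℝ≥0∞} (h : ∀ i, q i ≤ 2⁻¹) :
    eulerSum q ≤ 2 ^ Nat.card ι := by
  revert q
  suffices H : ∀ q : ι → ℝ≥0∞, (∀ i, q i ≤ 2⁻¹) → eulerSum q ≤ 2 ^ Nat.card ι from fun {q} => H q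
  refine Finite.induction_empty_option (P := fun ι => ∀ q : ι → ℝ≥0∞, (∀ i, q i ≤ 2⁻¹) →
    eulerSum q ≤ 2 ^ Nat.card ι) ?_ ?_ ?_ ι
  · intro α β e ih q h
    rw [← Nat.card_congr e]
    refine le_trans ?_ (ih (q ∘ e) fun i => h _)
    exact eulerSum_le e.symm.injective fun i => by simp
  · intro q _
    rw [eulerSum, tsum_eq_single 0 fun d hd => absurd (Subsingleton.elim _ _) hd]
    simp
  · intro α _ ih q h
    have h1 : eulerSum q ≤ eulerSum (Sum.elim (fun a => q (some a)) fun _ : Unit => q none) := by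
      refine eulerSum_le (f := fun o => o.elim (Sum.inr ()) Sum.inl) ?_ ?_
      · rintro (_ | a) (_ | b) <;> simp
      · rintro (_ | a) <;> simp
    rw [eulerSum_sum] at h1
    rw [Nat.card_eq_fintype_card, Fintype.card_option, pow_succ, ← Nat.card_eq_fintype_card]
    exact h1.trans (mul_le_mul' (ih _ fun a => h _) (eulerSum_unit (h _)))

/-- Removing finitely many factors costs at most a factor of `2` each. -/
lemma eulerSum_le_compl (S : Finset ι) {q : ι → ℝ≥0∞} (h : ∀ i, q i ≤ 2⁻¹) :
    eulerSum q ≤ 2 ^ S.card * eulerSum fun i : {i // i ∉ S} => q i := by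
  classical
  have h1 : eulerSum q ≤ eulerSum (Sum.elim (fun i : {i // i ∈ S} => q i)
      fun i : {i // i ∉ S} => q i) := by
    refine eulerSum_le (Equiv.sumCompl (· ∈ S)).symm.injective fun i => ?_
    by_cases hi : i ∈ S
    · rw [Equiv.sumCompl_symm_apply_of_pos hi]; rfl
    · rw [Equiv.sumCompl_symm_apply_of_neg hi]; rfl
  rw [eulerSum_sum] at h1
  refine h1.trans (mul_le_mul_left (le_trans (eulerSum_finite (ι := {i // i ∈ S}) fun i => h i) (le_of_eq ?_)) _)
  rw [Nat.card_eq_fintype_card, Fintype.card_coe]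

end EulerSum

section Zeta

open NumberField IsDedekindDomain Filter Topology
open scoped ENNReal

variable {K : Type*} [Field K] [NumberField K]

lemma exists_prime_prod {I : Ideal (𝓞 K)} (hI : I ≠ 0) :
    ∃ d : FinPrime K →₀ ℕ, (d.prod fun v n => v.asIdeal ^ n) = I := by
  classical
  have hfin := Associates.finite_factors hI
  rw [Filter.eventually_cofinite] at hfin
  set d : FinPrime K →₀ ℕ := Finsupp.ofSupportFinite (fun v => (Associates.mk v.asIdeal).count
    (Associates.mk I).factors) (hfin.subset fun v hv => by simpa using hv) with hd
  refine ⟨d, ?_⟩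
  conv_rhs => rw [← Ideal.finprod_heightOneSpectrum_factorization hI]
  rw [finprod_eq_finsetProd_of_mulSupport_subset _ (s := d.support)]
  · rfl
  · intro v hv
    rw [Finset.mem_coe, Finsupp.mem_support_iff]
    intro h0
    refine hv ?_
    have : (Associates.mk v.asIdeal).count (Associates.mk I).factors = 0 := h0
    simp only [HeightOneSpectrum.maxPowDividing, this, pow_zero]

lemma prime_prod_injective : Function.Injective
    fun d : FinPrime K →₀ ℕ => d.prod fun v n => v.asIdeal ^ n := by
  classical
  have key : ∀ (d : FinPrime K →₀ ℕ) (w : FinPrime K),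
      emultiplicity w.asIdeal (d.prod fun v n => v.asIdeal ^ n) = d w := by
    intro d w
    rw [Finsupp.prod, Finset.emultiplicity_prod w.prime]
    have : ∀ v : FinPrime K, emultiplicity w.asIdeal (v.asIdeal ^ d v) =
        if v = w then (d w : ℕ∞) else 0 := by
      intro v
      split_ifs with h
      · rw [h, emultiplicity_pow_self w.ne_bot w.prime.not_isUnit]
      · rw [emultiplicity_eq_zero]
        intro hdvd
        have h1 := w.prime.dvd_of_dvd_pow hdvd
        have := v.isMaximal
        exact h (HeightOneSpectrum.ext (v.isMaximal.eq_of_le w.isPrime.ne_top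
          (Ideal.dvd_iff_le.1 h1)))
    simp only [this]
    rw [Finset.sum_ite_eq']
    split_ifs with h
    · rfl
    · rw [Finsupp.notMem_support_iff.1 h]; rfl
  intro d d' h
  ext w
  have h1 := key d w
  have h2 := key d' w
  have h' : (d.prod fun v n => v.asIdeal ^ n) = d'.prod fun v n => v.asIdeal ^ n := h
  rw [h', h2] at h1
  exact_mod_cast h1.symm

/-- The factor `N(v)⁻ˢ` attached to a prime `v`. -/
noncomputable def normFactor (s : ℝ) (v : FinPrime K) : ℝ≥0∞ :=
  (Ideal.absNorm v.asIdeal : ℝ≥0∞) ^ (-s)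

lemma two_le_absNorm (v : FinPrime K) : 2 ≤ Ideal.absNorm v.asIdeal := by
  have h0 : Ideal.absNorm v.asIdeal ≠ 0 := by
    rw [Ne, Ideal.absNorm_eq_zero_iff]; exact v.ne_bot
  have h1 : Ideal.absNorm v.asIdeal ≠ 1 := by
    rw [Ne, Ideal.absNorm_eq_one_iff]; exact v.isPrime.ne_top
  omega

lemma normFactor_le {s : ℝ} (hs : 1 < s) (v : FinPrime K) : normFactor s v ≤ 2⁻¹ := by
  rw [normFactor, ENNReal.rpow_neg, ENNReal.inv_le_inv]
  have h2 : (2 : ℝ≥0∞) ≤ Ideal.absNorm v.asIdeal := by exact_mod_cast two_le_absNorm v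
  refine h2.trans ?_
  conv_lhs => rw [← ENNReal.rpow_one (Ideal.absNorm v.asIdeal : ℝ≥0∞)]
  exact ENNReal.rpow_le_rpow_of_exponent_le (le_trans (by norm_num) h2) hs.le

lemma eulerSum_normFactor (s : ℝ) : eulerSum (normFactor (K := K) s) =
    ∑' I : {I : Ideal (𝓞 K) // I ≠ 0}, (Ideal.absNorm I.1 : ℝ≥0∞) ^ (-s) := by
  have hne : ∀ d : FinPrime K →₀ ℕ, (d.prod fun v n => v.asIdeal ^ n) ≠ 0 := fun d =>
    Finset.prod_ne_zero_iff.2 fun v _ => pow_ne_zero _ v.ne_bot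
  have hbij : Function.Bijective (fun d : FinPrime K →₀ ℕ =>
      (⟨d.prod fun v n => v.asIdeal ^ n, hne d⟩ : {I : Ideal (𝓞 K) // I ≠ 0})) := by
    refine ⟨fun d d' h => prime_prod_injective (congrArg Subtype.val h), fun I => ?_⟩
    obtain ⟨d, hd⟩ := exists_prime_prod I.2
    exact ⟨d, Subtype.ext hd⟩
  rw [eulerSum, ← (Equiv.ofBijective _ hbij).tsum_eq]
  refine tsum_congr fun d => ?_
  simp only [Equiv.ofBijective_apply, Finsupp.prod, map_prod, map_pow, Nat.cast_prod, Nat.cast_pow]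
  rw [← ENNReal.prod_rpow_of_ne_top (fun i _ => by simp)]
  refine Finset.prod_congr rfl fun v _ => ?_
  rw [normFactor, ← ENNReal.rpow_natCast, ← ENNReal.rpow_natCast, ← ENNReal.rpow_mul,
    ← ENNReal.rpow_mul, mul_comm]

lemma eulerSum_normFactor_eq_dedekindZeta {s : ℝ} (h0 : dedekindZeta K s ≠ 0) :
    eulerSum (normFactor (K := K) s) = ENNReal.ofReal ‖dedekindZeta K s‖ := by
  have hsum : LSeriesSummable (fun n ↦ (Nat.card {I : Ideal (𝓞 K) // Ideal.absNorm I = n} : ℂ)) s := by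
    by_contra h
    exact h0 (tsum_eq_zero_of_not_summable h)
  set a : ℕ → ℝ := fun n => if n = 0 then 0 else
    (Nat.card {I : Ideal (𝓞 K) // Ideal.absNorm I = n} : ℝ) * (n : ℝ) ^ (-s) with ha
  have ha0 : ∀ n, 0 ≤ a n := fun n => by simp only [ha]; split_ifs <;> positivity
  have hterm : ∀ n, LSeries.term
      (fun n ↦ (Nat.card {I : Ideal (𝓞 K) // Ideal.absNorm I = n} : ℂ)) s n = (a n : ℂ) := by
    intro n
    rw [LSeries.term_def]
    simp only [ha]
    split_ifs with h
    · simp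
    · rw [Complex.ofReal_mul, Complex.ofReal_cpow (Nat.cast_nonneg n), Complex.ofReal_neg,
        Complex.cpow_neg, div_eq_mul_inv]
      simp
  have hsa : Summable a := by
    have : Summable fun n => (a n : ℂ) := by
      refine Summable.congr (f := _) hsum fun n => ?_
      rw [hterm]
    exact_mod_cast this
  have hz : dedekindZeta K s = ((∑' n, a n : ℝ) : ℂ) := by
    rw [dedekindZeta, LSeries, Complex.ofReal_tsum]
    exact tsum_congr hterm
  rw [hz, Complex.norm_real, Real.norm_of_nonneg (tsum_nonneg ha0),
    ENNReal.ofReal_tsum_of_nonneg ha0 hsa, eulerSum_normFactor,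
    ← ENNReal.tsum_fiberwise _ (fun I : {I : Ideal (𝓞 K) // I ≠ 0} => Ideal.absNorm I.1)]
  refine tsum_congr fun n => ?_
  rcases eq_or_ne n 0 with rfl | hn
  · have : IsEmpty ((fun I : {I : Ideal (𝓞 K) // I ≠ 0} => Ideal.absNorm I.1) ⁻¹' {0}) := by
      refine ⟨fun I => I.1.2 ?_⟩
      exact Ideal.absNorm_eq_zero_iff.1 I.2
    simp [ha]
  · have hcard : Nat.card ((fun I : {I : Ideal (𝓞 K) // I ≠ 0} => Ideal.absNorm I.1) ⁻¹' {n}) =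
        Nat.card {I : Ideal (𝓞 K) // Ideal.absNorm I = n} := by
      refine Nat.card_congr ⟨fun I => ⟨I.1.1, I.2⟩, fun I => ⟨⟨I.1, ?_⟩, I.2⟩, fun _ => rfl,
        fun _ => rfl⟩
      rintro h
      have := I.2
      rw [h] at this
      exact hn (by simpa using this.symm)
    have hfin : Finite {I : Ideal (𝓞 K) // Ideal.absNorm I = n} :=
      Ideal.finite_setOfPred_absNorm_eq n
    have hfin' : Finite ((fun I : {I : Ideal (𝓞 K) // I ≠ 0} => Ideal.absNorm I.1) ⁻¹' {n}) :=
      Finite.of_injective (fun I => (⟨I.1.1, I.2⟩ : {I : Ideal (𝓞 K) // Ideal.absNorm I = n}))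
        fun I J h => Subtype.ext (Subtype.ext (congrArg (fun x => x.1) h))
    have hconst : ∀ I : ((fun I : {I : Ideal (𝓞 K) // I ≠ 0} => Ideal.absNorm I.1) ⁻¹' {n}),
        (Ideal.absNorm I.1.1 : ℝ≥0∞) ^ (-s) = (n : ℝ≥0∞) ^ (-s) := fun I => by
      have : Ideal.absNorm I.1.1 = n := I.2
      rw [this]
    rw [tsum_congr hconst, ENNReal.tsum_const]
    simp only [ha, if_neg hn]
    rw [ENNReal.ofReal_mul (Nat.cast_nonneg _), ← ENNReal.ofReal_rpow_of_pos (by positivity),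
      ENNReal.ofReal_natCast, ENNReal.ofReal_natCast, ← hcard, ENat.card_eq_coe_natCard]
    rw [ENat.toENNReal_coe]

end Zeta

section Nonsplit

open NumberField IsDedekindDomain Filter Topology
open scoped ENNReal

variable {E L : Type*} [Field E] [NumberField E] [Field L] [NumberField L] [Algebra E L]

/-- A prime that differs from its conjugate has residue degree one. -/
lemma QuadExt.absNorm_eq {u : E} (q : QuadExt E L u) {w : FinPrime L} (hw : q.conj w ≠ w) :
    Ideal.absNorm w.asIdeal = Ideal.absNorm (below E w).asIdeal := by
  classical
  have := q.rank
  have hfd : FiniteDimensional E L := Module.finite_of_finrank_pos (by omega)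
  have hrank : Module.finrank (𝓞 E) (𝓞 L) = 2 := by
    rw [← IsFractionRing.finrank_eq (𝓞 E) E (𝓞 L) L, q.rank]
  set p := (below E w).asIdeal with hp
  have hpm : p.IsMaximal := (below E w).isMaximal
  have h1 : w.asIdeal.LiesOver p := ⟨rfl⟩
  have h2 : (q.conj w).asIdeal.LiesOver p := ⟨by rw [hp, ← q.below_conj w]; rfl⟩
  have hfin : Finite (p.primesOver (𝓞 L)) := inferInstance
  let _ := Fintype.ofFinite (p.primesOver (𝓞 L))
  have hsum := Ideal.sum_ramification_inertia_eq_finrank p (𝓞 L)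
  rw [hrank] at hsum
  set f : p.primesOver (𝓞 L) → ℕ := fun P => P.1.ramificationIdx (𝓞 E) * P.1.inertiaDeg (𝓞 E)
    with hf
  set a : p.primesOver (𝓞 L) := ⟨w.asIdeal, w.isPrime, h1⟩
  set b : p.primesOver (𝓞 L) := ⟨(q.conj w).asIdeal, (q.conj w).isPrime, h2⟩
  have hab : a ≠ b := fun h => hw (HeightOneSpectrum.ext (congrArg Subtype.val h).symm)
  have hle : f a + f b ≤ 2 := by
    rw [← hsum, ← Finset.sum_pair hab (f := f)]
    exact Finset.sum_le_sum_of_subset (Finset.subset_univ _)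
  have hpos : ∀ P : p.primesOver (𝓞 L), 0 < P.1.inertiaDeg (𝓞 E) ∧
      0 < P.1.ramificationIdx (𝓞 E) := fun P => by
    have := P.2.1
    exact ⟨Ideal.inertiaDeg_pos _ _, Ideal.ramificationIdx_pos _ _⟩
  have hb : 1 ≤ f b := Nat.mul_pos (hpos b).2 (hpos b).1
  have h3 : w.asIdeal.inertiaDeg (𝓞 E) = 1 := by
    have := (hpos a).1
    have h4 : w.asIdeal.inertiaDeg (𝓞 E) ≤ f a := Nat.le_mul_of_pos_left _ (hpos a).2
    have h5 : 0 < w.asIdeal.inertiaDeg (𝓞 E) := (hpos a).1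
    omega
  have := w.isPrime
  rw [← Ideal.absNorm_pow_inertiaDeg p w.asIdeal, h3, pow_one]

lemma sq_eulerSum_le {u : Eˣ} (q : QuadExt E L u) (S : Finset (FinPrime E))
    (hS : ∀ v ∉ S, u ∈ LS v) {s : ℝ} (hs : 1 < s) :
    eulerSum (normFactor (K := E) s) ^ 2 ≤ 4 ^ S.card * eulerSum (normFactor (K := L) s) := by
  choose above habove using fun v : FinPrime E => exists_above (L := L) v
  have hconj : ∀ v ∉ S, q.conj (above v) ≠ above v := fun v hv =>
    q.conj_ne rfl (by rw [habove]; exact hS v hv)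
  set r : {v // v ∉ S} → ℝ≥0∞ := fun v => normFactor s v.1 with hr
  have h1 : eulerSum (normFactor (K := E) s) ≤ 2 ^ S.card * eulerSum r :=
    eulerSum_le_compl S fun v => normFactor_le hs v
  have h2 : eulerSum (Sum.elim r r) ≤ eulerSum (normFactor (K := L) s) := by
    refine eulerSum_le (f := Sum.elim (fun v => above v.1) fun v => q.conj (above v.1)) ?_ ?_
    · have hb : ∀ v v' : {v // v ∉ S}, below E (above v.1) = below E (above v'.1) → v = v' := by
        intro v v' h
        rw [habove, habove] at h
        exact Subtype.ext h
      rintro (v | v) (v' | v') h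
      · exact congrArg Sum.inl (hb v v' (congrArg _ h))
      · have h3 := congrArg (below E) h
        simp only [Sum.elim_inl, Sum.elim_inr, q.below_conj] at h3
        obtain rfl := hb _ _ h3
        exact absurd h.symm (hconj v.1 v.2)
      · have h3 := congrArg (below E) h
        simp only [Sum.elim_inl, Sum.elim_inr, q.below_conj] at h3
        obtain rfl := hb _ _ h3
        exact absurd h (hconj v.1 v.2)
      · have h3 := congrArg (below E) h
        simp only [Sum.elim_inr, q.below_conj] at h3
        exact congrArg Sum.inr (hb v v' h3)
    · have hn : ∀ w : FinPrime L, q.conj w ≠ w → normFactor s w = normFactor s (below E w) := by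
        intro w hw
        rw [normFactor, normFactor, q.absNorm_eq hw]
      rintro (v | v)
      · simp only [Sum.elim_inl, hr]
        rw [hn _ (hconj v.1 v.2), habove]
      · simp only [Sum.elim_inr, hr]
        rw [hn _ (q.conj_ne rfl (by rw [q.below_conj, habove]; exact hS v.1 v.2)), q.below_conj,
          habove]
  rw [eulerSum_sum] at h2
  calc eulerSum (normFactor (K := E) s) ^ 2 ≤ (2 ^ S.card * eulerSum r) ^ 2 :=
        pow_le_pow_left₀ zero_le h1 2
    _ = 4 ^ S.card * (eulerSum r * eulerSum r) := by
        rw [mul_pow, ← pow_mul, mul_comm S.card, pow_mul, sq (eulerSum r)]; norm_num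
    _ ≤ _ := mul_le_mul_right h2 _

/-- A nonsquare is a local nonsquare at a prime outside any given finite set: otherwise almost all
primes of `E` would split in `E(√u)`, giving the zeta function of `E(√u)` a double pole at `1`. -/
theorem exists_not_mem_LS {u : Eˣ} (hu : ¬IsSquare (u : E)) (S : Finset (FinPrime E)) :
    ∃ v ∉ S, u ∉ LS v := by
  by_contra! hS
  obtain ⟨L, _, _, _, ⟨q⟩⟩ := exists_quadExt hu
  have hE := (tendsto_sub_one_mul_dedekindZeta_nhdsGT E).norm
  have hL := (tendsto_sub_one_mul_dedekindZeta_nhdsGT L).norm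
  have hpos : 0 < ‖(dedekindZeta_residue E : ℂ)‖ := by
    rw [Complex.norm_real]; exact norm_pos_iff.2 (dedekindZeta_residue_ne_zero E)
  have hpos' : 0 < ‖(dedekindZeta_residue L : ℂ)‖ := by
    rw [Complex.norm_real]; exact norm_pos_iff.2 (dedekindZeta_residue_ne_zero L)
  have hid : Tendsto (fun s : ℝ => s - 1) (𝓝[>] 1) (𝓝 0) := by
    have : Tendsto (fun s : ℝ => s - 1) (𝓝 1) (𝓝 (1 - 1)) :=
      (continuous_id.sub continuous_const).tendsto 1
    rw [sub_self] at this
    exact this.mono_left nhdsWithin_le_nhds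
  have hlim := (hid.const_mul ((4 : ℝ) ^ S.card)).mul hL
  rw [mul_zero, zero_mul] at hlim
  have hle := le_of_tendsto_of_tendsto (hE.pow 2) hlim ?_
  · have : 0 < ‖(dedekindZeta_residue E : ℂ)‖ ^ 2 := by positivity
    linarith
  filter_upwards [hE.eventually (lt_mem_nhds hpos), hL.eventually (lt_mem_nhds hpos'), self_mem_nhdsWithin]
    with s h1 h2 hs
  have hs : 1 < s := hs
  have hz1 : dedekindZeta E s ≠ 0 := fun h => by simp [h] at h1
  have hz2 : dedekindZeta L s ≠ 0 := fun h => by simp [h] at h2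
  have h := sq_eulerSum_le q S hS hs
  rw [eulerSum_normFactor_eq_dedekindZeta hz1, eulerSum_normFactor_eq_dedekindZeta hz2,
    ← ENNReal.ofReal_pow (norm_nonneg _), show (4 : ℝ≥0∞) = ENNReal.ofReal 4 by simp,
    ← ENNReal.ofReal_pow (by norm_num), ← ENNReal.ofReal_mul (by positivity),
    ENNReal.ofReal_le_ofReal_iff (by positivity)] at h
  have hn : ‖((s : ℂ) - 1)‖ = s - 1 := by
    rw [← Complex.ofReal_one, ← Complex.ofReal_sub, Complex.norm_real, Real.norm_of_nonneg]
    linarith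
  rw [norm_mul, norm_mul, hn]
  calc ((s - 1) * ‖dedekindZeta E s‖) ^ 2 = (s - 1) ^ 2 * ‖dedekindZeta E s‖ ^ 2 := by ring
    _ ≤ (s - 1) ^ 2 * (4 ^ S.card * ‖dedekindZeta L s‖) :=
        mul_le_mul_of_nonneg_left h (by positivity)
    _ = _ := by ring

end Nonsplit

end FourSq

namespace FourSq

set_option maxSynthPendingDepth 3
set_option linter.unusedSectionVars false

/-! ### A local-global principle for squares of `S`-units -/

section LocalGlobal

open NumberField IsDedekindDomain

variable {E : Type*} [Field E] [NumberField E]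

lemma mem_EvenSub_of_norm {v : FinPrime E} (h2 : v.valuation E 2 = 1) {u y : Eˣ}
    (hu : u ∈ EvenSub v) (huL : u ∉ LS v) {a b : E} (hy : (y : E) = a ^ 2 - u * b ^ 2) :
    y ∈ EvenSub v := by
  obtain ⟨z, hz⟩ := exists_of_mem_EvenSub hu
  have h4 : v.valuation E 4 = 1 := by rw [val_four, h2, one_pow]
  have hub : v.valuation E (u * b ^ 2) = v.valuation E (z * b) ^ 2 := by
    rw [map_mul, map_pow, map_mul, mul_pow, hz]
  rcases lt_trichotomy (v.valuation E (a ^ 2)) (v.valuation E (u * b ^ 2)) with h | h | h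
  · refine mem_EvenSub_of_sq (y := z * b) ?_
    rw [hy, ← hub, ← Valuation.map_neg, neg_sub]
    exact Valuation.map_sub_eq_of_lt_left _ h
  · refine mem_EvenSub_of_sq (y := a) ?_
    rw [← map_pow]
    refine le_antisymm ?_ (le_of_not_gt fun hlt => ?_)
    · rw [hy]
      exact (Valuation.map_sub _ _ _).trans (max_le le_rfl h.ge)
    · have hb : b ≠ 0 := by
        rintro rfl
        rw [h] at hlt
        simp at hlt
      have hx : u * Units.mk0 b hb ^ 2 ∈ LS v := by
        rw [mem_LS]
        refine ⟨a, ?_⟩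
        rw [map_mul, h4, one_mul]
        simp only [Units.val_mul, Units.val_pow_eq_pow_val, Units.val_mk0]
        rwa [← h, ← Valuation.map_neg, neg_sub, ← hy]
      exact huL (mul_sq_mem_LS.1 hx)
  · refine mem_EvenSub_of_sq (y := a) ?_
    rw [← map_pow, hy]
    exact Valuation.map_sub_eq_of_lt_left _ h

lemma mem_LS_or_of_norm {v : FinPrime E} (h2 : v.valuation E 2 = 1) {u y : Eˣ}
    (hu : u ∉ EvenSub v) {a b : E} (hy : (y : E) = a ^ 2 - u * b ^ 2) :
    y ∈ LS v ∨ -u * y ∈ LS v := by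
  have h4 : v.valuation E 4 = 1 := by rw [val_four, h2, one_pow]
  rcases lt_trichotomy (v.valuation E (a ^ 2)) (v.valuation E (u * b ^ 2)) with h | h | h
  · right
    rw [mem_LS]
    refine ⟨u * b, ?_⟩
    have h5 : v.valuation E (y : E) = v.valuation E (u * b ^ 2) := by
      rw [hy, ← Valuation.map_neg, neg_sub]
      exact Valuation.map_sub_eq_of_lt_left _ h
    have h6 : ((-u * y : Eˣ) : E) - (u * b) ^ 2 = -(u * a ^ 2) := by
      push_cast
      rw [hy]; ring
    rw [h6, map_mul (v.valuation E) 4, h4, one_mul, Valuation.map_neg, Units.val_mul, map_mul,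
      map_mul, h5, Units.val_neg, Valuation.map_neg]
    exact mul_lt_mul_of_pos_left h (val_pos v u.ne_zero)
  · exfalso
    have hb : b ≠ 0 := by
      rintro rfl
      have ha : a = 0 := by simpa using h
      exact y.ne_zero (by rw [hy, ha]; simp)
    refine hu (mem_EvenSub_of_sq (y := a / b) ?_)
    have := val_ne_zero v hb
    rw [map_div₀, div_pow, ← map_pow, h, map_mul, map_pow]
    field_simp
  · left
    rw [mem_LS]
    refine ⟨a, ?_⟩
    have h5 : v.valuation E (y : E) = v.valuation E (a ^ 2) := by
      rw [hy]
      exact Valuation.map_sub_eq_of_lt_left _ h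
    rw [map_mul, h4, one_mul, h5, ← Valuation.map_neg, show -((y : E) - a ^ 2) = u * b ^ 2 by
      rw [hy]; ring]
    exact h

/-- At a prime where `u` has odd valuation, this subgroup contains the local norms from `E(√u)`. -/
def oddNorm (v : FinPrime E) (u : Eˣ) : Subgroup Eˣ where
  carrier := {y | y ∈ LS v ∨ -u * y ∈ LS v}
  one_mem' := Or.inl (one_mem _)
  mul_mem' := by
    rintro x y (hx | hx) (hy | hy)
    · exact Or.inl (mul_mem hx hy)
    · exact Or.inr (by convert mul_mem hx hy using 1; rw [mul_left_comm])
    · exact Or.inr (by convert mul_mem hx hy using 1; rw [mul_assoc])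
    · refine Or.inl ((mul_sq_mem_LS (y := -u)).1 ?_)
      convert mul_mem hx hy using 1
      rw [sq, mul_mul_mul_comm, mul_comm x (-u), mul_comm y (-u)]
  inv_mem' := by
    rintro x (hx | hx)
    · exact Or.inl (inv_mem hx)
    · refine Or.inr ((mul_sq_mem_LS (y := x)).1 ?_)
      rwa [mul_assoc, sq, inv_mul_cancel_left]

lemma mem_oddNorm {v : FinPrime E} {u y : Eˣ} : y ∈ oddNorm v u ↔ y ∈ LS v ∨ -u * y ∈ LS v :=
  Iff.rfl

lemma neg_mem_EvenSub {v : FinPrime E} {u : Eˣ} : -u ∈ EvenSub v ↔ u ∈ EvenSub v := by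
  have h : (-1 : Eˣ) ∈ EvenSub v := mem_EvenSub_of_val_one (by simp)
  rw [← neg_one_mul, Subgroup.mul_mem_cancel_left _ h]

/-- `T` is dual to a family of `S`-units: there are `S`-units that are local nonsquares at exactly
one prescribed member of `T`. -/
def IsDual (S T : Finset (FinPrime E)) : Prop :=
  ∀ w ∈ T, ∃ x ∈ (S : Set (FinPrime E)).unit E, x ∉ LS w ∧ ∀ i ∈ T, i ≠ w → x ∈ LS i

/-- If `T` is dual to a family of `S`-units, then an `(S ∪ T)`-unit that is a local square on `S` is
a square. Otherwise the norm index of `E(√u)` would be too small compared with the number of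
independent local conditions satisfied by norms. -/
theorem isSquare_of_mem_LS [IsTotallyComplex E] {S T : Finset (FinPrime E)}
    (h2 : ∀ v : FinPrime E, v.valuation E 2 < 1 → v ∈ S) (hS : ClassTrivial S)
    (hST : Disjoint S T) (hT : IsDual S T) {u : Eˣ}
    (hu : u ∈ ((S : Set (FinPrime E)) ∪ T).unit E) (huS : ∀ v ∈ S, u ∈ LS v) :
    IsSquare (u : E) := by
  classical
  by_contra hns
  have hunion : ((S ∪ T : Finset (FinPrime E)) : Set (FinPrime E)) = (S : Set (FinPrime E)) ∪ T :=
    Finset.coe_union S T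
  obtain ⟨N, hNU, hN, h0, hle⟩ := norm_index (S := S ∪ T)
    (fun v hv => Finset.mem_union_left _ (h2 v hv)) (hS.mono Finset.subset_union_left) hns
    (by rwa [hunion])
  set U := ((S ∪ T : Finset (FinPrime E)) : Set (FinPrime E)).unit E with hU
  have hTS : ∀ w ∈ T, w ∉ S := fun w hw hwS => Finset.disjoint_left.1 hST hwS hw
  have hv2 : ∀ w ∉ S, w.valuation E 2 = 1 := fun w hw =>
    le_antisymm (val_two_le_one w) (le_of_not_gt fun h => hw (h2 w h))
  set Q := (S ∪ T).filter (fun v => u ∉ LS v) with hQ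
  have hQT : ∀ w ∈ Q, w ∈ T ∧ u ∉ LS w := by
    intro w hw
    rw [hQ, Finset.mem_filter, Finset.mem_union] at hw
    exact ⟨hw.1.resolve_left fun h => hw.2 (huS w h), hw.2⟩
  have hle' : 2 * N.relIndex U ≤ 2 ^ Q.card := by convert hle
  set M : FinPrime E → Subgroup Eˣ := fun w => if u ∈ EvenSub w then EvenSub w else oddNorm w u
    with hM
  have hNM : N ≤ ⨅ w ∈ Q, M w := by
    intro y hy
    simp only [Subgroup.mem_iInf]
    intro w hw
    obtain ⟨a, b, hab⟩ := hN y hy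
    simp only [hM]
    have hw2 := hv2 w (hTS w (hQT w hw).1)
    split_ifs with he
    · exact mem_EvenSub_of_norm hw2 he (hQT w hw).2 hab
    · exact mem_LS_or_of_norm hw2 he hab
  have hM0 : (⨅ w ∈ Q, M w).relIndex U ≠ 0 := fun h =>
    h0 (Nat.eq_zero_of_zero_dvd (h ▸ Subgroup.relIndex_dvd_of_le_left U hNM))
  have hSU : (S : Set (FinPrime E)).unit E ≤ U := unit_mono (by rw [hunion]; exact Set.subset_union_left)
  have hunitS : ∀ {x : Eˣ}, x ∈ (S : Set (FinPrime E)).unit E → ∀ w ∈ T, w.valuation E (x : E) = 1 :=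
    fun hx w hw => mem_unit.1 hx w (by exact_mod_cast hTS w hw)
  choose! e heU heN heL using hT
  have hlow := two_pow_le_relIndex U M Q hM0 ?_
  · have := Subgroup.relIndex_le_of_le_left hNM h0
    have h3 : 0 < 2 ^ Q.card := by positivity
    omega
  intro j hj
  obtain ⟨hjT, hjL⟩ := hQT j hj
  by_cases hje : u ∈ EvenSub j
  · -- a generator of `j`, corrected by `S`-units at the primes where `u` has odd valuation
    obtain ⟨c, hcj, hc⟩ := hS.exists_generator (hTS j hjT)
    set y : Eˣ := ∏ i ∈ Q with (u ∉ EvenSub i ∧ c ∉ LS i), e i with hy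
    have hyU : y ∈ (S : Set (FinPrime E)).unit E :=
      prod_mem fun i hi => heU i (hQT i (Finset.mem_filter.1 hi).1).1
    refine ⟨c * y, mul_mem ?_ (hSU hyU), ?_, fun i hi hij => ?_⟩
    · rw [hU, mem_unit]
      intro v hv
      rw [hunion] at hv
      refine hc v (fun h => hv (Or.inl h)) fun h => hv (Or.inr ?_)
      rw [h]; exact hjT
    · simp only [hM, if_pos hje]
      refine not_mem_EvenSub_of_exp ?_
      rw [Units.val_mul, map_mul, hcj, hunitS hyU j hjT, mul_one]
    · obtain ⟨hiT, hiL⟩ := hQT i hi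
      have hci := hc i (hTS i hiT) hij
      simp only [hM]
      split_ifs with hie
      · refine mem_EvenSub_of_val_one ?_
        rw [Units.val_mul, map_mul, hci, hunitS hyU i hiT, mul_one]
      · refine Or.inl ?_
        by_cases hcL : c ∈ LS i
        · refine mul_mem hcL (prod_mem fun k hk => ?_)
          rw [Finset.mem_filter] at hk
          refine heL k (hQT k hk.1).1 i hiT ?_
          rintro rfl
          exact hk.2.2 hcL
        · have hmem : i ∈ Q.filter (fun i => u ∉ EvenSub i ∧ c ∉ LS i) :=
            Finset.mem_filter.2 ⟨hi, hie, hcL⟩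
          rw [hy, ← Finset.mul_prod_erase _ _ hmem, ← mul_assoc]
          refine mul_mem (mul_mem_LS_of_units (hv2 i (hTS i hiT)) hci (hunitS (heU i hiT) i hiT) hcL
            (heN i hiT)) (prod_mem fun k hk => ?_)
          rw [Finset.mem_erase, Finset.mem_filter] at hk
          exact heL k (hQT k hk.2.1).1 i hiT hk.1.symm
  · refine ⟨e j, hSU (heU j hjT), ?_, fun i hi hij => ?_⟩
    · simp only [hM, if_neg hje]
      rintro (h | h)
      · exact heN j hjT h
      · have h1 : e j ∈ EvenSub j := mem_EvenSub_of_val_one (hunitS (heU j hjT) j hjT)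
        have h3 := LS_le_EvenSub j h
        rw [Subgroup.mul_mem_cancel_right _ h1, neg_mem_EvenSub] at h3
        exact hje h3
    · obtain ⟨hiT, hiL⟩ := hQT i hi
      simp only [hM]
      split_ifs with hie
      · exact mem_EvenSub_of_val_one (hunitS (heU j hjT) i hiT)
      · exact Or.inl (heL j hjT i hiT hij)

lemma relIndex_le_two {G : Type*} [CommGroup G] {H U : Subgroup G}
    (h : ∀ x ∈ U, ∀ y ∈ U, x ∉ H → y ∉ H → x * y ∈ H) : H.relIndex U ≠ 0 ∧ H.relIndex U ≤ 2 := by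
  by_cases hUH : U ≤ H
  · rw [Subgroup.relIndex_eq_one.2 hUH]; omega
  · obtain ⟨a, haU, haH⟩ := SetLike.not_le_iff_exists.1 hUH
    have : H.relIndex U = 2 := by
      rw [Subgroup.relIndex, Subgroup.index_eq_two_iff]
      refine ⟨⟨a, haU⟩, fun b => ?_⟩
      simp only [Subgroup.mem_subgroupOf, Subgroup.coe_mul]
      by_cases hb : (b : G) ∈ H
      · exact Or.inr ⟨hb, fun h' => haH ((Subgroup.mul_mem_cancel_left _ hb).1 h')⟩
      · exact Or.inl ⟨h _ b.2 _ haU hb haH, hb⟩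
    omega

lemma relIndex_iInf_le_two_pow {G ι : Type*} [CommGroup G] {U : Subgroup G} {N : ι → Subgroup G}
    (T : Finset ι) (h : ∀ i ∈ T, (N i).relIndex U ≠ 0 ∧ (N i).relIndex U ≤ 2) :
    (⨅ i ∈ T, N i).relIndex U ≠ 0 ∧ (⨅ i ∈ T, N i).relIndex U ≤ 2 ^ T.card := by
  classical
  induction T using Finset.induction_on with
  | empty => simp
  | insert a T ha ih =>
    rw [Finset.iInf_insert, Finset.card_insert_of_notMem ha, pow_succ, mul_comm]
    obtain ⟨h1, h2⟩ := ih fun i hi => h i (Finset.mem_insert_of_mem hi)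
    obtain ⟨h3, h4⟩ := h a (Finset.mem_insert_self _ _)
    exact ⟨Subgroup.relIndex_inf_ne_zero h3 h1,
      (Subgroup.relIndex_inf_le).trans (Nat.mul_le_mul h4 h2)⟩

lemma mem_LS_of_mem_LS_below {L : Type*} [Field L] [NumberField L] [Algebra E L] {w : FinPrime L}
    {x : Eˣ} {x' : Lˣ} (hx' : (x' : L) = algebraMap E L x) (hx : x ∈ LS (below E w)) :
    x' ∈ LS w := by
  rw [mem_LS] at hx ⊢
  obtain ⟨y, hy⟩ := hx
  have h4 : (4 : E) * x ≠ 0 := mul_ne_zero (four_ne E) x.ne_zero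
  have h4' : (4 : L) * x' ≠ 0 := mul_ne_zero (four_ne L) x'.ne_zero
  refine ⟨algebraMap E L y, ?_⟩
  have h1 : (below E w).valuation E (((x : E) - y ^ 2) / (4 * x)) < 1 := by
    rw [map_div₀]
    exact (div_lt_one₀ (val_pos _ h4)).2 hy
  have h2 := val_below_lt_one w h1
  have h5 : algebraMap E L (4 * x) = 4 * x' := by rw [map_mul, map_ofNat, hx']
  rw [map_div₀, map_div₀, h5, div_lt_one₀ (val_pos _ h4'), map_sub (algebraMap E L), map_pow,
    ← hx'] at h2
  exact h2

/-- A nonsquare of `E` becoming a square in `E(√u)` is `u` times a square. -/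
lemma QuadExt.isSquare_or {L : Type*} [Field L] [NumberField L] [Algebra E L] {u : E}
    (q : QuadExt E L u) {x : E} (hx : IsSquare (algebraMap E L x)) :
    IsSquare x ∨ IsSquare (u * x) := by
  obtain ⟨y, hy⟩ := hx
  obtain ⟨a, b, rfl⟩ := q.gen y
  have hinj := FaithfulSMul.algebraMap_injective E L
  have h1 : algebraMap E L x = algebraMap E L a ^ 2 + algebraMap E L u * algebraMap E L b ^ 2 +
      2 * algebraMap E L a * algebraMap E L b * q.s := by
    rw [hy, ← q.s_mul]; ring
  have h2 := congrArg q.σ h1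
  simp only [map_add, map_mul, map_pow, AlgEquiv.commutes, q.map_s, map_ofNat] at h2
  have h3 : 4 * algebraMap E L a * algebraMap E L b * q.s = 0 := by
    linear_combination h2 - h1
  have h4 : a = 0 ∨ b = 0 := by
    simpa [q.s_ne_zero, four_ne L] using h3
  rcases h4 with rfl | rfl
  · refine Or.inr ⟨u * b, hinj ?_⟩
    rw [map_mul, h1]
    simp; ring
  · refine Or.inl ⟨a, hinj ?_⟩
    rw [h1]
    simp; ring

/-- There are dual sets of every size up to the maximal one among the primes at which a given
nonsquare unit `t` is a local square. -/
theorem exists_isDual {S : Finset (FinPrime E)}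
    (h2 : ∀ v : FinPrime E, v.valuation E 2 < 1 → v ∈ S) {t : Eˣ} (ht : ¬IsSquare (t : E))
    (htS : t ∈ (S : Set (FinPrime E)).unit E) (k : ℕ)
    (hk : k + 1 ≤ Fintype.card (InfinitePlace E) + S.card) :
    ∃ T : Finset (FinPrime E), Disjoint S T ∧ (∀ w ∈ T, t ∈ LS w) ∧ IsDual S T ∧ T.card = k := by
  classical
  have hv2 : ∀ w ∉ S, w.valuation E 2 = 1 := fun w hw =>
    le_antisymm (val_two_le_one w) (le_of_not_gt fun h => hw (h2 w h))
  set U := (S : Set (FinPrime E)).unit E with hU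
  have hunit : ∀ {x : Eˣ}, x ∈ U → ∀ w ∉ S, w.valuation E (x : E) = 1 :=
    fun hx w hw => mem_unit.1 hx w (by exact_mod_cast hw)
  induction k with
  | zero => exact ⟨∅, by simp, by simp, fun w hw => by simp at hw, rfl⟩
  | succ k ih =>
    obtain ⟨T, hST, htT, hT, hcard⟩ := ih (by omega)
    have hTS : ∀ w ∈ T, w ∉ S := fun w hw hwS => Finset.disjoint_left.1 hST hwS hw
    -- an `S`-unit that is a local square on `T`, outside the group generated by `t` and squares
    obtain ⟨u, huU, huT, hu, htu⟩ : ∃ u ∈ U, (∀ w ∈ T, u ∈ LS w) ∧ u ∉ sqs U ∧ t * u ∉ sqs U := by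
      by_contra! hcon
      set B := sqs U ⊔ Subgroup.zpowers t with hB
      have hK := relIndex_iInf_le_two_pow (U := U) (N := LS) T fun w hw => relIndex_le_two
        fun x hx y hy => mul_mem_LS_of_units (hv2 w (hTS w hw)) (hunit hx w (hTS w hw))
          (hunit hy w (hTS w hw))
      have hKB : (⨅ w ∈ T, LS w) ⊓ U ≤ B := by
        rintro x ⟨hxK, hxU⟩
        have hxK' : ∀ w ∈ T, x ∈ LS w := by simpa [Subgroup.mem_iInf] using hxK
        by_cases hx : x ∈ sqs U
        · exact Subgroup.mem_sup_left hx
        · have h1 := hcon x hxU hxK' hx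
          rw [← inv_mul_cancel_left t x, hB]
          exact mul_mem (inv_mem (Subgroup.mem_sup_right (Subgroup.mem_zpowers t)))
            (Subgroup.mem_sup_left h1)
      have hBU : B ≤ U := sup_le (sqs_le U) (by rwa [Subgroup.zpowers_le])
      have h3 : B.relIndex U ≤ 2 ^ k := by
        rw [← hcard]
        refine le_trans ?_ hK.2
        rw [← Subgroup.inf_relIndex_right (⨅ w ∈ T, LS w) U]
        exact Subgroup.relIndex_le_of_le_left hKB (by rw [Subgroup.inf_relIndex_right]; exact hK.1)
      have h4 : (sqs U).relIndex B ≤ 2 := by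
        refine (relIndex_le_two ?_).2
        have hmem : ∀ x ∈ B, x ∈ sqs U ∨ t * x ∈ sqs U := by
          intro x hx
          obtain ⟨y, hy, z, hz, rfl⟩ := Subgroup.mem_sup.1 hx
          obtain ⟨n, rfl⟩ := Subgroup.mem_zpowers_iff.1 hz
          have hsq : ∀ m : ℤ, t ^ (m + m) ∈ sqs U := fun m =>
            mem_sqs.2 ⟨t ^ m, zpow_mem htS m, by rw [zpow_add, sq]⟩
          rcases Int.even_or_odd n with ⟨m, rfl⟩ | ⟨m, rfl⟩
          · exact Or.inl (mul_mem hy (hsq m))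
          · refine Or.inr ?_
            have : t * (y * t ^ (2 * m + 1)) = y * t ^ ((m + 1) + (m + 1)) := by
              rw [mul_left_comm, ← zpow_one_add]; congr 2; ring
            rw [this]
            exact mul_mem hy (hsq _)
        intro x hx y hy hxs hys
        have h5 := (hmem x hx).resolve_left hxs
        have h6 := (hmem y hy).resolve_left hys
        have h7 : (t ^ 2)⁻¹ ∈ sqs U := inv_mem (mem_sqs.2 ⟨t, htS, rfl⟩)
        have : x * y = (t ^ 2)⁻¹ * (t * x * (t * y)) := by
          rw [mul_mul_mul_comm, ← sq, inv_mul_cancel_left]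
        rw [this]
        exact mul_mem h7 (mul_mem h5 h6)
      have h5 := index_sqs_unit S
      rw [← hU, ← Subgroup.relIndex_mul_relIndex (sqs U) B U le_sup_left hBU] at h5
      have h6 : 2 ^ (Fintype.card (InfinitePlace E) + S.card) ≤ 2 ^ (k + 1) := by
        rw [← h5, pow_succ, mul_comm]
        exact Nat.mul_le_mul h3 h4
      have := (Nat.pow_le_pow_iff_right (by norm_num : 1 < 2)).1 h6
      omega
    have hsqU : ∀ x ∈ U, x ∉ sqs U → ¬IsSquare (x : E) := by
      rintro x hx hxs ⟨y, hy⟩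
      have hy0 : y ≠ 0 := by rintro rfl; simp at hy
      refine hxs (mem_sqs.2 ⟨Units.mk0 y hy0, mem_unit.2 fun v hv => ?_, Units.ext ?_⟩)
      · have h3 := mem_unit.1 hx v hv
        rw [hy, map_mul, ← sq] at h3
        exact (pow_eq_one_iff.1 h3).resolve_right (by norm_num)
      · simp [hy, sq]
    -- by the theorem on nonsplit primes in `E(√t)`
    obtain ⟨w, hw, htw, huw⟩ : ∃ w ∉ S ∪ T, t ∈ LS w ∧ u ∉ LS w := by
      by_contra! hcon
      obtain ⟨L, _, _, _, ⟨q⟩⟩ := exists_quadExt ht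
      set u' : Lˣ := Units.map (algebraMap E L : E →* L) u with hu'
      have hnsq : ¬IsSquare (u' : L) := fun h =>
        (q.isSquare_or h).elim (hsqU u huU hu) (hsqU (t * u) (mul_mem htS huU) htu)
      obtain ⟨W, hW, huW⟩ := exists_not_mem_LS hnsq (above L (S ∪ T))
      rw [mem_above] at hW
      have hWS : below E W ∉ S := fun h => hW (Finset.mem_union_left _ h)
      have h1 : u ∉ LS (below E W) := fun h => huW (mem_LS_of_mem_LS_below (by simp [hu']) h)
      have h3 : t ∉ LS (below E W) := fun h => h1 (hcon _ hW h)
      have h4 := mul_mem_LS_of_units (hv2 _ hWS) (hunit huU _ hWS) (hunit htS _ hWS) h1 h3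
      refine huW ((mul_sq_mem_LS (y := Units.mk0 q.s q.s_ne_zero)).1
        (mem_LS_of_mem_LS_below (x := u * t) ?_ h4))
      simp [hu', sq, q.s_mul]
    rw [Finset.mem_union, not_or] at hw
    refine ⟨insert w T, ?_, ?_, ?_, by rw [Finset.card_insert_of_notMem hw.2, hcard]⟩
    · rw [Finset.disjoint_insert_right]
      exact ⟨hw.1, hST⟩
    · intro i hi
      rcases Finset.mem_insert.1 hi with rfl | hi
      · exact htw
      · exact htT i hi
    · intro j hj
      rcases Finset.mem_insert.1 hj with rfl | hj
      · refine ⟨u, huU, huw, fun i hi hij => huT i ?_⟩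
        exact (Finset.mem_insert.1 hi).resolve_left hij
      · obtain ⟨x, hxU, hxj, hx⟩ := hT j hj
        have hjw : w ≠ j := by rintro rfl; exact hw.2 hj
        by_cases hxw : x ∈ LS w
        · refine ⟨x, hxU, hxj, fun i hi hij => ?_⟩
          rcases Finset.mem_insert.1 hi with rfl | hi
          · exact hxw
          · exact hx i hi hij
        · refine ⟨x * u, mul_mem hxU huU, fun h => hxj ?_, fun i hi hij => ?_⟩
          · exact (Subgroup.mul_mem_cancel_right _ (huT j hj)).1 h
          · rcases Finset.mem_insert.1 hi with rfl | hi
            · exact mul_mem_LS_of_units (hv2 _ hw.1) (hunit hxU _ hw.1) (hunit huU _ hw.1) hxw huw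
            · exact mul_mem (hx i hi hij) (huT i hi)

end LocalGlobal

end FourSq

namespace FourSq

set_option maxSynthPendingDepth 3
set_option linter.unusedSectionVars false

/-! ### Representing `-2` by `x² + 3y²` over totally complex fields -/

section NegTwo

open NumberField IsDedekindDomain

variable {E : Type*} [Field E] [NumberField E]

/-- Weak approximation at finitely many primes, for integral targets. -/
lemma exists_approx (P : Finset (FinPrime E)) (a : FinPrime E → 𝓞 E) (n : FinPrime E → ℕ) :
    ∃ x : 𝓞 E, ∀ v ∈ P, v.valuation E (algebraMap (𝓞 E) E (x - a v)) < WithZero.exp (-(n v : ℤ)) := by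
  obtain ⟨x, hx⟩ := IsDedekindDomain.exists_forall_sub_mem_ideal (s := P) (fun v => v.asIdeal)
    (fun v => n v + 1) (fun v _ => v.prime)
    (fun v _ w _ hvw h => hvw (HeightOneSpectrum.ext h)) (fun v => a v.1)
  exact ⟨x, fun v hv => (mem_pow_succ_iff v _ _).1 (hx v hv)⟩

/-- The unit `3` of a number field. -/
noncomputable def three (E : Type*) [Field E] [NumberField E] : Eˣ :=
  Units.mk0 3 (by norm_num)

/-- The unit `2` of a number field. -/
noncomputable def two (E : Type*) [Field E] [NumberField E] : Eˣ :=
  Units.mk0 2 (by norm_num)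

lemma two_pow_le_index {G ι : Type*} [CommGroup G] (N : ι → Subgroup G) (T : Finset ι)
    (h0 : (⨅ i ∈ T, N i).index ≠ 0)
    (hT : ∀ j ∈ T, ∃ x, x ∉ N j ∧ ∀ i ∈ T, i ≠ j → x ∈ N i) :
    2 ^ T.card ≤ (⨅ i ∈ T, N i).index := by
  rw [← Subgroup.relIndex_top_right (⨅ i ∈ T, N i)] at h0 ⊢
  refine two_pow_le_relIndex ⊤ N T h0 fun j hj => ?_
  obtain ⟨x, h⟩ := hT j hj
  exact ⟨x, Subgroup.mem_top _, h⟩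

lemma exists_odd_at (P : Finset (FinPrime E)) {j : FinPrime E} (hj : j ∈ P) :
    ∃ x : Eˣ, x ∉ EvenSub j ∧ ∀ i ∈ P, i ≠ j → x ∈ EvenSub i := by
  classical
  obtain ⟨p, hp⟩ := j.intValuation_exists_uniformizer
  obtain ⟨x, hx⟩ := exists_approx P (fun v => if v = j then p else 1) fun _ => 1
  have hxj : j.valuation E (algebraMap (𝓞 E) E x) = WithZero.exp (-1 : ℤ) := by
    have h := hx j hj
    have hp' : j.valuation E (algebraMap (𝓞 E) E p) = WithZero.exp (-1 : ℤ) := by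
      rw [HeightOneSpectrum.valuation_of_algebraMap, hp]
    rw [if_pos rfl, (algebraMap (𝓞 E) E).map_sub] at h
    rw [← hp']
    refine Valuation.map_eq_of_sub_lt _ ?_
    rw [hp']
    simpa using h
  have hx0 : algebraMap (𝓞 E) E x ≠ 0 := by
    intro h
    rw [h, map_zero] at hxj
    exact WithZero.exp_ne_zero hxj.symm
  refine ⟨Units.mk0 _ hx0, not_mem_EvenSub_of_exp hxj, fun i hi hij =>
    mem_EvenSub_of_val_one ?_⟩
  have h := hx i hi
  rw [if_neg hij, (algebraMap (𝓞 E) E).map_sub, map_one (algebraMap (𝓞 E) E)] at h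
  rw [Units.val_mk0, ← map_one (i.valuation E)]
  refine Valuation.map_eq_of_sub_lt _ ?_
  rw [map_one]
  refine h.trans ?_
  rw [← WithZero.exp_zero, WithZero.exp_lt_exp]
  norm_num

lemma two_pow_le_index_units (P : Finset (FinPrime E)) (N : FinPrime E → Subgroup Eˣ)
    (h0 : (⨅ v ∈ P, N v).index ≠ 0)
    (hT : ∀ j ∈ P, ∃ x, x ∉ N j ∧ ∀ i ∈ P, i ≠ j → x ∈ N i) :
    2 ^ P.card ≤ (⨅ v ∈ P, N v).index :=
  two_pow_le_index N P h0 hT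

lemma two_le_index_iInf_EvenSub (P : Finset (FinPrime E)) (h0 : (⨅ v ∈ P, EvenSub v).index ≠ 0) :
    2 ^ P.card ≤ (⨅ v ∈ P, EvenSub v).index := by
  have h : ∀ j ∈ P, ∃ x, x ∉ EvenSub j ∧ ∀ i ∈ P, i ≠ j → x ∈ EvenSub i :=
    fun j hj => exists_odd_at P hj
  exact two_pow_le_index_units P EvenSub h0 h

lemma mem_EvenSub_of_add {v : FinPrime E} (h3 : three E ∈ EvenSub v) (hL : -three E ∉ LS v)
    {y : Eˣ} {a b : E} (hy : (y : E) = a ^ 2 + 3 * b ^ 2) : y ∈ EvenSub v := by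
  rcases eq_or_ne b 0 with rfl | hb
  · exact mem_EvenSub_of_sq (y := a) (by rw [hy]; simp)
  set t := a / b with ht
  have hab : a = t * b := by rw [ht]; field_simp
  have hy' : v.valuation E (y : E) = v.valuation E (t ^ 2 + 3) * v.valuation E b ^ 2 := by
    rw [hy, hab, ← map_pow, ← map_mul]; congr 1; ring
  have key : ∀ c : E, v.valuation E (t ^ 2 + 3) = v.valuation E c ^ 2 → y ∈ EvenSub v := by
    intro c hc
    refine mem_EvenSub_of_sq (y := c * b) ?_
    rw [hy', hc, map_mul, mul_pow]
  have hlt : ¬ v.valuation E (t ^ 2 + 3) < v.valuation E (4 * 3) := by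
    intro h
    refine hL (mem_LS.2 ⟨t, ?_⟩)
    have h1 : ((-three E : Eˣ) : E) - t ^ 2 = -(t ^ 2 + 3) := by
      simp [three]; ring
    have h2 : (4 : E) * ((-three E : Eˣ) : E) = -(4 * 3) := by
      simp [three]
    rwa [h1, h2, Valuation.map_neg, Valuation.map_neg]
  have h4 := val_four v
  rcases eq_or_lt_of_le (val_two_le_one v) with h2 | h2
  · rw [h2, one_pow] at h4
    rw [map_mul, h4, one_mul] at hlt
    obtain ⟨z, hz⟩ := exists_of_mem_EvenSub h3
    have hz : v.valuation E 3 = v.valuation E (z : E) ^ 2 := hz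
    rcases lt_trichotomy (v.valuation E (t ^ 2)) (v.valuation E 3) with h | h | h
    · refine key z ?_
      rw [← hz]
      exact Valuation.map_add_eq_of_lt_right _ h
    · refine key z ?_
      rw [← hz]
      refine le_antisymm ?_ (not_lt.1 hlt)
      exact (Valuation.map_add _ _ _).trans (max_le h.le le_rfl)
    · refine key t ?_
      rw [← map_pow]
      exact Valuation.map_add_eq_of_lt_left _ h
  · have h3 : v.valuation E 3 = 1 := by
      have : (3 : E) = 2 + 1 := by norm_num
      rw [this]
      have := Valuation.map_add_eq_of_lt_right (v.valuation E) (x := 2) (y := 1) (by simpa using h2)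
      rw [this, map_one]
    rw [map_mul, h3, mul_one, h4] at hlt
    have hz : t ^ 2 + 3 = (2 * (t - 1) + 2 ^ 2) + (t - 1) ^ 2 := by ring
    rcases lt_or_ge (v.valuation E 2) (v.valuation E (t - 1)) with h | h
    · have hpos : 0 < v.valuation E (t - 1) := zero_le.trans_lt h
      refine key (t - 1) ?_
      rw [hz, ← map_pow]
      refine Valuation.map_add_eq_of_lt_right _ (Valuation.map_add_lt _ ?_ ?_)
      · rw [map_mul, map_pow, sq]
        exact mul_lt_mul_of_pos_right h hpos
      · rw [map_pow, map_pow]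
        exact pow_lt_pow_left₀ h zero_le (by norm_num)
    · refine key 2 (le_antisymm ?_ (not_lt.1 hlt))
      rw [hz]
      refine (Valuation.map_add _ _ _).trans (max_le ((Valuation.map_add _ _ _).trans
        (max_le ?_ ?_)) ?_)
      · rw [map_mul, sq]
        exact mul_le_mul_right h _
      · rw [map_pow]
      · rw [map_pow]
        exact pow_le_pow_left₀ zero_le h 2

lemma mem_sqs_unit_of_isSquare {S : Set (FinPrime E)} {x : Eˣ} (hx : x ∈ S.unit E)
    (h : IsSquare (x : E)) : x ∈ sqs (S.unit E) := by
  obtain ⟨y, hy⟩ := h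
  have hy0 : y ≠ 0 := by rintro rfl; simp at hy
  refine mem_sqs.2 ⟨Units.mk0 y hy0, mem_unit.2 fun v hv => ?_, Units.ext ?_⟩
  · have h3 := mem_unit.1 hx v hv
    rw [hy, map_mul, ← sq] at h3
    exact (pow_eq_one_iff.1 h3).resolve_right (by norm_num)
  · simp [hy, sq]

lemma finite_val_lt_one (n : ℕ) (hn : n ≠ 0) : {v : FinPrime E | v.valuation E (n : E) < 1}.Finite := by
  have h0 : Ideal.span {(n : 𝓞 E)} ≠ 0 := by
    simpa [Ideal.zero_eq_bot] using hn
  refine (Ideal.finite_factors h0).subset fun v hv => ?_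
  rw [Set.mem_ofPred_eq] at hv ⊢
  rw [Ideal.dvd_span_singleton, ← v.valuation_lt_one_iff_mem (K := E)]
  simpa using hv

/-- Here `M` consists of norms from `E(√-3)` of `(S ∪ T)`-units and `N` of the elements of even order
at the primes of `P`. The index of `M` among the `(S ∪ T)`-units is at most that of `N`, so the
inclusion `M ≤ N` is an equality on units, and `-2` is such a unit in `N`. -/
theorem exists_eq_neg_two [IsTotallyComplex E] (h2 : ∀ v : FinPrime E, two E ∈ EvenSub v)
    (h3 : ∀ v : FinPrime E, three E ∈ EvenSub v) : ∃ x y : E, x ^ 2 + 3 * y ^ 2 = -2 := by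
  classical
  by_cases hsq : IsSquare ((-three E : Eˣ) : E)
  · obtain ⟨c, hc⟩ := hsq
    have hc : (-3 : E) = c * c := by simpa [three] using hc
    have hc0 : c ≠ 0 := by rintro rfl; simp at hc
    refine ⟨1 / 2, -3 / (2 * c), ?_⟩
    field_simp
    linear_combination (-9 : E) * hc
  obtain ⟨S₀, hS₀⟩ := exists_classTrivial E
  set S : Finset (FinPrime E) := S₀ ∪ (finite_val_lt_one (E := E) 6 (by norm_num)).toFinset with hSdef
  have hS : ClassTrivial S := hS₀.mono Finset.subset_union_left
  have hS6 : ∀ v : FinPrime E, v.valuation E (6 : E) < 1 → v ∈ S := fun v hv =>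
    Finset.mem_union_right _ (by simpa using hv)
  have h6 : ∀ v : FinPrime E, v.valuation E (6 : E) = v.valuation E 2 * v.valuation E 3 := fun v => by
    rw [← map_mul]; norm_num
  have hS2 : ∀ v : FinPrime E, v.valuation E 2 < 1 → v ∈ S := fun v hv => hS6 v (by
    rw [h6]; exact (mul_le_of_le_one_right' (val_three_le_one v)).trans_lt hv)
  have hS3 : ∀ v : FinPrime E, v.valuation E 3 < 1 → v ∈ S := fun v hv => hS6 v (by
    rw [h6]; exact (mul_le_of_le_one_left' (val_two_le_one v)).trans_lt hv)
  have hunit2 : ∀ {R : Set (FinPrime E)}, (S : Set (FinPrime E)) ⊆ R → -two E ∈ R.unit E :=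
    fun hR => mem_unit.2 fun v hv => by
      rw [Units.val_neg, Valuation.map_neg]
      exact le_antisymm (val_two_le_one v) (not_lt.1 fun h => hv (hR (hS2 v h)))
  have hunit3 : ∀ {R : Set (FinPrime E)}, (S : Set (FinPrime E)) ⊆ R → -three E ∈ R.unit E :=
    fun hR => mem_unit.2 fun v hv => by
      rw [Units.val_neg, Valuation.map_neg]
      exact le_antisymm (val_three_le_one v) (not_lt.1 fun h => hv (hR (hS3 v h)))
  set r := Fintype.card (InfinitePlace E) with hr
  have hr1 : 1 ≤ r := Fintype.card_pos
  obtain ⟨T, hST, hTL, hT, hTcard⟩ := exists_isDual hS2 hsq (hunit3 subset_rfl) (r + S.card - 1)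
    (by omega)
  have hunion : ((S ∪ T : Finset (FinPrime E)) : Set (FinPrime E)) = (S : Set (FinPrime E)) ∪ T :=
    Finset.coe_union S T
  have hSub : (S : Set (FinPrime E)) ⊆ ((S ∪ T : Finset (FinPrime E)) : Set (FinPrime E)) := by
    rw [hunion]; exact Set.subset_union_left
  obtain ⟨M, hMU, hM, hM0, hMle⟩ := norm_index (S := S ∪ T)
    (fun v hv => Finset.mem_union_left _ (hS2 v hv)) (hS.mono Finset.subset_union_left) hsq
    (hunit3 hSub)
  have hidx := index_sqs_unit (S ∪ T)
  set U := ((S ∪ T : Finset (FinPrime E)) : Set (FinPrime E)).unit E with hU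
  set P := (S ∪ T).filter (fun v => -three E ∉ LS v) with hP
  have hMle' : 2 * M.relIndex U ≤ 2 ^ P.card := by convert hMle
  have hPS : ∀ v ∈ P, v ∈ S ∧ -three E ∉ LS v := by
    intro v hv
    rw [hP, Finset.mem_filter, Finset.mem_union] at hv
    exact ⟨hv.1.resolve_right fun h => hv.2 (hTL v h), hv.2⟩
  set N := ⨅ v ∈ P, EvenSub v with hN
  set A := ⨅ v ∈ S, LS v with hA
  have hAN : A ≤ N := le_iInf₂ fun v hv => (iInf₂_le v (hPS v hv).1).trans (LS_le_EvenSub v)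
  have hMN : M ≤ N ⊓ U := by
    refine le_inf (le_iInf₂ fun v hv y hy => ?_) hMU
    obtain ⟨a, b, hab⟩ := hM y hy
    exact mem_EvenSub_of_add (h3 v) (hPS v hv).2 (a := a) (b := b) (by rw [hab]; simp [three])
  have hAU : A ⊓ U = sqs U := by
    refine le_antisymm ?_ (le_inf ?_ (sqs_le U))
    · rintro x ⟨hxA, hxU⟩
      have hxA' : ∀ v ∈ S, x ∈ LS v := by simpa [hA, Subgroup.mem_iInf] using hxA
      exact mem_sqs_unit_of_isSquare hxU
        (isSquare_of_mem_LS hS2 hS hST hT (by rwa [← hunion]) hxA')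
    · rintro x hx
      obtain ⟨y, -, rfl⟩ := mem_sqs.1 hx
      simp only [hA, Subgroup.mem_iInf]
      exact fun v _ => sq_mem_LS v y
  -- comparison of indices
  obtain ⟨hA0, hAle⟩ := index_iInf_LS S
  have hr2 : Module.finrank ℚ E = 2 * r := (card_infinitePlace (E := E)).symm
  rw [hr2] at hAle
  have e1 : A.relIndex N * N.index ≤ 4 ^ S.card * 2 ^ (2 * r) := by
    rw [Subgroup.relIndex_mul_index hAN]; exact hAle
  have hN0 : N.index ≠ 0 := fun h => hA0 (by rw [← Subgroup.relIndex_mul_index hAN, h, mul_zero])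
  have hAN0 : A.relIndex N ≠ 0 := fun h =>
    hA0 (by rw [← Subgroup.relIndex_mul_index hAN, h, zero_mul])
  have e2 := two_le_index_iInf_EvenSub P hN0
  have e3 : A.relIndex (N ⊓ U) ≤ A.relIndex N := Subgroup.relIndex_le_of_le_right inf_le_left hAN0
  have e4 : A.relIndex (N ⊓ U) * N.relIndex U = 2 ^ (r + (S ∪ T).card) := by
    rw [← hr, ← hAU, Subgroup.inf_relIndex_right] at hidx
    rw [← hidx, ← Subgroup.inf_relIndex_right N U, ← Subgroup.inf_relIndex_right A U,
      ← Subgroup.relIndex_mul_relIndex (A ⊓ U) (N ⊓ U) U (inf_le_inf_right _ hAN) inf_le_right]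
    congr 1
    rw [← Subgroup.inf_relIndex_right A, ← inf_assoc, inf_eq_left.2 hAN]
  have hcard : r + (S ∪ T).card + 1 = 2 * r + 2 * S.card := by
    rw [Finset.card_union_of_disjoint hST, hTcard]; omega
  have e5 : 2 ^ P.card ≤ 2 * N.relIndex U := by
    have h7 : (4 : ℕ) ^ S.card * 2 ^ (2 * r) = 2 * (A.relIndex (N ⊓ U) * N.relIndex U) := by
      rw [e4, ← pow_succ', hcard, show (4 : ℕ) = 2 ^ 2 by norm_num, ← pow_mul, ← pow_add, add_comm]
    have h8 : 0 < (4 : ℕ) ^ S.card * 2 ^ (2 * r) := by positivity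
    refine Nat.le_of_mul_le_mul_left ?_ h8
    calc 4 ^ S.card * 2 ^ (2 * r) * 2 ^ P.card
        = 2 * (A.relIndex (N ⊓ U) * N.relIndex U) * 2 ^ P.card := by rw [h7]
      _ ≤ 2 * (A.relIndex N * N.relIndex U) * N.index := by gcongr
      _ = A.relIndex N * N.index * (2 * N.relIndex U) := by ring
      _ ≤ _ := Nat.mul_le_mul_right _ e1
  have e6 := Subgroup.relIndex_mul_relIndex M (N ⊓ U) U hMN inf_le_right
  rw [Subgroup.inf_relIndex_right] at e6
  have e7 : M.relIndex (N ⊓ U) = 1 := by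
    have hN1 : 0 < N.relIndex U := Nat.pos_of_ne_zero fun h => hM0 (by rw [← e6, h, mul_zero])
    have hM1 : M.relIndex (N ⊓ U) ≠ 0 := fun h => hM0 (by rw [← e6, h, zero_mul])
    have : M.relIndex (N ⊓ U) * N.relIndex U ≤ 1 * N.relIndex U := by rw [e6]; omega
    have := Nat.le_of_mul_le_mul_right this hN1
    omega
  have hmem : -two E ∈ N ⊓ U := by
    refine ⟨?_, hunit2 hSub⟩
    have h9 : -two E ∈ N := by
      simp only [hN, Subgroup.mem_iInf]
      exact fun v _ => neg_mem_EvenSub.2 (h2 v)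
    exact h9
  obtain ⟨a, b, hab⟩ := hM _ (Subgroup.relIndex_eq_one.1 e7 hmem)
  exact ⟨a, b, by simpa [two, three] using hab.symm⟩

end NegTwo

end FourSq

namespace FourSq

set_option maxSynthPendingDepth 3
set_option linter.unusedSectionVars false

/-! ### Totally positive elements are sums of four squares -/

section Siegel

open NumberField IsDedekindDomain

/-- `x` is a sum of four squares. -/
def SumFour {R : Type*} [CommRing R] (x : R) : Prop :=
  ∃ a b c d : R, a ^ 2 + b ^ 2 + c ^ 2 + d ^ 2 = x

lemma SumFour.mul {R : Type*} [CommRing R] {x y : R} (hx : SumFour x) (hy : SumFour y) :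
    SumFour (x * y) := by
  obtain ⟨a, b, c, d, rfl⟩ := hx
  obtain ⟨e, f, g, h, rfl⟩ := hy
  exact ⟨_, _, _, _, euler_four_squares a b c d e f g h⟩

lemma SumFour.inv {K : Type*} [Field K] {x : K} (hx : SumFour x) : SumFour x⁻¹ := by
  rcases eq_or_ne x 0 with rfl | h0
  · rwa [inv_zero]
  obtain ⟨a, b, c, d, h⟩ := hx
  refine ⟨a * x⁻¹, b * x⁻¹, c * x⁻¹, d * x⁻¹, ?_⟩
  calc _ = (a ^ 2 + b ^ 2 + c ^ 2 + d ^ 2) * x⁻¹ * x⁻¹ := by ring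
    _ = x⁻¹ := by rw [h, mul_inv_cancel₀ h0, one_mul]

/-- From `x² + 3y² = -2` one gets `(x + y)² + (x - y)² + (2y)² + 2² = 0`, and a nontrivial vanishing
sum of four squares makes `-1` a sum of two squares. -/
lemma neg_one_of_neg_two {L : Type*} [Field L] [CharZero L] {x y : L}
    (h : x ^ 2 + 3 * y ^ 2 = -2) : ∃ p q : L, p ^ 2 + q ^ 2 = -1 := by
  have h0 : 1 + ((x + y) / 2) ^ 2 + ((x - y) / 2) ^ 2 + y ^ 2 = 0 := by
    field_simp
    linear_combination 2 * h
  generalize (x + y) / 2 = A at h0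
  generalize (x - y) / 2 = B at h0
  rcases eq_or_ne (B ^ 2 + y ^ 2) 0 with hB | hB
  · exact ⟨A, 0, by linear_combination h0 - hB⟩
  · refine ⟨(B + A * y) / (B ^ 2 + y ^ 2), (y - A * B) / (B ^ 2 + y ^ 2), ?_⟩
    field_simp
    linear_combination (B ^ 2 + y ^ 2) * h0

variable {E : Type*} [Field E] [NumberField E]

lemma val_two_or_three (v : FinPrime E) :
    v.valuation E (2 : E) = 1 ∨ v.valuation E (3 : E) = 1 := by
  by_contra! h
  have h2 := lt_of_le_of_ne (val_two_le_one v) h.1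
  have h3 := lt_of_le_of_ne (val_three_le_one v) h.2
  have := (v.valuation E).map_sub_lt h3 h2
  rw [show (3 - 2 : E) = 1 by norm_num, map_one] at this
  exact lt_irrefl _ this

/-- At a prime where `2` or `3` has odd order, one of `2 = 2 + 0²` and `3 = 2 + 1²` has order of the
parity opposite to that of `a`. -/
lemma exists_target {v : FinPrime E} (hv : two E ∉ EvenSub v ∨ three E ∉ EvenSub v) (a : Eˣ) :
    ∃ t : 𝓞 E, ∃ c : Eˣ, (c : E) = 2 + (algebraMap (𝓞 E) E t) ^ 2 ∧
      (c ∈ EvenSub v ↔ a ∉ EvenSub v) := by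
  have h : (two E ∈ EvenSub v ↔ three E ∉ EvenSub v) := by
    rcases val_two_or_three v with h | h
    · have h2 : two E ∈ EvenSub v := mem_EvenSub_of_val_one h
      tauto
    · have h3 : three E ∈ EvenSub v := mem_EvenSub_of_val_one h
      tauto
  by_cases h' : two E ∈ EvenSub v ↔ a ∉ EvenSub v
  · exact ⟨0, two E, by simp [two], h'⟩
  · exact ⟨1, three E, by simp [three]; norm_num, by tauto⟩

lemma mem_EvenSub_congr {v : FinPrime E} {x y : Eˣ}
    (h : v.valuation E (x : E) = v.valuation E (y : E)) : x ∈ EvenSub v ↔ y ∈ EvenSub v := by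
  have : ordv v x = ordv v y := by
    rw [val_eq_exp, val_eq_exp, WithZero.exp_inj] at h
    exact h
  rw [mem_EvenSub, mem_EvenSub, this]

/-- A number `n = 2 + x²` such that `n a` has odd order wherever `2` or `3` has odd order. -/
lemma exists_odd_mul (a : Eˣ) :
    ∃ x : E, ∀ c : Eˣ, (c : E) = 2 + x ^ 2 → ∀ v : FinPrime E,
      two E ∉ EvenSub v ∨ three E ∉ EvenSub v → c * a ∉ EvenSub v := by
  classical
  have hfin : {v : FinPrime E | two E ∉ EvenSub v ∨ three E ∉ EvenSub v}.Finite := by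
    refine ((finite_val_lt_one (E := E) 2 two_ne_zero).union
      (finite_val_lt_one 3 three_ne_zero)).subset ?_
    rintro v (h | h)
    · refine Or.inl (lt_of_le_of_ne (val_natCast_le_one v 2) fun h' => h ?_)
      exact mem_EvenSub_of_val_one (by simpa [two] using h')
    · refine Or.inr (lt_of_le_of_ne (val_natCast_le_one v 3) fun h' => h ?_)
      exact mem_EvenSub_of_val_one (by simpa [three] using h')
  have key : ∀ v : FinPrime E, ∃ (t : 𝓞 E) (m : ℕ),
      two E ∉ EvenSub v ∨ three E ∉ EvenSub v → ∃ c : Eˣ, (c : E) = 2 + (algebraMap (𝓞 E) E t) ^ 2 ∧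
      (c ∈ EvenSub v ↔ a ∉ EvenSub v) ∧ WithZero.exp (-(m : ℤ)) ≤ v.valuation E (c : E) := by
    intro v
    by_cases hv : two E ∉ EvenSub v ∨ three E ∉ EvenSub v
    · obtain ⟨t, c, hc, h⟩ := exists_target hv a
      refine ⟨t, (-ordv v c).toNat, fun _ => ⟨c, hc, h, ?_⟩⟩
      rw [val_eq_exp, WithZero.exp_le_exp]
      omega
    · exact ⟨0, 0, fun h => (hv h).elim⟩
  choose t m ht using key
  obtain ⟨x, hx⟩ := exists_approx hfin.toFinset t m
  refine ⟨algebraMap (𝓞 E) E x, fun c hc v hv => ?_⟩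
  obtain ⟨c', hc', hpar, hm⟩ := ht v hv
  have hx' := (hx v (hfin.mem_toFinset.2 hv)).trans_le hm
  have h : v.valuation E (c : E) = v.valuation E (c' : E) := by
    refine Valuation.map_eq_of_sub_lt _ ?_
    have : (c : E) - c' = algebraMap (𝓞 E) E (x - t v) * algebraMap (𝓞 E) E (x + t v) := by
      rw [hc, hc', (algebraMap (𝓞 E) E).map_sub, (algebraMap (𝓞 E) E).map_add]; ring
    rw [this, map_mul]
    refine lt_of_le_of_lt ?_ hx'
    exact mul_le_of_le_one_right' (v.valuation_le_one (K := E) _)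
  have h' := (mem_EvenSub_congr h).trans hpar
  by_cases ha : a ∈ EvenSub v
  · rw [Subgroup.mul_mem_cancel_right _ ha]; tauto
  · rw [Subgroup.mul_mem_cancel_left _ (h'.2 ha)]; exact ha

lemma map_mem_EvenSub {L : Type*} [Field L] [NumberField L] [Algebra E L] {w : FinPrime L} {x : Eˣ}
    (hx : x ∈ EvenSub (below E w)) : Units.map (algebraMap E L).toMonoidHom x ∈ EvenSub w := by
  obtain ⟨z, hz⟩ := exists_of_mem_EvenSub hx
  refine mem_EvenSub_of_sq (y := algebraMap E L z) ?_
  have h1 : (below E w).valuation E ((x : E) / z ^ 2) = 1 := by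
    rw [map_div₀, map_pow, hz, div_self]
    exact pow_ne_zero _ (val_ne_zero _ z.ne_zero)
  have h2 := val_below_eq_one w h1
  rw [map_div₀, map_div₀, map_pow, map_pow, div_eq_one_iff_eq] at h2
  · exact h2
  · exact pow_ne_zero _ (val_ne_zero _ (by simp))

/-- Siegel's theorem. With `d = (2 + x²) a` of odd order wherever `2` or `3` has odd order, the
totally complex field `E(√-d)` satisfies the hypotheses of `exists_eq_neg_two`, so `-1` is a sum of
two squares there; comparing coordinates exhibits `d` as a quotient of sums of squares in `E`. -/
theorem sumFour_of_pos {a : E} (ρ : E →+* ℝ) (ha : ∀ φ : E →+* ℝ, 0 < φ a) : SumFour a := by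
  have ha0 : a ≠ 0 := by
    rintro rfl
    simpa using ha ρ
  have hn : ∀ (φ : E →+* ℝ) (x : E), 0 < φ (2 + x ^ 2) := fun φ x => by
    rw [map_add, map_pow, map_ofNat]; positivity
  have hn0 : ∀ x : E, 2 + x ^ 2 ≠ 0 := fun x h => by
    have := hn ρ x
    rw [h, map_zero] at this
    exact lt_irrefl _ this
  obtain ⟨x, hx⟩ := exists_odd_mul (Units.mk0 a ha0)
  set n := 2 + x ^ 2 with hndef
  set d : Eˣ := Units.mk0 n (hn0 x) * Units.mk0 a ha0 with hd
  have hdE : (d : E) = n * a := rfl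
  have hodd := hx (Units.mk0 n (hn0 x)) rfl
  rw [← hd] at hodd
  have hdpos : ∀ φ : E →+* ℝ, 0 < φ (d : E) := fun φ => by
    rw [hdE, map_mul]; exact mul_pos (hn φ x) (ha φ)
  have hnsq : ¬ IsSquare (-(d : E)) := by
    rintro ⟨y, hy⟩
    have h1 := hdpos ρ
    have h2 := congrArg ρ hy
    rw [map_neg, map_mul] at h2
    nlinarith [mul_self_nonneg (ρ y)]
  have hSd : SumFour (d : E) := by
    obtain ⟨L, _, _, _, ⟨q⟩⟩ := exists_quadExt hnsq
    have htc : IsTotallyComplex L := by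
      refine ⟨fun w => InfinitePlace.not_isReal_iff_isComplex.1 fun hw => ?_⟩
      have h1 := hdpos ((InfinitePlace.embedding_of_isReal hw).comp (algebraMap E L))
      have h2 := congrArg (InfinitePlace.embedding_of_isReal hw) q.s_mul
      rw [map_neg, map_neg, map_mul] at h2
      rw [RingHom.comp_apply] at h1
      nlinarith [mul_self_nonneg (InfinitePlace.embedding_of_isReal hw q.s)]
    have hdw : ∀ w : FinPrime L, Units.map (algebraMap E L).toMonoidHom d ∈ EvenSub w := by
      intro w
      rw [← neg_mem_EvenSub]
      refine mem_EvenSub_of_sq (y := q.s) ?_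
      rw [← map_pow, pow_two, q.s_mul, map_neg]
      rfl
    have main : ∀ (c : Eˣ), (∀ v, c ∉ EvenSub v → d ∉ EvenSub v) → ∀ w : FinPrime L,
        Units.map (algebraMap E L).toMonoidHom c ∈ EvenSub w := by
      intro c hc w
      by_cases h : c ∈ EvenSub (below E w)
      · exact map_mem_EvenSub h
      · have := map_mem_EvenSub (mul_mem_EvenSub (hc _ h) h)
        rw [map_mul, Subgroup.mul_mem_cancel_left _ (hdw w)] at this
        exact this
    have e2 : two L = Units.map (algebraMap E L).toMonoidHom (two E) := by
      ext; exact (map_ofNat (algebraMap E L) 2).symm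
    have e3 : three L = Units.map (algebraMap E L).toMonoidHom (three E) := by
      ext; exact (map_ofNat (algebraMap E L) 3).symm
    obtain ⟨X, Y, hXY⟩ := exists_eq_neg_two (E := L)
      (fun w => e2 ▸ main _ (fun v h => hodd v (Or.inl h)) w)
      (fun w => e3 ▸ main _ (fun v h => hodd v (Or.inr h)) w)
    obtain ⟨p, r, hpr⟩ := neg_one_of_neg_two hXY
    obtain ⟨p0, p1, rfl⟩ := q.gen p
    obtain ⟨r0, r1, rfl⟩ := q.gen r
    set i := algebraMap E L
    have hs := q.s_mul
    have hlin : i (p0 ^ 2 + r0 ^ 2 + 1 - d * (p1 ^ 2 + r1 ^ 2)) + i (2 * (p0 * p1 + r0 * r1)) * q.s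
        = 0 := by
      simp only [map_sub, map_add, map_mul, map_pow, map_one, map_ofNat, map_neg] at hs ⊢
      linear_combination hpr - (i p1 ^ 2 + i r1 ^ 2) * hs
    have h2 : 2 * (p0 * p1 + r0 * r1) = 0 := by
      by_contra hne
      apply hnsq
      set A := p0 ^ 2 + r0 ^ 2 + 1 - d * (p1 ^ 2 + r1 ^ 2)
      set B := 2 * (p0 * p1 + r0 * r1)
      refine ⟨A / B, i.injective ?_⟩
      have hB : i B ≠ 0 := by simpa using hne
      rw [← hs, map_mul, map_div₀]
      have : q.s = - (i A / i B) := by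
        field_simp
        linear_combination hlin
      rw [this]; ring
    have h1 : p0 ^ 2 + r0 ^ 2 + 1 = d * (p1 ^ 2 + r1 ^ 2) := by
      rw [h2, map_zero, zero_mul, add_zero] at hlin
      exact sub_eq_zero.1 ((map_eq_zero i).1 hlin)
    have hne : p1 ^ 2 + r1 ^ 2 ≠ 0 := by
      intro h
      rw [h, mul_zero] at h1
      have := congrArg ρ h1
      simp only [map_add, map_pow, map_one, map_zero] at this
      nlinarith [sq_nonneg (ρ p0), sq_nonneg (ρ r0)]
    have hdq : (d : E) = (p0 ^ 2 + r0 ^ 2 + 1) * (p1 ^ 2 + r1 ^ 2)⁻¹ := by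
      rw [h1, mul_assoc, mul_inv_cancel₀ hne, mul_one]
    rw [hdq]
    exact SumFour.mul ⟨p0, r0, 1, 0, by ring⟩ (SumFour.inv ⟨p1, r1, 0, 0, by ring⟩)
  have hna : a = d * n⁻¹ := by
    rw [hdE, mul_comm n, mul_assoc, mul_inv_cancel₀ (hn0 x), mul_one]
  rw [hna]
  exact hSd.mul (SumFour.inv ⟨1, 1, x, 0, by rw [hndef]; ring⟩)

end Siegel

end FourSq

namespace FourSq

set_option maxSynthPendingDepth 3
set_option linter.unusedSectionVars false

/-! ### Positive trace forms -/

section TraceForm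

open NumberField InfinitePlace Filter Topology

variable {F : Type*} [Field F] [NumberField F]

/-- Weak approximation at the infinite places, with one target `t` and all others `0`. -/
lemma exists_near (t : F) (v₀ : InfinitePlace F) {ε : ℝ} (hε : 0 < ε) :
    ∃ x : F, v₀ (x - t) < ε ∧ ∀ v, v ≠ v₀ → v x < ε := by
  classical
  obtain ⟨x, hx⟩ := (denseRange_algebraMap_pi F).exists_dist_lt
    (fun v => algebraMap F (WithAbs v.1) (if v = v₀ then t else 0)) hε
  rw [dist_pi_lt_iff hε] at hx
  have h : ∀ v : InfinitePlace F, v (x - if v = v₀ then t else 0) < ε := by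
    intro v
    have := hx v
    rw [dist_comm, dist_eq_norm, Pi.algebraMap_apply, ← map_sub] at this
    exact this
  refine ⟨x, by simpa using h v₀, fun v hv => by simpa [hv] using h v⟩

lemma re_conj_mul (φ ψ : F →+* ℂ) (h : mk φ = mk ψ) (x : F) : (φ x).re = (ψ x).re := by
  rcases mk_eq_iff.1 h with rfl | rfl
  · rfl
  · simp [ComplexEmbedding.conjugate_coe_eq]

/-- If `Tr(c x²) > 0` for all nonzero `x`, no place admits `t` with `Re φ(c t²) < 0`: otherwise
approximate `t` at that place and `0` at the others. -/
lemma re_nonneg_of_trace {c : F} (h : ∀ x : F, x ≠ 0 → 0 < Algebra.trace ℚ F (c * x ^ 2))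
    (φ₀ : F →+* ℂ) (t : F) : 0 ≤ (φ₀ (c * t ^ 2)).re := by
  classical
  by_contra! hneg
  choose x hx0 hx using fun n : ℕ => exists_near t (mk φ₀) (Nat.one_div_pos_of_nat (n := n))
  let y : (F →+* ℂ) → ℂ := fun φ => if mk φ = mk φ₀ then φ t else 0
  have hlim : ∀ φ : F →+* ℂ, Tendsto (fun n => φ (x n)) atTop (𝓝 (y φ)) := by
    intro φ
    rw [tendsto_iff_norm_sub_tendsto_zero]
    refine squeeze_zero (fun _ => norm_nonneg _) (fun n => ?_)
      tendsto_one_div_add_atTop_nhds_zero_nat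
    by_cases hφ : mk φ = mk φ₀
    · have := hx0 n
      rw [← hφ, InfinitePlace.apply, map_sub] at this
      rw [show y φ = φ t from if_pos hφ]
      exact this.le
    · have := hx n _ hφ
      rw [InfinitePlace.apply] at this
      rw [show y φ = 0 from if_neg hφ, sub_zero]
      exact this.le
  have hlim2 : Tendsto (fun n => ∑ φ : F →+* ℂ, (φ (c * x n ^ 2)).re) atTop
      (𝓝 (∑ φ : F →+* ℂ, (φ c * y φ ^ 2).re)) := by
    refine tendsto_finsetSum _ fun φ _ => ?_
    simp only [map_mul, map_pow]
    exact (Complex.continuous_re.tendsto _).comp (((hlim φ).pow 2).const_mul _)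
  have hpos : ∀ n, 0 ≤ ∑ φ : F →+* ℂ, (φ (c * x n ^ 2)).re := by
    intro n
    have h1 : (0 : ℚ) ≤ Algebra.trace ℚ F (c * x n ^ 2) := by
      rcases eq_or_ne (x n) 0 with h0 | h0
      · simp [h0]
      · exact (h _ h0).le
    have h2 := congrArg Complex.re (trace_eq_sum_embeddings (K := ℚ) (L := F) ℂ (x := c * x n ^ 2))
    rw [Complex.re_sum] at h2
    have h3 : ∑ φ : F →+* ℂ, (φ (c * x n ^ 2)).re = ∑ σ : F →ₐ[ℚ] ℂ, (σ (c * x n ^ 2)).re :=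
      Fintype.sum_equiv (RingHom.equivRatAlgHom F ℂ) _ _ fun φ => rfl
    rw [h3, ← h2]
    simpa using h1
  refine absurd (ge_of_tendsto' hlim2 hpos) (not_le.2 ?_)
  have hterm : ∀ φ : F →+* ℂ, (φ c * y φ ^ 2).re = if mk φ = mk φ₀ then (φ₀ (c * t ^ 2)).re else 0 := by
    intro φ
    by_cases hφ : mk φ = mk φ₀
    · simp only [y, if_pos hφ]
      rw [← re_conj_mul φ φ₀ hφ, map_mul, map_pow]
    · rw [show y φ = 0 from if_neg hφ, if_neg hφ]; simp
  refine Finset.sum_neg' (fun φ _ => ?_) ⟨φ₀, Finset.mem_univ _, ?_⟩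
  · rw [hterm]; split_ifs
    exacts [hneg.le, le_rfl]
  · rw [hterm, if_pos rfl]; exact hneg

/-- A trace form `Tr(c x²)` is positive definite only if `F` is totally real and `c` is totally
positive. At a nonreal `φ` with `φ(θ) ∉ ℝ`, the form `Re φ(c (r + θ)²)` in `r` would have
nonpositive discriminant, which fails. -/
lemma isReal_of_trace {c : F} (h : ∀ x : F, x ≠ 0 → 0 < Algebra.trace ℚ F (c * x ^ 2))
    (φ : F →+* ℂ) : ComplexEmbedding.IsReal φ ∧ 0 < (φ c).re := by
  have hc : c ≠ 0 := by
    rintro rfl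
    simpa using h 1 one_ne_zero
  have hφc : φ c ≠ 0 := by simpa using hc
  have hre := re_nonneg_of_trace h φ
  have hreal : ComplexEmbedding.IsReal φ := by
    rw [ComplexEmbedding.isReal_iff]
    by_contra hne
    obtain ⟨θ, hθ⟩ : ∃ θ, (φ θ).im ≠ 0 := by
      by_contra! h0
      exact hne (RingHom.ext fun x => by
        rw [ComplexEmbedding.conjugate_coe_eq]; exact Complex.conj_eq_iff_im.2 (h0 x))
    have hq : ∀ r : ℝ, 0 ≤ (φ c).re * (r * r) + 2 * (φ (c * θ)).re * r + (φ (c * θ ^ 2)).re := by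
      have hcont : Continuous fun r : ℝ =>
        (φ c).re * (r * r) + 2 * (φ (c * θ)).re * r + (φ (c * θ ^ 2)).re := by fun_prop
      intro r
      refine Rat.denseRange_cast.induction_on (p := fun r : ℝ =>
        0 ≤ (φ c).re * (r * r) + 2 * (φ (c * θ)).re * r + (φ (c * θ ^ 2)).re) r
        (isClosed_le continuous_const hcont) fun s => ?_
      refine (hre (s + θ)).trans_eq ?_
      simp only [map_mul, map_add, map_ratCast, Complex.mul_re, Complex.mul_im, pow_two,
        Complex.add_re, Complex.add_im, Complex.ratCast_re, Complex.ratCast_im]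
      ring
    have hd := discrim_le_zero hq
    simp only [discrim, map_mul, Complex.mul_re, Complex.mul_im, pow_two] at hd
    have h1 : 0 < ((φ c).re ^ 2 + (φ c).im ^ 2) * (φ θ).im ^ 2 := by
      have h2 : 0 < (φ θ).im ^ 2 := by positivity
      have h3 : 0 < (φ c).re ^ 2 + (φ c).im ^ 2 := by
        have := Complex.normSq_pos.2 hφc
        rw [Complex.normSq_apply] at this
        nlinarith
      positivity
    nlinarith
  refine ⟨hreal, ?_⟩
  have h1 := hre 1
  rw [one_pow, mul_one] at h1
  refine lt_of_le_of_ne h1 fun h0 => hφc ?_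
  have := congrArg (fun ψ : F →+* ℂ => ψ c) (ComplexEmbedding.isReal_iff.1 hreal)
  simp only [ComplexEmbedding.conjugate_coe_eq] at this
  exact Complex.ext h0.symm (Complex.conj_eq_iff_im.1 this)

/-- Every linear functional is a scaled trace, so two positive functionals `T(x²)`, `T(αx²)` make
`F` totally real and `α` totally positive, hence a sum of four squares. -/
lemma sumFour_of_functional (T : F →ₗ[ℚ] ℚ) (α : F) (h1 : ∀ x : F, x ≠ 0 → 0 < T (x ^ 2))
    (hα : ∀ x : F, x ≠ 0 → 0 < T (α * x ^ 2)) : SumFour α := by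
  obtain ⟨c, hc⟩ := ((Algebra.traceForm ℚ F).toDual (traceForm_nondegenerate ℚ F)).surjective T
  have hT : ∀ y, T y = Algebra.trace ℚ F (c * y) := fun y => by
    rw [← hc]; rfl
  have k1 : ∀ x : F, x ≠ 0 → 0 < Algebra.trace ℚ F (c * x ^ 2) := fun x hx => by
    rw [← hT]; exact h1 x hx
  have k2 : ∀ x : F, x ≠ 0 → 0 < Algebra.trace ℚ F (c * α * x ^ 2) := fun x hx => by
    rw [mul_assoc, ← hT]; exact hα x hx
  obtain ⟨φ₀⟩ : Nonempty (F →+* ℂ) := inferInstance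
  refine sumFour_of_pos (isReal_of_trace k1 φ₀).1.embedding fun ρ => ?_
  have p1 := (isReal_of_trace k1 (Complex.ofRealHom.comp ρ)).2
  have p2 := (isReal_of_trace k2 (Complex.ofRealHom.comp ρ)).2
  simp only [RingHom.comp_apply, Complex.ofRealHom_eq_coe, Complex.ofReal_re, map_mul] at p1 p2
  rw [← Complex.ofReal_mul, Complex.ofReal_re] at p2
  exact pos_of_mul_pos_right p2 p1.le

end TraceForm

end FourSq

namespace FourSq

set_option maxSynthPendingDepth 3
set_option linter.unusedSectionVars false

/-! ### Hermitian forms over division algebras -/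

section Hermitian

open MulOpposite

lemma algTraceQ_zero (A : Type*) [Ring A] [Algebra ℚ A] : algTraceQ A 0 = 0 := by
  simp [algTraceQ]

universe uD

/-- A symmetric element generates a number field whose elements are all symmetric. -/
lemma exists_numberField {D : Type uD} [DivisionRing D] [CharZero D] [FiniteDimensional ℚ D]
    {st : D → D} (hst : IsInvolutionQ D st) {a : D} (ha : st a = a) :
    ∃ (F : Type uD) (_ : Field F) (_ : NumberField F) (j : F →+* D) (α : F),
      j α = a ∧ ∀ x, st (j x) = j x := by
  have hcomm : ∀ x ∈ ({a} : Set D), ∀ y ∈ ({a} : Set D), x * y = y * x := by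
    rintro x rfl y rfl; rfl
  have hmc := Algebra.isMulCommutative_adjoin ℚ hcomm
  let S := Algebra.adjoin ℚ ({a} : Set D)
  have hfix : ∀ x ∈ S, st x = x := by
    intro x hx
    induction hx using Algebra.adjoin_induction with
    | mem x hx => rw [Set.mem_singleton_iff.1 hx, ha]
    | algebraMap r => exact hst.2.2.2 r
    | add x y hx hy h1 h2 => rw [hst.1, h1, h2]
    | mul x y hx hy h1 h2 =>
      rw [hst.2.1, h1, h2]
      exact congrArg Subtype.val (hmc.is_comm.comm (⟨y, hy⟩ : S) ⟨x, hx⟩)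
  let F : Field S := fieldOfFiniteDimensional ℚ S
  have hchar : CharZero S := inferInstance
  have hfin : FiniteDimensional ℚ S := inferInstance
  have hnf : @NumberField S F := by
    refine @NumberField.mk S F hchar ?_
    convert hfin
    exact Subsingleton.elim _ _
  exact ⟨S, F, hnf, S.subtype, ⟨a, Algebra.subset_adjoin rfl⟩, rfl, fun x => hfix _ x.2⟩

/-- The values of a positive definite form are sums of four squares in a field of symmetric
elements. The columns of `N` are those of the matrix of a quaternion of norm `a⁻¹`. -/
lemma exists_matrix {D : Type uD} [DivisionRing D] [CharZero D] [FiniteDimensional ℚ D]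
    {st : D → D} (hst : IsPositiveInvolutionQ D st) {a : D} (ha : st a = a)
    (hpos : ∀ d : D, d ≠ 0 → 0 < algTraceQ D (st d * a * d)) :
    ∃ N : Fin 4 → Fin 4 → D, ∀ k k', ∑ l, st (N l k) * a * N l k' = if k = k' then 1 else 0 := by
  obtain ⟨F, _, _, j, α, rfl, hj⟩ := exists_numberField hst.1 ha
  let T : F →ₗ[ℚ] ℚ :=
    (LinearMap.trace ℚ D ∘ₗ LinearMap.mul ℚ D) ∘ₗ (j : F →+ D).toRatLinearMap
  have hT : ∀ x, T x = algTraceQ D (j x) := fun x => rfl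
  have hα : SumFour α := by
    refine sumFour_of_functional T α (fun x hx => ?_) fun x hx => ?_
    · have := hst.2 (j x) (by simpa using hx)
      rwa [hj, ← pow_two, ← map_pow, ← hT] at this
    · have := hpos (j x) (by simpa using hx)
      rwa [hj, ← map_mul, ← map_mul, ← hT, mul_comm x, mul_assoc, ← pow_two] at this
  have hα0 : α ≠ 0 := by
    rintro rfl
    simpa [algTraceQ_zero] using hpos 1 one_ne_zero
  obtain ⟨p, q, r, s, h⟩ := hα.inv
  let M : Fin 4 → Fin 4 → F := ![![p, -q, -r, -s], ![q, p, -s, r], ![r, s, p, -q], ![s, -r, q, p]]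
  have hM : ∀ k k', ∑ l, M l k * M l k' = if k = k' then α⁻¹ else 0 := by
    intro k k'
    rw [← h]
    fin_cases k <;> fin_cases k' <;> simp [M, Fin.sum_univ_four] <;> ring
  refine ⟨fun l k => j (M l k), fun k k' => ?_⟩
  have : ∀ l, st (j (M l k)) * j α * j (M l k') = j (α * (M l k * M l k')) := fun l => by
    rw [hj, ← map_mul, ← map_mul]; congr 1; ring
  simp only [this]
  rw [← map_sum, ← Finset.mul_sum, hM]
  split_ifs <;> simp [hα0]

variable {D : Type uD} [DivisionRing D] [CharZero D] {st : D → D}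
  {V : Type*} [AddCommGroup V] [Module Dᵐᵒᵖ V] {ψ : V → V → D}

lemma zero_left (h : IsHermitianForm D V st ψ) (w : V) : ψ 0 w = 0 := by
  simpa using h.1 0 0 w

lemma zero_right (h : IsHermitianForm D V st ψ) (v : V) : ψ v 0 = 0 := by
  simpa using h.2.1 v 0 0

lemma sum_left (h : IsHermitianForm D V st ψ) {ι : Type*} (s : Finset ι) (f : ι → V) (w : V) :
    ψ (∑ i ∈ s, f i) w = ∑ i ∈ s, ψ (f i) w :=
  map_sum (AddMonoidHom.mk' (fun v => ψ v w) fun v v' => h.1 v v' w) f s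

lemma sum_right (h : IsHermitianForm D V st ψ) {ι : Type*} (s : Finset ι) (f : ι → V) (v : V) :
    ψ v (∑ i ∈ s, f i) = ∑ i ∈ s, ψ v (f i) :=
  map_sum (AddMonoidHom.mk' (fun w => ψ v w) fun w w' => h.2.1 v w w') f s

/-- Nonisotropic pairwise orthogonal vectors are linearly independent. -/
lemma linearIndependent_of_orthogonal (h : IsHermitianForm D V st ψ) {ι : Type*} [Fintype ι]
    {e : ι → V} (h0 : ∀ i, ψ (e i) (e i) ≠ 0) (he : ∀ i j, i ≠ j → ψ (e i) (e j) = 0) :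
    LinearIndependent Dᵐᵒᵖ e := by
  classical
  rw [Fintype.linearIndependent_iff]
  intro g hg i
  have h1 := congrArg (ψ (e i)) hg
  rw [zero_right h, sum_right h, Finset.sum_eq_single i] at h1
  · rw [← op_unop (g i), h.2.2.2.1] at h1
    rw [← op_unop (g i), (mul_eq_zero.1 h1).resolve_left (h0 i), op_zero]
  · intro j _ hj
    rw [← op_unop (g j), h.2.2.2.1, he i j hj.symm, zero_mul]
  · simp

lemma ne_zero_of_posDef (h : IsPosDefHermitianForm D V st ψ) {v : V} (hv : v ≠ 0) : ψ v v ≠ 0 := by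
  intro h0
  have := h.2 v hv
  rw [h0, algTraceQ_zero] at this
  exact lt_irrefl _ this

/-- Gram–Schmidt. -/
lemma exists_orthogonal [Module.Finite Dᵐᵒᵖ V] (hst : IsInvolutionQ D st)
    (h : IsPosDefHermitianForm D V st ψ) :
    ∀ k, k ≤ Module.finrank Dᵐᵒᵖ V → ∃ e : Fin k → V, (∀ i, e i ≠ 0) ∧
      ∀ i j, i ≠ j → ψ (e i) (e j) = 0 := by
  have st0 : st 0 = 0 := by simpa using hst.1 0 0
  intro k
  induction k with
  | zero => exact fun _ => ⟨Fin.elim0, fun i => i.elim0, fun i => i.elim0⟩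
  | succ k ih =>
    intro hk
    obtain ⟨e, he0, he⟩ := ih (by omega)
    obtain ⟨v, hv⟩ : ∃ v, v ∉ Submodule.span Dᵐᵒᵖ (Set.range e) := by
      by_contra! hall
      have h1 : Submodule.span Dᵐᵒᵖ (Set.range e) = ⊤ := by
        ext x; simp [hall x]
      have h2 := finrank_range_le_card (R := Dᵐᵒᵖ) e
      rw [Set.finrank, h1, finrank_top, Fintype.card_fin] at h2
      omega
    set w := v - ∑ i, op ((ψ (e i) (e i))⁻¹ * ψ (e i) v) • e i with hw
    have hw0 : w ≠ 0 := by
      intro h0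
      refine hv ?_
      rw [sub_eq_zero.1 h0]
      exact Submodule.sum_mem _ fun i _ => Submodule.smul_mem _ _ (Submodule.subset_span ⟨i, rfl⟩)
    have horth : ∀ i, ψ (e i) w = 0 := by
      intro i
      have h1 : ψ (e i) v = ψ (e i) w + ψ (e i) (∑ i, op ((ψ (e i) (e i))⁻¹ * ψ (e i) v) • e i) := by
        rw [← h.1.2.1, hw, sub_add_cancel]
      rw [sum_right h.1, Finset.sum_eq_single i] at h1
      · rw [h.1.2.2.2.1, mul_inv_cancel_left₀ (ne_zero_of_posDef h (he0 i))] at h1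
        simpa using h1
      · intro l _ hl
        rw [h.1.2.2.2.1, he i l hl.symm, zero_mul]
      · simp
    refine ⟨Fin.cons w e, fun i => ?_, fun i l hil => ?_⟩
    · refine Fin.cases ?_ (fun i => ?_) i
      · exact hw0
      · exact he0 i
    · induction i using Fin.cases with
      | zero =>
        induction l using Fin.cases with
        | zero => exact absurd rfl hil
        | succ l => rw [Fin.cons_zero, Fin.cons_succ, h.1.2.2.2.2 (e l) w, horth, st0]
      | succ i =>
        induction l using Fin.cases with
        | zero => rw [Fin.cons_zero, Fin.cons_succ, horth]
        | succ l =>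
          rw [Fin.cons_succ, Fin.cons_succ]
          exact he i l fun h' => hil (by rw [h'])

/-- The form `ψ^{⊕4}`. -/
def fourth (ψ : V → V → D) (x y : Fin 4 → V) : D := ∑ i, ψ (x i) (y i)

lemma isHermitianForm_fourth (hst : IsInvolutionQ D st) (h : IsHermitianForm D V st ψ) :
    IsHermitianForm D (Fin 4 → V) st (fourth ψ) := by
  obtain ⟨h1, h2, h3, h4, h5⟩ := h
  refine ⟨fun v v' w => ?_, fun v w w' => ?_, fun a v w => ?_, fun b v w => ?_, fun v w => ?_⟩
  · simp [fourth, h1, Finset.sum_add_distrib]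
  · simp [fourth, h2, Finset.sum_add_distrib]
  · simp [fourth, h3, Finset.mul_sum]
  · simp [fourth, h4, Finset.sum_mul]
  · have : st (fourth ψ v w) = ∑ i, st (ψ (v i) (w i)) :=
      map_sum (AddMonoidHom.mk' st hst.1) _ _
    rw [this]
    exact Finset.sum_congr rfl fun i _ => h5 _ _

/-- The fourth power of a positive definite form has an orthonormal basis: multiply each vector of
an orthogonal basis by the columns of `exists_matrix`. -/
lemma exists_orthonormal [FiniteDimensional ℚ D] [Nontrivial V] [Module.Finite Dᵐᵒᵖ V]
    (hst : IsPositiveInvolutionQ D st) (h : IsPosDefHermitianForm D V st ψ) :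
    ∃ b : Module.Basis (Fin (Module.finrank Dᵐᵒᵖ V) × Fin 4) Dᵐᵒᵖ (Fin 4 → V),
      ∀ i j, fourth ψ (b i) (b j) = if i = j then 1 else 0 := by
  obtain ⟨e, he0, he⟩ := exists_orthogonal hst.1 h _ le_rfl
  have hN : ∀ i, ∃ N : Fin 4 → Fin 4 → D, ∀ k k',
      ∑ l, st (N l k) * ψ (e i) (e i) * N l k' = if k = k' then 1 else 0 := fun i =>
    exists_matrix hst (h.1.2.2.2.2 _ _).symm fun d hd => by
      rw [← h.1.2.2.1, ← h.1.2.2.2.1]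
      exact h.2 _ (smul_ne_zero ((op_ne_zero_iff d).2 hd) (he0 i))
  choose N hN using hN
  let u : Fin (Module.finrank Dᵐᵒᵖ V) × Fin 4 → Fin 4 → V := fun i l => op (N i.1 l i.2) • e i.1
  have hu : ∀ i j, fourth ψ (u i) (u j) = if i = j then 1 else 0 := by
    rintro ⟨i, k⟩ ⟨i', k'⟩
    simp only [fourth, u, h.1.2.2.1, h.1.2.2.2.1]
    by_cases hi : i = i'
    · subst hi
      simp only [Prod.mk.injEq, true_and]
      rw [← hN i k k']
      exact Finset.sum_congr rfl fun l _ => by rw [mul_assoc]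
    · simp [he i i' hi, hi]
  have hne : Nonempty (Fin (Module.finrank Dᵐᵒᵖ V) × Fin 4) := by
    have : 0 < Module.finrank Dᵐᵒᵖ V := Module.finrank_pos
    exact ⟨⟨⟨0, this⟩, 0⟩⟩
  have hli : LinearIndependent Dᵐᵒᵖ u :=
    linearIndependent_of_orthogonal (isHermitianForm_fourth hst.1 h.1)
      (fun i => by rw [hu, if_pos rfl]; exact one_ne_zero) fun i j hij => by rw [hu, if_neg hij]
  refine ⟨basisOfLinearIndependentOfCardEqFinrank hli ?_, fun i j => ?_⟩
  · rw [Module.finrank_pi_fintype]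
    simp [mul_comm]
  · simpa using hu i j

/-- A Hermitian form is determined by its Gram matrix on a basis. -/
lemma eq_of_basis {W W' ι : Type*} [AddCommGroup W] [Module Dᵐᵒᵖ W] [AddCommGroup W']
    [Module Dᵐᵒᵖ W'] [Fintype ι] {Φ : W → W → D} {Φ' : W' → W' → D}
    (h : IsHermitianForm D W st Φ) (h' : IsHermitianForm D W' st Φ')
    (b : Module.Basis ι Dᵐᵒᵖ W) (f : W →ₗ[Dᵐᵒᵖ] W')
    (hb : ∀ i j, Φ' (f (b i)) (f (b j)) = Φ (b i) (b j)) (x y : W) : Φ' (f x) (f y) = Φ x y := by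
  conv_lhs => rw [← b.sum_repr x, ← b.sum_repr y]
  conv_rhs => rw [← b.sum_repr x, ← b.sum_repr y]
  simp only [map_sum, map_smul, sum_left h, sum_left h', sum_right h, sum_right h']
  refine Finset.sum_congr rfl fun i _ => Finset.sum_congr rfl fun j _ => ?_
  rw [← op_unop (b.repr x i), ← op_unop (b.repr y j), h.2.2.1, h.2.2.2.1, h'.2.2.1, h'.2.2.2.1, hb]

end Hermitian

end FourSq

/-- **Fourth powers of positive definite Hermitian forms over a division algebra with
positive involution are isometric.** -/
theorem fourth_power_hermitian_form
    (D : Type*) [DivisionRing D] [CharZero D] [FiniteDimensional ℚ D]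
    (st : D → D) (hst : IsPositiveInvolutionQ D st)
    (V : Type*) [AddCommGroup V] [Module Dᵐᵒᵖ V] [Nontrivial V] [Module.Finite Dᵐᵒᵖ V]
    (ψ₁ ψ₂ : V → V → D)
    (h₁ : IsPosDefHermitianForm D V st ψ₁)
    (h₂ : IsPosDefHermitianForm D V st ψ₂) :
    ∃ f : (Fin 4 → V) ≃ₗ[Dᵐᵒᵖ] (Fin 4 → V),
      ∀ x y : Fin 4 → V, ∑ i, ψ₂ (f x i) (f y i) = ∑ i, ψ₁ (x i) (y i) := by
  obtain ⟨b₁, hb₁⟩ := FourSq.exists_orthonormal hst h₁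
  obtain ⟨b₂, hb₂⟩ := FourSq.exists_orthonormal hst h₂
  refine ⟨b₁.equiv b₂ (Equiv.refl _), fun x y => ?_⟩
  refine FourSq.eq_of_basis (FourSq.isHermitianForm_fourth hst.1 h₁.1)
    (FourSq.isHermitianForm_fourth hst.1 h₂.1) b₁ (b₁.equiv b₂ (Equiv.refl _)).toLinearMap
    (fun i j => ?_) x y
  simp [hb₁, hb₂]
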